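/- arXiv:1309.5404 — 3 statements merged into one kernel-verified Lean document; each statement's English description precedes it below -/
import Mathlib

section
/- Let n ≥ 1, 1 ≤ q ≤ ∞, θ₀, θ₁ ∈ ℝ, 0 < p₀ ≤ ∞, 0 < p₁ < ∞, and 0 < σ < 1. Define θ_σ = (1−σ)θ₀ + σθ₁ and 1/p_σ = (1−σ)/p₀ + σ/p₁. Then the real interpolation space (L(p₀,θ₀,q), L(p₁,θ₁,q))_{σ,p_σ} coincides with L(p_σ,θ_σ,q); that is, there is a constant C > 1 depending only on n, q, θ₀, θ₁, p₀, p₁, σ such that a measurable function F : ℝ^{n+1}_+ → ℂ lies in (L(p₀,θ₀,q), L(p₁,θ₁,q))_{σ,p_σ} if and only if it lies in L(p_σ,θ_σ,q), and C^{-1} ‖F‖_{L(p_σ,θ_σ,q)} ≤ ‖F‖_{(L(p₀,θ₀,q),L(p₁,θ₁,q))_{σ,p_σ}} ≤ C ‖F‖_{L(p_σ,θ_σ,q)}. -/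
/-!
Real interpolation of the spaces `L(p,θ,q)`, proved by reduction to weighted sequence spaces.

Only the averages `a Q` of `F` over the Whitney cubes matter. The triangle inequality on each cube
(`exists_decomp`) shows that any decomposition `F = (F - b) + b` leaves, at every cube, one part
with average at least `a Q / 2`; conversely, the disjointness of the cubes lets the sequence
`a` be split along any set of cubes by a measurable cut-off (`exists_restrict`). In this way the
K-functional is reduced to optimal cut-offs, and the claim becomes a statement about sequences.

For finite exponents write `A Q` and `B Q` for the summands of the `P₀`-th and `P₁`-th powers of
the two norms. With `r = p_σ` and `η = σ r / P₁`, so that `1 - η = (1 - σ) r / P₀`, the summand of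
the `r`-th power of the target norm is `A ^ (1 - η) * B ^ η`. This is comparable with
`∑ⱼ t j ^ (-η) * min (A, t j * B)` for every geometrically spaced sequence `t j`, so the target norm
is a weighted sum over `j` of `Λ (t j) = ∑_Q min (A Q, t j * B Q)`.
* In `upper_fin`, cutting along `{2 ^ j * B < A}` gives `K s ≤ 2 * Λ (2 ^ j) ^ (1 / P₀)` at a node
  `s = s j` which balances the two terms. The monotonicity of `Λ t` and `Λ t / t` makes the
  nodes geometrically spaced (`ratio_bounds`), so the integral over `s` is bounded by the sum over
  these nodes (`lintegral_le_sum`).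
* In `lower_fin` the roles are exchanged: the nodes are `s = 2 ^ j`, and `t j` is defined from
  `K (2 ^ j)` by the balance condition, again with `ratio_bounds`.

When `p₀ = ∞` the same scheme applies to `g ^ d * B` with `g` the quantity in the supremum norm and
`d = (1 - σ) r`, using superlevel sets of `g` (`upper_inf`, `lower_inf`).

Working with balanced nodes instead of powers of the norms makes the argument uniform in
`p₀, p₁ ∈ (0, ∞)` with no distinction between norms and quasi-norms.
-/

open MeasureTheory ENNReal

noncomputable section

/-- The Peetre K-functional `K(s, a; A₀, A₁)`:
`inf {‖a₀‖_{A₀} + s‖a₁‖_{A₁} : a = a₀ + a₁}`, for the pair of spaces determined by the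
`ℝ≥0∞`-valued gauges `N₀`, `N₁` (membership in `Aᵢ` being finiteness of `Nᵢ`). -/
def Kfun {𝔄 : Type*} [AddCommGroup 𝔄] (N₀ N₁ : 𝔄 → ℝ≥0∞) (s : ℝ) (a : 𝔄) : ℝ≥0∞ :=
  ⨅ b : 𝔄, N₀ (a - b) + ENNReal.ofReal s * N₁ b

/-- The real interpolation (quasi-)norm `‖a‖_{(A₀,A₁)_{σ,r}}`:
`(∫₀^∞ (s^{−σ} K(s,a))^r ds/s)^{1/r}`, with the usual supremum modification when `r = ∞`.
An element lies in the interpolation space `(A₀,A₁)_{σ,r}` iff this is finite. -/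
def interpNorm {𝔄 : Type*} [AddCommGroup 𝔄] (N₀ N₁ : 𝔄 → ℝ≥0∞) (σ : ℝ) (r : ℝ≥0∞)
    (a : 𝔄) : ℝ≥0∞ :=
  if r = ⊤ then ⨆ (s : ℝ) (_ : 0 < s), ENNReal.ofReal s ^ (-σ) * Kfun N₀ N₁ s a
  else (∫⁻ s in Set.Ioi (0 : ℝ),
      (ENNReal.ofReal s ^ (-σ) * Kfun N₀ N₁ s a) ^ r.toReal / ENNReal.ofReal s) ^ r.toReal⁻¹

/-- The dyadic Whitney cube `Q = Q′ × (ℓ(Q′), 2ℓ(Q′)) ⊂ ℝ^{n+1}_+`, where `Q′` is the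
dyadic cube of side length `2^k` indexed by `m ∈ ℤ^n`. -/
def whitneyCube (n : ℕ) (k : ℤ) (m : Fin n → ℤ) : Set ((Fin n → ℝ) × ℝ) :=
  {P | (∀ i, (m i : ℝ) * 2 ^ k ≤ P.1 i ∧ P.1 i < ((m i : ℝ) + 1) * 2 ^ k) ∧
    (2 : ℝ) ^ k < P.2 ∧ P.2 < (2 : ℝ) ^ (k + 1)}

/-- `(⨍_S |F|^q)^{1/q}`, valued in `ℝ≥0∞` (the essential supremum when `q = ∞`). -/
def avgQ (n : ℕ) (q : ℝ≥0∞) (F : (Fin n → ℝ) × ℝ → ℂ) (S : Set ((Fin n → ℝ) × ℝ)) :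
    ℝ≥0∞ :=
  (volume S)⁻¹ ^ q.toReal⁻¹ * eLpNorm F q (volume.restrict S)

/-- The norm `‖F‖_{L(p,θ,q)} = (∑_{Q∈𝒢} (⨍_Q |F|^q)^{p/q} ℓ(Q)^{n+p−pθ})^{1/p}` (with the
usual supremum modification `sup_{Q∈𝒢} ℓ(Q)^{1−θ}(⨍_Q |F|^q)^{1/q}` when `p = ∞`), where
`𝒢` is the grid of dyadic Whitney cubes of `ℝ^{n+1}_+`. -/
def LNorm (n : ℕ) (p : ℝ≥0∞) (θ : ℝ) (q : ℝ≥0∞) (F : (Fin n → ℝ) × ℝ → ℂ) : ℝ≥0∞ :=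
  if p = ⊤ then
    ⨆ (k : ℤ) (m : Fin n → ℤ),
      ENNReal.ofReal ((2 : ℝ) ^ k) ^ (1 - θ) * avgQ n q F (whitneyCube n k m)
  else
    (∑' (k : ℤ) (m : Fin n → ℤ),
        avgQ n q F (whitneyCube n k m) ^ p.toReal *
          ENNReal.ofReal ((2 : ℝ) ^ k) ^ ((n : ℝ) + p.toReal - p.toReal * θ)) ^ p.toReal⁻¹

open Classical in
/-- The gauge of the space `L(p,θ,q)` of *measurable* functions `F : ℝ^{n+1}_+ → ℂ` with
`‖F‖_{L(p,θ,q)} < ∞`. -/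
def LGauge (n : ℕ) (p : ℝ≥0∞) (θ : ℝ) (q : ℝ≥0∞) (F : (Fin n → ℝ) × ℝ → ℂ) : ℝ≥0∞ :=
  if Measurable F then LNorm n p θ q F else ⊤

/-! ### Discretisation of the interpolation integral -/

/-- A sequence indexed by `ℤ` that grows at least geometrically cuts `(0, ∞)` into half-open
intervals. -/
lemma exists_cover (g : ℤ → ℝ) (hg : ∀ j, 0 < g j) {ρ : ℝ} (hρ : 1 < ρ)
    (h : ∀ j, ρ * g j ≤ g (j + 1)) {s : ℝ} (hs : 0 < s) :
    ∃ j, g j < s ∧ s ≤ g (j + 1) := by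
  have hup : ∀ m : ℕ, ρ ^ m * g 0 ≤ g m := by
    intro m
    induction m with
    | zero => simp
    | succ m ih =>
      calc ρ ^ (m + 1) * g 0 = ρ * (ρ ^ m * g 0) := by ring
        _ ≤ ρ * g m := by gcongr
        _ ≤ g ((m : ℤ) + 1) := h _
        _ = _ := by push_cast; rfl
  have hdn : ∀ m : ℕ, ρ ^ m * g (-(m : ℤ)) ≤ g 0 := by
    intro m
    induction m with
    | zero => simp
    | succ m ih =>
      calc ρ ^ (m + 1) * g (-((m + 1 : ℕ) : ℤ)) = ρ ^ m * (ρ * g (-((m + 1 : ℕ) : ℤ))) := by ring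
        _ ≤ ρ ^ m * g (-((m + 1 : ℕ) : ℤ) + 1) := by gcongr; exact h _
        _ = ρ ^ m * g (-(m : ℤ)) := by congr 2; push_cast; ring
        _ ≤ _ := ih
  have hmono : Monotone g := monotone_int_of_le_succ fun j => by
    nlinarith [h j, hg j]
  obtain ⟨a, ha⟩ := pow_unbounded_of_one_lt (s / g 0) hρ
  obtain ⟨b, hb⟩ := pow_unbounded_of_one_lt (g 0 / s) hρ
  have h1 : s < g a := by
    rw [div_lt_iff₀ (hg 0)] at ha
    exact ha.trans_le (hup a)
  have h2 : g (-(b : ℤ)) < s := by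
    rw [div_lt_iff₀ hs] at hb
    have := (hdn b).trans_lt hb
    exact lt_of_mul_lt_mul_left this (by positivity)
  obtain ⟨j, hj, hmax⟩ := Int.exists_greatest_of_bdd (P := fun j => g j < s)
    ⟨a, fun z hz => by
      by_contra! hc
      exact absurd (hmono hc.le) (not_le.2 ((show g z < s from hz).trans h1))⟩ ⟨_, h2⟩
  refine ⟨j, hj, ?_⟩
  by_contra! hc
  have := hmax _ hc
  omega

/-- Discretisation from above of the interpolation integral along any nodes `s j` with ratios
between `ρ > 1` and `R`. The nodes need not be dyadic, which leaves them free to be adapted to `K`. -/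
lemma lintegral_le_sum {K : ℝ → ℝ≥0∞} (hK : ∀ s t, 0 < s → s ≤ t → K s ≤ K t)
    {s x : ℤ → ℝ} (hs : ∀ j, 0 < s j) (hx : ∀ j, 0 < x j) {ρ R : ℝ} (hρ : 1 < ρ)
    (h1 : ∀ j, ρ * s j ≤ s (j + 1)) (h2 : ∀ j, s (j + 1) ≤ R * s j)
    (h3 : ∀ j, K (s j) ≤ ENNReal.ofReal (x j)) {σ r : ℝ} (hσ : 0 < σ) (hr : 0 < r) :
    ∫⁻ t in Set.Ioi (0 : ℝ), (ENNReal.ofReal t ^ (-σ) * K t) ^ r / ENNReal.ofReal t ≤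
      ENNReal.ofReal (R ^ (σ * r + 1)) * ∑' j, ENNReal.ofReal ((s j ^ (-σ) * x j) ^ r) := by
  have hR : 0 < R := by
    have := h2 0
    by_contra! hc
    nlinarith [hs 0, hs (0 + 1)]
  have hcov : Set.Ioi (0 : ℝ) ⊆ ⋃ j, Set.Ioc (s j) (s (j + 1)) := by
    intro t ht
    obtain ⟨j, hj⟩ := exists_cover s hs hρ h1 ht
    exact Set.mem_iUnion.2 ⟨j, hj⟩
  refine (lintegral_mono_set hcov).trans ((lintegral_iUnion_le _ _).trans ?_)
  rw [← (Equiv.addRight (1 : ℤ)).tsum_eq (fun j => ENNReal.ofReal ((s j ^ (-σ) * x j) ^ r)),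
    ← ENNReal.tsum_mul_left]
  refine ENNReal.tsum_le_tsum fun j => ?_
  simp only [Equiv.coe_addRight]
  set S := s (j + 1) with hS
  have hSp : 0 < S := hs _
  have hXp : 0 < x (j + 1) := hx _
  have hb : ∀ t ∈ Set.Ioc (s j) S, (ENNReal.ofReal t ^ (-σ) * K t) ^ r / ENNReal.ofReal t ≤
      ENNReal.ofReal ((R ^ σ * S ^ (-σ) * x (j + 1)) ^ r * (R * S⁻¹)) := by
    intro t ht
    have ht0 : 0 < t := (hs j).trans ht.1
    have hRt : S ≤ R * t := (h2 j).trans (by gcongr; exact ht.1.le)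
    have e1 : t⁻¹ ≤ R * S⁻¹ := by
      rw [inv_le_iff_one_le_mul₀ ht0, mul_right_comm, ← div_eq_mul_inv, le_div_iff₀ hSp]
      simpa using hRt
    have e2 : t ^ (-σ) ≤ R ^ σ * S ^ (-σ) := by
      rw [Real.rpow_neg ht0.le, Real.rpow_neg hSp.le, ← Real.inv_rpow ht0.le,
        ← Real.inv_rpow hSp.le, ← Real.mul_rpow hR.le (by positivity)]
      gcongr
    rw [div_eq_mul_inv, ENNReal.ofReal_rpow_of_pos ht0, ← ENNReal.ofReal_inv_of_pos ht0,
      ENNReal.ofReal_mul (by positivity), ← ENNReal.ofReal_rpow_of_nonneg (by positivity) hr.le,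
      ENNReal.ofReal_mul (p := R ^ σ * S ^ (-σ)) (by positivity)]
    gcongr
    exact (hK t S ht0 ht.2).trans (h3 _)
  calc _ ≤ ∫⁻ t in Set.Ioc (s j) S,
        ENNReal.ofReal ((R ^ σ * S ^ (-σ) * x (j + 1)) ^ r * (R * S⁻¹)) :=
        setLIntegral_mono' measurableSet_Ioc hb
    _ ≤ ENNReal.ofReal ((R ^ σ * S ^ (-σ) * x (j + 1)) ^ r * (R * S⁻¹)) * ENNReal.ofReal S := by
        rw [setLIntegral_const, Real.volume_Ioc]
        gcongr
        linarith [hs j]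
    _ = _ := by
        rw [← ENNReal.ofReal_mul (by positivity), ← ENNReal.ofReal_mul (by positivity)]
        congr 1
        rw [mul_assoc (R ^ σ), Real.mul_rpow (by positivity) (by positivity), ← Real.rpow_mul hR.le,
          Real.rpow_add hR, Real.rpow_one]
        field_simp

/-- Discretisation from below of the interpolation integral, along the dyadic nodes. -/
lemma sum_le_lintegral {K : ℝ → ℝ≥0∞} (hK : ∀ s t, 0 < s → s ≤ t → K s ≤ K t)
    {σ r : ℝ} (hσ : 0 < σ) (hr : 0 < r) :
    ∑' j : ℤ, (ENNReal.ofReal (2 ^ j) ^ (-σ) * K (2 ^ j)) ^ r ≤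
    ENNReal.ofReal (2 ^ (σ * r + 1)) *
    ∫⁻ t in Set.Ioi (0 : ℝ), (ENNReal.ofReal t ^ (-σ) * K t) ^ r / ENNReal.ofReal t := by
  have hsub : (⋃ j : ℤ, Set.Ioc ((2 : ℝ) ^ j) (2 ^ (j + 1))) ⊆ Set.Ioi (0 : ℝ) := by
    refine Set.iUnion_subset fun j t ht => ?_
    exact lt_trans (by positivity : (0 : ℝ) < 2 ^ j) ht.1
  have hdis : Pairwise (Function.onFun Disjoint fun j : ℤ => Set.Ioc ((2 : ℝ) ^ j) (2 ^ (j + 1))) :=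
    (zpow_right_mono₀ (one_le_two (α := ℝ))).pairwise_disjoint_on_Ioc_succ
  refine le_trans ?_ (mul_le_mul_right (lintegral_mono_set hsub) _)
  rw [lintegral_iUnion (fun _ => measurableSet_Ioc) hdis, ← ENNReal.tsum_mul_left]
  refine ENNReal.tsum_le_tsum fun j => ?_
  set S : ℝ := 2 ^ j with hS
  have hSp : 0 < S := by positivity
  have hS2 : (2 : ℝ) ^ (j + 1) = 2 * S := by rw [zpow_add_one₀ two_ne_zero, mul_comm]
  rw [hS2]
  have hb : ∀ t ∈ Set.Ioc S (2 * S), (ENNReal.ofReal ((2 * S) ^ (-σ)) * K S) ^ r *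
      ENNReal.ofReal (2 * S)⁻¹ ≤ (ENNReal.ofReal t ^ (-σ) * K t) ^ r / ENNReal.ofReal t := by
    intro t ht
    have ht0 : 0 < t := hSp.trans ht.1
    rw [div_eq_mul_inv, ENNReal.ofReal_rpow_of_pos ht0, ← ENNReal.ofReal_inv_of_pos ht0]
    have e1 : (2 * S) ^ (-σ) ≤ t ^ (-σ) := Real.rpow_le_rpow_of_nonpos ht0 ht.2 (by linarith)
    have e2 : K S ≤ K t := hK _ _ hSp ht.1.le
    have e3 : (2 * S)⁻¹ ≤ t⁻¹ := by gcongr; exact ht.2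
    gcongr
  refine le_trans ?_ (mul_le_mul_right (setLIntegral_mono' measurableSet_Ioc hb) _)
  rw [setLIntegral_const, Real.volume_Ioc, show 2 * S - S = S by ring, mul_assoc,
    ← ENNReal.ofReal_mul (by positivity), ENNReal.mul_rpow_of_nonneg _ _ hr.le,
    ENNReal.mul_rpow_of_nonneg _ _ hr.le, ENNReal.ofReal_rpow_of_pos hSp,
    ENNReal.ofReal_rpow_of_pos (by positivity), ENNReal.ofReal_rpow_of_pos (by positivity),
    mul_comm (ENNReal.ofReal _) (K S ^ r), mul_comm (ENNReal.ofReal _) (K S ^ r), mul_assoc,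
    ← ENNReal.ofReal_mul (by positivity), mul_left_comm, ← ENNReal.ofReal_mul (by positivity)]
  gcongr
  apply le_of_eq
  rw [Real.mul_rpow zero_le_two hSp.le, Real.mul_rpow (by positivity) (by positivity),
    ← Real.rpow_mul zero_le_two, Real.rpow_add two_pos, Real.rpow_one, neg_mul,
    Real.rpow_neg zero_le_two]
  field_simp

/-- If `u` is nondecreasing and at most doubles at each step, then the nodes
`u j ^ α / (u j / 2 ^ j) ^ β` are geometrically spaced: with `c = u (j + 1) / u j ∈ [1, 2]`,
consecutive nodes have ratio `c ^ α * (2 / c) ^ β`. -/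
lemma ratio_bounds {u : ℤ → ℝ} (hu : ∀ j, 0 < u j) (h1 : ∀ j, u j ≤ u (j + 1))
    (h2 : ∀ j, u (j + 1) ≤ 2 * u j) {α β : ℝ} (hα : 0 < α) (hβ : 0 < β) (j : ℤ) :
    2 ^ (min α β) * (u j ^ α / (u j / 2 ^ j) ^ β) ≤
        u (j + 1) ^ α / (u (j + 1) / 2 ^ (j + 1)) ^ β ∧
      u (j + 1) ^ α / (u (j + 1) / 2 ^ (j + 1)) ^ β ≤
        2 ^ (α + β) * (u j ^ α / (u j / 2 ^ j) ^ β) := by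
  obtain ⟨c, hc⟩ : ∃ c, c = u (j + 1) / u j := ⟨_, rfl⟩
  have hu0 := hu j
  have hc1 : 1 ≤ c := by rw [hc, le_div_iff₀ hu0]; simpa using h1 j
  have hc2 : c ≤ 2 := by rw [hc, div_le_iff₀ hu0]; exact h2 j
  have hcp : 0 < c := by linarith
  have hue : u (j + 1) = c * u j := by rw [hc]; field_simp
  have key : u (j + 1) ^ α / (u (j + 1) / 2 ^ (j + 1)) ^ β =
      c ^ α * (2 / c) ^ β * (u j ^ α / (u j / 2 ^ j) ^ β) := by
    have : u (j + 1) / 2 ^ (j + 1) = (2 / c)⁻¹ * (u j / 2 ^ j) := by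
      rw [hue, zpow_add_one₀ two_ne_zero]; field_simp
    rw [this, hue, Real.mul_rpow hcp.le hu0.le, Real.mul_rpow (by positivity) (by positivity),
      Real.inv_rpow (by positivity)]
    field_simp
  have hp : 0 < u j ^ α / (u j / 2 ^ j) ^ β := by positivity
  have h2c : 1 ≤ 2 / c := by rw [le_div_iff₀ hcp]; linarith
  have h2c' : 2 / c ≤ 2 := by rw [div_le_iff₀ hcp]; linarith
  rw [key]
  constructor
  · gcongr
    calc (2 : ℝ) ^ min α β = c ^ min α β * (2 / c) ^ min α β := by
          rw [← Real.mul_rpow hcp.le (by positivity)]; congr 1; field_simp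
      _ ≤ c ^ α * (2 / c) ^ β := by
          gcongr
          · exact min_le_left _ _
          · exact min_le_right _ _
  · gcongr
    rw [Real.rpow_add two_pos]
    gcongr

/-- A two-sided geometric series: the bound does not depend on `y` since replacing `y` by `2 * y`
shifts the summation index, so that only `y ∈ [1, 2]` matters. -/
lemma exists_sum_min_le {α β : ℝ} (hα : 0 < α) (hβ : 0 < β) :
    ∃ C : ℝ≥0∞, C < ⊤ ∧ ∀ y : ℝ, 0 < y →
      ∑' j : ℤ, ENNReal.ofReal (min ((y * 2 ^ j) ^ α) ((y * 2 ^ j) ^ (-β))) ≤ C := by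
  -- the factor `2 ^ α` absorbs the position of `y` between two powers of `2`
  let f : ℤ → ℝ := fun j => 2 ^ α * min ((2 ^ α) ^ j) ((2 ^ (-β)) ^ j)
  have hsum : Summable f := by
    apply Summable.mul_left
    apply Summable.of_nat_of_neg
    · have : Summable fun m : ℕ => ((2 : ℝ) ^ (-β)) ^ m :=
        summable_geometric_of_lt_one (by positivity)
          (Real.rpow_lt_one_of_one_lt_of_neg one_lt_two (by linarith))
      refine Summable.of_nonneg_of_le (fun m => by positivity) (fun m => ?_) this
      simp
    · have : Summable fun m : ℕ => ((2 : ℝ) ^ (-α)) ^ m :=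
        summable_geometric_of_lt_one (by positivity)
          (Real.rpow_lt_one_of_one_lt_of_neg one_lt_two (by linarith))
      refine Summable.of_nonneg_of_le (fun m => by positivity) (fun m => ?_) this
      refine (min_le_left _ _).trans (le_of_eq ?_)
      rw [zpow_neg, zpow_natCast, Real.rpow_neg zero_le_two, inv_pow]
  refine ⟨∑' j, ENNReal.ofReal (f j), hsum.tsum_ofReal_lt_top, fun y hy => ?_⟩
  obtain ⟨k, hk1, hk2⟩ := exists_cover (fun j : ℤ => (2 : ℝ) ^ j) (fun j => by positivity)
    one_lt_two (fun j => by rw [zpow_add_one₀ two_ne_zero, mul_comm]) hy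
  rw [← (Equiv.addRight (-k)).tsum_eq]
  refine ENNReal.tsum_le_tsum fun j => ENNReal.ofReal_le_ofReal ?_
  simp only [Equiv.coe_addRight, f]
  have e : y * 2 ^ (j + -k) = y / 2 ^ k * 2 ^ j := by
    rw [zpow_add₀ two_ne_zero, zpow_neg]; field_simp
  rw [e]
  set z := y / 2 ^ k
  have hz1 : 1 ≤ z := by rw [le_div_iff₀ (by positivity)]; simpa using hk1.le
  have hz2 : z ≤ 2 := by
    rw [div_le_iff₀ (by positivity)]; rw [zpow_add_one₀ two_ne_zero] at hk2; linarith
  have hz0 : 0 < z := by linarith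
  rw [mul_min_of_nonneg _ _ (by positivity : (0:ℝ) ≤ 2 ^ α)]
  have c1 : ∀ γ : ℝ, ((2 : ℝ) ^ j) ^ γ = (2 ^ γ) ^ j := by
    intro γ
    rw [← Real.rpow_intCast, ← Real.rpow_intCast, ← Real.rpow_mul zero_le_two,
      ← Real.rpow_mul zero_le_two, mul_comm]
  apply min_le_min
  · rw [Real.mul_rpow hz0.le (by positivity), c1]
    gcongr
  · rw [Real.mul_rpow hz0.le (by positivity), c1]
    gcongr
    calc z ^ (-β) ≤ 1 := Real.rpow_le_one_of_one_le_of_nonpos hz1 (by linarith)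
      _ ≤ 2 ^ α := Real.one_le_rpow one_le_two hα.le

/-! ### Upper bound, finite exponents -/

lemma two_zpow_pos (j : ℤ) : (0 : ℝ) < 2 ^ j := by positivity

/-- `∑ⱼ 2 ^ (-jη) min (A, 2 ^ j B)` is controlled by `A ^ (1 - η) B ^ η`. The finiteness
hypothesis and the matching zeros and infinities of `A` and `B` exclude the degenerate products. -/
lemma exists_sum_min_fin {η : ℝ} (h0 : 0 < η) (h1 : η < 1) :
    ∃ C : ℝ≥0∞, C < ⊤ ∧ ∀ A B : ℝ≥0∞, (A = 0 ↔ B = 0) → (A = ⊤ ↔ B = ⊤) →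
      A ^ (1 - η) * B ^ η ≠ ⊤ →
      ∑' j : ℤ, ENNReal.ofReal (((2 : ℝ) ^ j) ^ (-η)) * min A (ENNReal.ofReal (2 ^ j) * B) ≤
        C * (A ^ (1 - η) * B ^ η) := by
  obtain ⟨C, hC, h⟩ := exists_sum_min_le (sub_pos.2 h1) h0
  refine ⟨C, hC, fun A B hz hT hD => ?_⟩
  rcases eq_or_ne A 0 with hA | hA
  · simp [hA]
  have hB : B ≠ 0 := fun h => hA (hz.2 h)
  have hA' : A ≠ ⊤ := by
    intro hA'
    rw [hA', hT.1 hA', ENNReal.top_rpow_of_pos (by linarith), ENNReal.top_rpow_of_pos h0] at hD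
    simp at hD
  have hB' : B ≠ ⊤ := fun h => hA' (hT.2 h)
  obtain ⟨x, hx, rfl⟩ : ∃ x : ℝ, 0 < x ∧ A = ENNReal.ofReal x :=
    ⟨A.toReal, ENNReal.toReal_pos hA hA', (ENNReal.ofReal_toReal hA').symm⟩
  obtain ⟨y, hy, rfl⟩ : ∃ x : ℝ, 0 < x ∧ B = ENNReal.ofReal x :=
    ⟨B.toReal, ENNReal.toReal_pos hB hB', (ENNReal.ofReal_toReal hB').symm⟩
  rw [mul_comm C]
  refine le_trans (le_of_eq ?_) (mul_le_mul_right (h (y / x) (by positivity)) _)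
  rw [← ENNReal.tsum_mul_left]
  congr 1
  ext1 j
  have h2 := two_zpow_pos j
  rw [ENNReal.ofReal_rpow_of_pos hx, ENNReal.ofReal_rpow_of_pos hy,
    ← ENNReal.ofReal_mul (by positivity), ← ENNReal.ofReal_min, ← ENNReal.ofReal_mul (by positivity),
    ← ENNReal.ofReal_mul (by positivity), ← ENNReal.ofReal_mul (by positivity),
    mul_min_of_nonneg _ _ (by positivity), mul_min_of_nonneg _ _ (by positivity), min_comm]
  have e : ∀ γ : ℝ, (y / x * 2 ^ j) ^ γ = y ^ γ * (x ^ γ)⁻¹ * (2 ^ j) ^ γ := by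
    intro γ
    rw [Real.mul_rpow (by positivity) h2.le, Real.div_rpow hy.le hx.le, div_eq_mul_inv]
  rw [e, e]
  congr 2
  · rw [Real.rpow_sub hx, Real.rpow_sub hy, Real.rpow_sub h2, Real.rpow_neg h2.le]
    simp only [Real.rpow_one]
    field_simp
  · rw [Real.rpow_sub hx, Real.rpow_neg h2.le, Real.rpow_neg hx.le, Real.rpow_neg hy.le]
    simp only [Real.rpow_one]
    field_simp

/-- Upper bound for the interpolation integral, both exponents finite. Here `A i` and `B i` stand
for the summands of the `P₀`-th and `P₁`-th powers of the two norms, and `K` for the K-functional,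
which is bounded by splitting the index set into an arbitrary `E` and its complement. With
`Λ j = ∑ᵢ min (A i) (2 ^ j B i)` and `E = {i | 2 ^ j B i < A i}`, this gives
`K s ≤ Λ j ^ (1 / P₀) + s (Λ j / 2 ^ j) ^ (1 / P₁)`, and the nodes `s j` are chosen so that the two
terms balance. -/
lemma upper_fin {P₀ P₁ σ r η : ℝ} (hP₀ : 0 < P₀) (hP₁ : 0 < P₁) (hσ0 : 0 < σ) (hr : 0 < r)
    (h0 : 0 < η) (h1 : η < 1) (hη : σ * r = η * P₁) (hη' : (1 - σ) * r = (1 - η) * P₀) :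
    ∃ C : ℝ≥0∞, C < ⊤ ∧ ∀ (ι : Type) (A B : ι → ℝ≥0∞) (K : ℝ → ℝ≥0∞),
      (∀ i, A i = 0 ↔ B i = 0) → (∀ i, A i = ⊤ ↔ B i = ⊤) →
      (∀ s t, 0 < s → s ≤ t → K s ≤ K t) →
      (∀ s, 0 < s → ∀ E : Set ι, K s ≤ (∑' i, Eᶜ.indicator A i) ^ P₀⁻¹ +
        ENNReal.ofReal s * (∑' i, E.indicator B i) ^ P₁⁻¹) →
      ∫⁻ t in Set.Ioi (0 : ℝ), (ENNReal.ofReal t ^ (-σ) * K t) ^ r / ENNReal.ofReal t ≤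
        C * ∑' i, A i ^ (1 - η) * B i ^ η := by
  obtain ⟨C₀, hC₀, hsum⟩ := exists_sum_min_fin h0 h1
  set α := P₀⁻¹ with hα
  set β := P₁⁻¹ with hβ
  have hα0 : 0 < α := by positivity
  have hβ0 : 0 < β := by positivity
  set R : ℝ := 2 ^ (α + β) with hR
  refine ⟨ENNReal.ofReal (R ^ (σ * r + 1)) * ENNReal.ofReal (2 ^ r) * C₀ + 1,
    ENNReal.add_lt_top.2 ⟨ENNReal.mul_lt_top (ENNReal.mul_lt_top ofReal_lt_top ofReal_lt_top) hC₀,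
      one_lt_top⟩, fun ι A B K hz hT hK hsplit => ?_⟩
  rcases eq_or_ne (∑' i, A i ^ (1 - η) * B i ^ η) ⊤ with htop | htop
  · rw [htop, ENNReal.mul_top (by simp)]; exact le_top
  have hD : ∀ i, A i ^ (1 - η) * B i ^ η ≠ ⊤ := ENNReal.ne_top_of_tsum_ne_top htop
  let Λ : ℤ → ℝ≥0∞ := fun j => ∑' i, min (A i) (ENNReal.ofReal (2 ^ j) * B i)
  have hΛsum : ∑' j, ENNReal.ofReal (((2 : ℝ) ^ j) ^ (-η)) * Λ j ≤
      C₀ * ∑' i, A i ^ (1 - η) * B i ^ η := by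
    simp only [Λ, ← ENNReal.tsum_mul_left]
    rw [ENNReal.tsum_comm]
    refine ENNReal.tsum_le_tsum fun i => ?_
    exact hsum _ _ (hz i) (hT i) (hD i)
  have hΛtop : ∀ j, Λ j ≠ ⊤ := by
    intro j hj
    have h3 := (ENNReal.le_tsum j).trans hΛsum
    rw [hj, ENNReal.mul_top (by simp; positivity)] at h3
    exact (ENNReal.mul_lt_top hC₀ htop.lt_top).ne (top_le_iff.1 h3)
  have hKΛ : ∀ s, 0 < s → ∀ j, K s ≤ Λ j ^ α + ENNReal.ofReal s *
      (Λ j / ENNReal.ofReal (2 ^ j)) ^ β := by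
    intro s hs j
    have h2 : ENNReal.ofReal (2 ^ j) ≠ 0 := by simp; positivity
    refine (hsplit s hs {i | ENNReal.ofReal (2 ^ j) * B i < A i}).trans ?_
    gcongr
    · refine ENNReal.tsum_le_tsum fun i => ?_
      by_cases hi : ENNReal.ofReal (2 ^ j) * B i < A i
      · simp [Set.indicator, hi]
      · simp [Set.indicator, hi, not_lt.1 hi]
    · rw [ENNReal.le_div_iff_mul_le (Or.inl h2) (Or.inl ofReal_ne_top), mul_comm,
        ← ENNReal.tsum_mul_left]
      refine ENNReal.tsum_le_tsum fun i => ?_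
      by_cases hi : ENNReal.ofReal (2 ^ j) * B i < A i
      · simp [Set.indicator, hi, hi.le]
      · simp [Set.indicator, hi]
  -- if some `Λ j` vanishes then so does `K`, and the nodes below would be undefined
  by_cases hzero : ∃ j, Λ j = 0
  · obtain ⟨j, hj⟩ := hzero
    have hK0 : ∀ s, 0 < s → K s = 0 := by
      intro s hs
      have := hKΛ s hs j
      rw [hj, ENNReal.zero_div, ENNReal.zero_rpow_of_pos hα0, ENNReal.zero_rpow_of_pos hβ0] at this
      simpa using this
    rw [setLIntegral_congr_fun (g := fun _ => 0) measurableSet_Ioi]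
    · simp
    · intro t ht
      simp [hK0 t ht, hr]
  push Not at hzero
  set L : ℤ → ℝ := fun j => (Λ j).toReal with hL
  have hLp : ∀ j, 0 < L j := fun j => ENNReal.toReal_pos (hzero j) (hΛtop j)
  have hΛL : ∀ j, Λ j = ENNReal.ofReal (L j) := fun j => (ENNReal.ofReal_toReal (hΛtop j)).symm
  have hL1 : ∀ j, L j ≤ L (j + 1) := by
    intro j
    refine ENNReal.toReal_mono (hΛtop _) (ENNReal.tsum_le_tsum fun i => ?_)
    gcongr
    · norm_num
    · linarith
  have hL2 : ∀ j, L (j + 1) ≤ 2 * L j := by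
    intro j
    rw [← ENNReal.ofReal_le_ofReal_iff (by have := hLp j; positivity), ← hΛL,
      ENNReal.ofReal_mul zero_le_two, ← hΛL]
    simp only [Λ]
    rw [← ENNReal.tsum_mul_left]
    refine ENNReal.tsum_le_tsum fun i => ?_
    rw [zpow_add_one₀ two_ne_zero, mul_comm ((2 : ℝ) ^ j), ENNReal.ofReal_mul zero_le_two,
      mul_assoc]
    rcases le_total (A i) (ENNReal.ofReal (2 ^ j) * B i) with h | h
    · rw [min_eq_left h]
      refine (min_le_left _ _).trans ?_
      refine le_mul_of_one_le_left' ?_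
      simp
    · rw [min_eq_right h]
      exact min_le_right _ _
  have hratio := ratio_bounds hLp hL1 hL2 hα0 hβ0
  have h2 := two_zpow_pos
  -- at `s j` both terms of `hKΛ` are equal to `L j ^ α`
  have := lintegral_le_sum hK (s := fun j => L j ^ α / (L j / 2 ^ j) ^ β)
    (x := fun j => 2 * L j ^ α) (ρ := 2 ^ (min α β)) (R := R) (σ := σ) (r := r)
    (fun j => by have := hLp j; positivity) (fun j => by have := hLp j; positivity)
    (Real.one_lt_rpow one_lt_two (lt_min hα0 hβ0)) (fun j => (hratio j).1) (fun j => (hratio j).2)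
    (fun j => by
      have hj := hLp j
      refine (hKΛ _ (by positivity) j).trans (le_of_eq ?_)
      rw [hΛL, ← ENNReal.ofReal_div_of_pos (h2 j), ENNReal.ofReal_rpow_of_pos hj,
        ENNReal.ofReal_rpow_of_pos (by positivity), ← ENNReal.ofReal_mul (by positivity),
        div_mul_cancel₀ _ (by positivity), ← ENNReal.ofReal_add (by positivity) (by positivity),
        two_mul]) hσ0 hr
  refine this.trans ?_
  have hterm : ∀ j, ENNReal.ofReal (((L j ^ α / (L j / 2 ^ j) ^ β) ^ (-σ) * (2 * L j ^ α)) ^ r) =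
      ENNReal.ofReal (2 ^ r) * (ENNReal.ofReal (((2 : ℝ) ^ j) ^ (-η)) * Λ j) := by
    intro j
    have hj := hLp j
    have hj2 := h2 j
    rw [hΛL, ← ENNReal.ofReal_mul (by positivity), ← ENNReal.ofReal_mul (by positivity)]
    congr 1
    have e1 : α * ((1 - σ) * r) = 1 - η := by rw [hη', hα]; field_simp
    have e2 : β * (σ * r) = η := by rw [hη, hβ]; field_simp
    calc ((L j ^ α / (L j / 2 ^ j) ^ β) ^ (-σ) * (2 * L j ^ α)) ^ r
        = 2 ^ r * (L j ^ (α * ((1 - σ) * r)) * (L j / 2 ^ j) ^ (β * (σ * r))) := by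
          rw [Real.mul_rpow (by positivity) (by positivity), Real.mul_rpow (by positivity) (by positivity),
            ← Real.rpow_mul (by positivity), Real.div_rpow (by positivity) (by positivity),
            ← Real.rpow_mul (by positivity), ← Real.rpow_mul (by positivity),
            ← Real.rpow_mul (by positivity), show β * (-σ * r) = - (β * (σ * r)) by ring,
            Real.rpow_neg (by positivity), show α * ((1 - σ) * r) = α * (-σ * r) + α * r by ring,
            Real.rpow_add hj]
          field_simp
      _ = _ := by
          rw [e1, e2, Real.div_rpow hj.le hj2.le, Real.rpow_sub hj, Real.rpow_neg hj2.le,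
            Real.rpow_one]
          field_simp
  simp only [hterm]
  rw [ENNReal.tsum_mul_left, add_mul, mul_assoc, mul_assoc]
  refine le_trans ?_ le_self_add
  gcongr

/-! ### Lower bound, finite exponents -/

/-- Converse of `exists_sum_min_fin` along arbitrary geometrically spaced `t j`: the single
summand with `t j < A / B ≤ t (j + 1)` already suffices. -/
lemma pointwise_fin {η R : ℝ} (h0 : 0 < η) (h1 : η < 1) {t : ℤ → ℝ}
    (ht : ∀ j, 0 < t j) {ρ : ℝ} (hρ : 1 < ρ) (ht1 : ∀ j, ρ * t j ≤ t (j + 1))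
    (ht2 : ∀ j, t (j + 1) ≤ R * t j) {A B : ℝ≥0∞} (hz : A = 0 ↔ B = 0) (hT : A = ⊤ ↔ B = ⊤) :
    A ^ (1 - η) * B ^ η ≤ ENNReal.ofReal (R ^ (1 - η)) *
      ∑' j, ENNReal.ofReal (t j ^ (-η)) * min A (ENNReal.ofReal (t j) * B) := by
  have hR : 0 < R := by
    have := ht2 0
    by_contra! hc
    nlinarith [ht 0, ht (0 + 1)]
  rcases eq_or_ne A 0 with hA | hA
  · rw [hA, ENNReal.zero_rpow_of_pos (by linarith)]; simp
  have hB : B ≠ 0 := fun h => hA (hz.2 h)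
  rcases eq_or_ne A ⊤ with hA' | hA'
  · have : ∑' j, ENNReal.ofReal (t j ^ (-η)) * min A (ENNReal.ofReal (t j) * B) = ⊤ := by
      refine top_le_iff.1 (le_trans ?_ (ENNReal.le_tsum 0))
      have := ht 0
      rw [hA', hT.1 hA', ENNReal.mul_top (by simpa using this), min_self,
        ENNReal.mul_top (by simp; positivity)]
    rw [this, ENNReal.mul_top (by simp; positivity)]
    exact le_top
  have hB' : B ≠ ⊤ := fun h => hA' (hT.2 h)
  obtain ⟨x, hx, rfl⟩ : ∃ x : ℝ, 0 < x ∧ A = ENNReal.ofReal x :=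
    ⟨A.toReal, ENNReal.toReal_pos hA hA', (ENNReal.ofReal_toReal hA').symm⟩
  obtain ⟨y, hy, rfl⟩ : ∃ x : ℝ, 0 < x ∧ B = ENNReal.ofReal x :=
    ⟨B.toReal, ENNReal.toReal_pos hB hB', (ENNReal.ofReal_toReal hB').symm⟩
  obtain ⟨j, hj1, hj2⟩ := exists_cover t ht hρ ht1 (show 0 < x / y by positivity)
  refine le_trans ?_ (mul_le_mul_right (ENNReal.le_tsum j) _)
  have htj := ht j
  rw [lt_div_iff₀ hy] at hj1
  have hxy : x ≤ R * t j * y := by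
    rw [← div_le_iff₀ hy]; exact hj2.trans (ht2 j)
  rw [← ENNReal.ofReal_mul htj.le, min_eq_right (ENNReal.ofReal_le_ofReal hj1.le),
    ENNReal.ofReal_rpow_of_pos hx, ENNReal.ofReal_rpow_of_pos hy,
    ← ENNReal.ofReal_mul (by positivity), ← ENNReal.ofReal_mul (by positivity),
    ← ENNReal.ofReal_mul (by positivity)]
  refine ENNReal.ofReal_le_ofReal ?_
  calc x ^ (1 - η) * y ^ η ≤ (R * t j * y) ^ (1 - η) * y ^ η := by
        gcongr
    _ = _ := by
        rw [Real.mul_rpow (by positivity) hy.le, Real.mul_rpow hR.le htj.le, Real.rpow_sub htj,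
          Real.rpow_sub hy, Real.rpow_neg htj.le]
        simp only [Real.rpow_one]
        field_simp

/-- Lower bound for the interpolation integral, both exponents finite. The last hypothesis says
that every near-optimal decomposition dominates, at each index, one of the two given sequences.
Applied at `s = 2 ^ j`, it yields `∑ᵢ min (A i) (t j B i) ≤ C k j ^ P₀` for `k j = K (2 ^ j)` and
`t j = k j ^ P₀ / (k j / 2 ^ j) ^ P₁`; summing over `j` with weights `t j ^ (-η)` gives the claim. -/
lemma lower_fin {P₀ P₁ σ r η : ℝ} (hP₀ : 0 < P₀) (hP₁ : 0 < P₁) (hσ0 : 0 < σ) (hr : 0 < r)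
    (h0 : 0 < η) (h1 : η < 1) (hη : σ * r = η * P₁) (hη' : (1 - σ) * r = (1 - η) * P₀) :
    ∃ C : ℝ≥0∞, C < ⊤ ∧ ∀ (ι : Type) (A B : ι → ℝ≥0∞) (K : ℝ → ℝ≥0∞),
      (∀ i, A i = 0 ↔ B i = 0) → (∀ i, A i = ⊤ ↔ B i = ⊤) →
      (∀ s t, 0 < s → s ≤ t → K s ≤ K t) → (∀ s, 0 < s → K (2 * s) ≤ 2 * K s) →
      (∀ s, 0 < s → ∀ c, K s < c → ∃ b g : ι → ℝ≥0∞,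
        (∑' i, b i) ^ P₀⁻¹ + ENNReal.ofReal s * (∑' i, g i) ^ P₁⁻¹ < c ∧
        ∀ i, A i ≤ 2 ^ P₀ * b i ∨ B i ≤ 2 ^ P₁ * g i) →
      ∑' i, A i ^ (1 - η) * B i ^ η ≤ C *
      ∫⁻ t in Set.Ioi (0 : ℝ), (ENNReal.ofReal t ^ (-σ) * K t) ^ r / ENNReal.ofReal t := by
  set R : ℝ := 2 ^ (P₀ + P₁) with hR
  refine ⟨ENNReal.ofReal (R ^ (1 - η)) * (ENNReal.ofReal (4 ^ P₀ + 4 ^ P₁) *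
    ENNReal.ofReal (2 ^ (σ * r + 1))) + 1,
    ENNReal.add_lt_top.2 ⟨ENNReal.mul_lt_top ofReal_lt_top (ENNReal.mul_lt_top ofReal_lt_top
      ofReal_lt_top), one_lt_top⟩, fun ι A B K hz hT hK hK2 hdec => ?_⟩
  set I := ∫⁻ t in Set.Ioi (0 : ℝ), (ENNReal.ofReal t ^ (-σ) * K t) ^ r / ENNReal.ofReal t with hI
  rcases eq_or_ne I ⊤ with htop | htop
  · rw [htop, ENNReal.mul_top (by simp)]; exact le_top
  have hsum := sum_le_lintegral hK hσ0 hr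
  rw [← hI] at hsum
  have h2 := two_zpow_pos
  have hKtop : ∀ j : ℤ, K (2 ^ j) ≠ ⊤ := by
    intro j hj
    have h3 := (ENNReal.le_tsum j).trans hsum
    rw [hj, ENNReal.ofReal_rpow_of_pos (h2 j), ENNReal.mul_top (by simp; positivity),
      ENNReal.top_rpow_of_pos hr] at h3
    exact (ENNReal.mul_lt_top ofReal_lt_top htop.lt_top).ne (top_le_iff.1 h3)
  have hpos : ∀ s, 0 < s → ∀ i, A i ≠ 0 → K s ≠ 0 := by
    intro s hs i hA hKs
    have hB : B i ≠ 0 := fun h => hA ((hz i).2 h)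
    have hs' : ENNReal.ofReal s ≠ 0 := by simpa using hs
    obtain ⟨b, g, hbg, hor⟩ := hdec s hs
      (min (A i ^ P₀⁻¹ / 2) (ENNReal.ofReal s * (B i ^ P₁⁻¹ / 2))) (by
        rw [hKs]
        refine lt_min (ENNReal.div_pos ?_ (by simp)) (ENNReal.mul_pos hs'
          (ENNReal.div_pos ?_ (by simp)).ne')
        · simp [ENNReal.rpow_eq_zero_iff, hA, hP₀.le]
        · simp [ENNReal.rpow_eq_zero_iff, hB, hP₁.le])
    rw [lt_min_iff] at hbg
    rcases hor i with h | h
    · refine absurd hbg.1 (not_lt.2 ?_)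
      refine le_trans ?_ le_self_add
      rw [ENNReal.div_le_iff (by simp) (by simp)]
      calc A i ^ P₀⁻¹ ≤ (2 ^ P₀ * ∑' i, b i) ^ P₀⁻¹ := by
            gcongr; exact h.trans (by gcongr; exact ENNReal.le_tsum i)
        _ = _ := by
            rw [ENNReal.mul_rpow_of_nonneg _ _ (by positivity), ENNReal.rpow_rpow_inv hP₀.ne',
              mul_comm]
    · refine absurd hbg.2 (not_lt.2 ?_)
      refine le_trans ?_ le_add_self
      gcongr
      rw [ENNReal.div_le_iff (by simp) (by simp)]
      calc B i ^ P₁⁻¹ ≤ (2 ^ P₁ * ∑' i, g i) ^ P₁⁻¹ := by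
            gcongr; exact h.trans (by gcongr; exact ENNReal.le_tsum i)
        _ = _ := by
            rw [ENNReal.mul_rpow_of_nonneg _ _ (by positivity), ENNReal.rpow_rpow_inv hP₁.ne',
              mul_comm]
  by_cases hall : ∀ i, A i = 0
  · have : ∑' i, A i ^ (1 - η) * B i ^ η = 0 := by
      rw [ENNReal.tsum_eq_zero]
      intro i
      rw [hall i, ENNReal.zero_rpow_of_pos (by linarith), zero_mul]
    rw [this]; exact zero_le
  push Not at hall
  obtain ⟨i₀, hi₀⟩ := hall
  set k : ℤ → ℝ := fun j => (K (2 ^ j)).toReal with hk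
  have hkp : ∀ j, 0 < k j := fun j => ENNReal.toReal_pos (hpos _ (h2 j) i₀ hi₀) (hKtop j)
  have hKk : ∀ j : ℤ, K (2 ^ j) = ENNReal.ofReal (k j) := fun j =>
    (ENNReal.ofReal_toReal (hKtop j)).symm
  have hk1 : ∀ j, k j ≤ k (j + 1) := by
    intro j
    refine ENNReal.toReal_mono (hKtop _) (hK _ _ (h2 j) ?_)
    gcongr
    · norm_num
    · linarith
  have hk2 : ∀ j, k (j + 1) ≤ 2 * k j := by
    intro j
    rw [← ENNReal.ofReal_le_ofReal_iff (by have := hkp j; positivity), ← hKk,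
      ENNReal.ofReal_mul zero_le_two, ← hKk, zpow_add_one₀ two_ne_zero, mul_comm]
    simpa using hK2 _ (h2 j)
  have hratio := ratio_bounds hkp hk1 hk2 hP₀ hP₁
  set t : ℤ → ℝ := fun j => k j ^ P₀ / (k j / 2 ^ j) ^ P₁ with ht
  have htp : ∀ j, 0 < t j := fun j => by have := hkp j; have := h2 j; positivity
  have hΛ : ∀ j, ∑' i, min (A i) (ENNReal.ofReal (t j) * B i) ≤
      ENNReal.ofReal ((4 ^ P₀ + 4 ^ P₁) * k j ^ P₀) := by
    intro j
    have hj := hkp j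
    have hj2 := h2 j
    obtain ⟨b, g, hbg, hor⟩ := hdec _ hj2 (ENNReal.ofReal (2 * k j)) (by
      rw [hKk, ENNReal.ofReal_lt_ofReal_iff (by positivity)]; linarith)
    have hb : ∑' i, b i ≤ ENNReal.ofReal ((2 * k j) ^ P₀) := by
      have h3 := (le_self_add.trans_lt hbg).le
      rwa [ENNReal.rpow_inv_le_iff hP₀, ENNReal.ofReal_rpow_of_pos (by positivity)] at h3
    have hg : ∑' i, g i ≤ ENNReal.ofReal ((2 * (k j / 2 ^ j)) ^ P₁) := by
      have h3 := (le_add_self.trans_lt hbg).le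
      rw [mul_comm, ← ENNReal.le_div_iff_mul_le (by left; simp; positivity)
        (Or.inl ofReal_ne_top), ENNReal.rpow_inv_le_iff hP₁, ← ENNReal.ofReal_div_of_pos hj2,
        ENNReal.ofReal_rpow_of_pos (by positivity)] at h3
      rwa [mul_div_assoc] at h3
    have e2 : ∀ P : ℝ, (2 : ℝ≥0∞) ^ P = ENNReal.ofReal (2 ^ P) := by
      intro P
      rw [← ENNReal.ofReal_rpow_of_pos two_pos]; simp
    calc ∑' i, min (A i) (ENNReal.ofReal (t j) * B i)
        ≤ ∑' i, (2 ^ P₀ * b i + ENNReal.ofReal (t j) * 2 ^ P₁ * g i) := by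
          refine ENNReal.tsum_le_tsum fun i => ?_
          rcases hor i with h | h
          · exact (min_le_left _ _).trans (h.trans le_self_add)
          · refine (min_le_right _ _).trans (le_trans ?_ le_add_self)
            rw [mul_assoc]; gcongr
      _ = 2 ^ P₀ * ∑' i, b i + ENNReal.ofReal (t j) * 2 ^ P₁ * ∑' i, g i := by
          rw [ENNReal.tsum_add, ENNReal.tsum_mul_left, ENNReal.tsum_mul_left]
      _ ≤ 2 ^ P₀ * ENNReal.ofReal ((2 * k j) ^ P₀) + ENNReal.ofReal (t j) * 2 ^ P₁ *
          ENNReal.ofReal ((2 * (k j / 2 ^ j)) ^ P₁) := by gcongr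
      _ = _ := by
          have := htp j
          rw [e2, e2, ← ENNReal.ofReal_mul (by positivity), ← ENNReal.ofReal_mul (by positivity),
            ← ENNReal.ofReal_mul (by positivity), ← ENNReal.ofReal_add (by positivity)
              (by positivity)]
          congr 1
          simp only [ht]
          rw [Real.mul_rpow zero_le_two hj.le, Real.mul_rpow zero_le_two (by positivity),
            show (4 : ℝ) = 2 * 2 by norm_num, Real.mul_rpow zero_le_two zero_le_two,
            Real.mul_rpow zero_le_two zero_le_two]
          field_simp
  calc ∑' i, A i ^ (1 - η) * B i ^ η
      ≤ ∑' i, ENNReal.ofReal (R ^ (1 - η)) *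
        ∑' j, ENNReal.ofReal (t j ^ (-η)) * min (A i) (ENNReal.ofReal (t j) * B i) :=
        ENNReal.tsum_le_tsum fun i => pointwise_fin h0 h1 htp
          (Real.one_lt_rpow one_lt_two (lt_min hP₀ hP₁)) (fun j => (hratio j).1)
          (fun j => (hratio j).2) (hz i) (hT i)
    _ = ENNReal.ofReal (R ^ (1 - η)) * ∑' j, ENNReal.ofReal (t j ^ (-η)) *
        ∑' i, min (A i) (ENNReal.ofReal (t j) * B i) := by
        rw [ENNReal.tsum_mul_left, ENNReal.tsum_comm]
        simp only [ENNReal.tsum_mul_left]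
    _ ≤ ENNReal.ofReal (R ^ (1 - η)) * ∑' j, ENNReal.ofReal (t j ^ (-η)) *
        ENNReal.ofReal ((4 ^ P₀ + 4 ^ P₁) * k j ^ P₀) := by
        gcongr with j; exact hΛ j
    _ = ENNReal.ofReal (R ^ (1 - η)) * (ENNReal.ofReal (4 ^ P₀ + 4 ^ P₁) *
        ∑' j : ℤ, (ENNReal.ofReal (2 ^ j) ^ (-σ) * K (2 ^ j)) ^ r) := by
        congr 1
        rw [← ENNReal.tsum_mul_left]
        congr 1
        ext1 j
        have hj := hkp j
        have hj2 := h2 j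
        have := htp j
        rw [hKk, ENNReal.ofReal_rpow_of_pos hj2, ← ENNReal.ofReal_mul (by positivity),
          ← ENNReal.ofReal_mul (by positivity), ENNReal.ofReal_rpow_of_pos (by positivity),
          ← ENNReal.ofReal_mul (by positivity)]
        congr 1
        rw [mul_left_comm]
        congr 1
        simp only [ht]
        have e1 : k j ^ r = k j ^ (σ * r) * (k j ^ P₀ * k j ^ (P₀ * -η)) := by
          rw [← Real.rpow_add hj, ← Real.rpow_add hj]
          congr 1
          linarith
        rw [Real.mul_rpow (by positivity) hj.le, e1,
          Real.div_rpow (by positivity) (by positivity), ← Real.rpow_mul hj.le,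
          ← Real.rpow_mul (by positivity), show P₁ * -η = -(σ * r) by rw [hη]; ring,
          Real.rpow_neg (by positivity), Real.div_rpow hj.le hj2.le,
          ← Real.rpow_mul hj2.le, neg_mul, Real.rpow_neg hj2.le]
        field_simp
    _ ≤ ENNReal.ofReal (R ^ (1 - η)) * (ENNReal.ofReal (4 ^ P₀ + 4 ^ P₁) *
        (ENNReal.ofReal (2 ^ (σ * r + 1)) * I)) := by gcongr
    _ ≤ _ := by
        rw [add_mul, mul_assoc, mul_assoc]
        exact le_self_add

/-! ### The endpoint with infinite first exponent -/

/-- Analogue of `exists_sum_min_fin` when `p₀ = ∞`. The exponent `2 * d` is any exponent above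
`d`, so that the series converges at `+∞`. -/
lemma exists_sum_min_inf {d : ℝ} (hd : 0 < d) :
    ∃ C : ℝ≥0∞, C < ⊤ ∧ ∀ g B : ℝ≥0∞, (g = 0 ↔ B = 0) → (g = ⊤ ↔ B = ⊤) →
      g ^ d * B ≠ ⊤ →
      ∑' j : ℤ, ENNReal.ofReal (((2 : ℝ) ^ j) ^ d) *
        (min 1 (g / ENNReal.ofReal (2 ^ j)) ^ (2 * d) * B) ≤ C * (g ^ d * B) := by
  obtain ⟨C, hC, h⟩ := exists_sum_min_le hd hd
  refine ⟨C, hC, fun g B hz hT hD => ?_⟩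
  rcases eq_or_ne g 0 with hg | hg
  · simp [hz.1 hg]
  have hB : B ≠ 0 := fun h => hg (hz.2 h)
  have hg' : g ≠ ⊤ := by
    intro hg'
    rw [hg', hT.1 hg', ENNReal.top_rpow_of_pos hd] at hD
    simp at hD
  obtain ⟨x, hx, rfl⟩ : ∃ x : ℝ, 0 < x ∧ g = ENNReal.ofReal x :=
    ⟨g.toReal, ENNReal.toReal_pos hg hg', (ENNReal.ofReal_toReal hg').symm⟩
  rw [← mul_assoc, mul_comm C]
  simp only [← mul_assoc]
  rw [ENNReal.tsum_mul_right]
  gcongr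
  refine le_trans (le_of_eq ?_) (mul_le_mul_right (h x⁻¹ (by positivity)) _)
  rw [← ENNReal.tsum_mul_left]
  congr 1
  ext1 j
  have h2 := two_zpow_pos j
  rw [ENNReal.ofReal_rpow_of_pos hx, ← ENNReal.ofReal_div_of_pos h2, ← ENNReal.ofReal_one,
    ← ENNReal.ofReal_min, ENNReal.ofReal_rpow_of_nonneg (by positivity) (by positivity),
    ← ENNReal.ofReal_mul (by positivity), ← ENNReal.ofReal_mul (by positivity)]
  congr 1
  -- with `w = x / 2 ^ j` both sides equal `x ^ d * min (w ^ (-d)) (w ^ d)`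
  have hz : x⁻¹ * 2 ^ j = (x / 2 ^ j)⁻¹ := by field_simp
  rw [hz]
  have hxz : x ^ d = (x / 2 ^ j) ^ d * (2 ^ j) ^ d := by
    rw [← Real.mul_rpow (by positivity) h2.le, div_mul_cancel₀ _ h2.ne']
  rw [hxz]
  set w := x / 2 ^ j with hw
  have hwp : 0 < w := by positivity
  rw [Real.inv_rpow hwp.le, Real.inv_rpow hwp.le, Real.rpow_neg hwp.le, inv_inv, mul_comm (w ^ d),
    mul_assoc]
  congr 1
  rw [mul_comm 2 d, Real.rpow_mul (by positivity), Real.rpow_two]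
  rcases le_total w 1 with h1 | h1
  · have : w ^ d ≤ 1 := Real.rpow_le_one hwp.le h1 hd.le
    rw [min_eq_right h1, min_eq_right, sq]
    exact this.trans ((one_le_inv₀ (by positivity)).2 this)
  · have : 1 ≤ w ^ d := Real.one_le_rpow h1 hd.le
    rw [min_eq_left h1, min_eq_left, Real.one_rpow, mul_inv_cancel₀ (by positivity)]
    · simp
    · exact (inv_le_one_of_one_le₀ this).trans this

/-- Upper bound for the interpolation integral when `p₀ = ∞`. Cutting `g` at the level `2 ^ j`
gives `K s ≤ 2 ^ j + s (∑_{g i > 2 ^ j} B i) ^ (1 / P₁)`. The sum over the superlevel set may jump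
arbitrarily in `j`, so it is replaced by the larger
`Λ j = ∑ᵢ min (1, g i / 2 ^ j) ^ (2 d) B i`, which changes by a bounded factor at each step; the
nodes are then `s j = 2 ^ j / Λ j ^ (1 / P₁)`. -/
lemma upper_inf {P₁ σ r d : ℝ} (hP₁ : 0 < P₁) (hσ0 : 0 < σ) (hr : 0 < r)
    (hd : 0 < d) (hη : σ * r = P₁) (hη' : (1 - σ) * r = d) :
    ∃ C : ℝ≥0∞, C < ⊤ ∧ ∀ (ι : Type) (g B : ι → ℝ≥0∞) (K : ℝ → ℝ≥0∞),
      (∀ i, g i = 0 ↔ B i = 0) → (∀ i, g i = ⊤ ↔ B i = ⊤) →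
      (∀ s t, 0 < s → s ≤ t → K s ≤ K t) →
      (∀ s, 0 < s → ∀ E : Set ι, K s ≤ (⨆ i, Eᶜ.indicator g i) +
        ENNReal.ofReal s * (∑' i, E.indicator B i) ^ P₁⁻¹) →
      ∫⁻ t in Set.Ioi (0 : ℝ), (ENNReal.ofReal t ^ (-σ) * K t) ^ r / ENNReal.ofReal t ≤
        C * ∑' i, g i ^ d * B i := by
  obtain ⟨C₀, hC₀, hsum⟩ := exists_sum_min_inf hd
  set β := P₁⁻¹ with hβ
  have hβ0 : 0 < β := by positivity
  set R : ℝ := 2 ^ (1 + 2 * d * β) with hR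
  refine ⟨ENNReal.ofReal (R ^ (σ * r + 1)) * ENNReal.ofReal (2 ^ r) * C₀ + 1,
    ENNReal.add_lt_top.2 ⟨ENNReal.mul_lt_top (ENNReal.mul_lt_top ofReal_lt_top ofReal_lt_top) hC₀,
      one_lt_top⟩, fun ι g B K hz hT hK hsplit => ?_⟩
  rcases eq_or_ne (∑' i, g i ^ d * B i) ⊤ with htop | htop
  · rw [htop, ENNReal.mul_top (by simp)]; exact le_top
  have hD : ∀ i, g i ^ d * B i ≠ ⊤ := ENNReal.ne_top_of_tsum_ne_top htop
  have h2 := two_zpow_pos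
  have h2' : ∀ j : ℤ, ENNReal.ofReal (2 ^ j) ≠ 0 := fun j => by simp; positivity
  let Λ : ℤ → ℝ≥0∞ := fun j => ∑' i, min 1 (g i / ENNReal.ofReal (2 ^ j)) ^ (2 * d) * B i
  have hΛsum : ∑' j, ENNReal.ofReal (((2 : ℝ) ^ j) ^ d) * Λ j ≤ C₀ * ∑' i, g i ^ d * B i := by
    simp only [Λ, ← ENNReal.tsum_mul_left]
    rw [ENNReal.tsum_comm]
    exact ENNReal.tsum_le_tsum fun i => hsum _ _ (hz i) (hT i) (hD i)
  have hΛtop : ∀ j, Λ j ≠ ⊤ := by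
    intro j hj
    have h3 := (ENNReal.le_tsum j).trans hΛsum
    rw [hj, ENNReal.mul_top (by simp; positivity)] at h3
    exact (ENNReal.mul_lt_top hC₀ htop.lt_top).ne (top_le_iff.1 h3)
  have hKΛ : ∀ s, 0 < s → ∀ j : ℤ, K s ≤ ENNReal.ofReal (2 ^ j) + ENNReal.ofReal s * Λ j ^ β := by
    intro s hs j
    refine (hsplit s hs {i | ENNReal.ofReal (2 ^ j) < g i}).trans ?_
    gcongr
    · refine iSup_le fun i => ?_
      by_cases hi : ENNReal.ofReal (2 ^ j) < g i
      · simp [Set.indicator, hi]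
      · simp [Set.indicator, hi, not_lt.1 hi]
    · refine ENNReal.tsum_le_tsum fun i => ?_
      by_cases hi : ENNReal.ofReal (2 ^ j) < g i
      · have : 1 ≤ g i / ENNReal.ofReal (2 ^ j) := by
          rw [ENNReal.le_div_iff_mul_le (Or.inl (h2' j)) (Or.inl ofReal_ne_top)]
          simpa using hi.le
        simp [Set.indicator, hi, min_eq_left this]
      · simp [Set.indicator, hi]
  -- if some `Λ j` vanishes then so does `K`, and the nodes below would be undefined
  by_cases hzero : ∃ j, Λ j = 0
  · obtain ⟨j, hj⟩ := hzero
    have hg0 : ∀ i, g i = 0 := by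
      intro i
      have := ENNReal.tsum_eq_zero.1 hj i
      rcases mul_eq_zero.1 this with h | h
      · rw [ENNReal.rpow_eq_zero_iff_of_pos (by positivity)] at h
        rcases min_choice 1 (g i / ENNReal.ofReal (2 ^ j)) with h' | h'
        · simp [h'] at h
        · rw [h', ENNReal.div_eq_zero_iff] at h
          simpa using h
      · exact (hz i).2 h
    have hK0 : ∀ s, 0 < s → K s = 0 := by
      intro s hs
      have := hsplit s hs ∅
      simpa [hg0, ENNReal.zero_rpow_of_pos hβ0] using this
    rw [setLIntegral_congr_fun (g := fun _ => 0) measurableSet_Ioi]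
    · simp
    · intro t ht
      simp [hK0 t ht, hr]
  push Not at hzero
  set L : ℤ → ℝ := fun j => (Λ j).toReal with hL
  have hLp : ∀ j, 0 < L j := fun j => ENNReal.toReal_pos (hzero j) (hΛtop j)
  have hΛL : ∀ j, Λ j = ENNReal.ofReal (L j) := fun j => (ENNReal.ofReal_toReal (hΛtop j)).symm
  have hL1 : ∀ j, L (j + 1) ≤ L j := by
    intro j
    refine ENNReal.toReal_mono (hΛtop _) (ENNReal.tsum_le_tsum fun i => ?_)
    gcongr
    · norm_num
    · linarith
  have hL2 : ∀ j, L j ≤ 2 ^ (2 * d) * L (j + 1) := by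
    intro j
    rw [← ENNReal.ofReal_le_ofReal_iff (by have := hLp (j + 1); positivity), ← hΛL,
      ENNReal.ofReal_mul (by positivity), ← hΛL, ← ENNReal.ofReal_rpow_of_pos two_pos]
    simp only [Λ]
    rw [← ENNReal.tsum_mul_left]
    refine ENNReal.tsum_le_tsum fun i => ?_
    rw [← mul_assoc, ← ENNReal.mul_rpow_of_nonneg _ _ (by positivity)]
    gcongr
    rw [zpow_add_one₀ two_ne_zero, mul_comm ((2 : ℝ) ^ j), ENNReal.ofReal_mul zero_le_two,
      mul_min]
    apply min_le_min
    · simp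
    · rw [← mul_div_assoc, ENNReal.mul_div_mul_left _ _ (by simp) (by simp)]
  have := lintegral_le_sum hK (s := fun j => 2 ^ j / L j ^ β)
    (x := fun j => 2 * 2 ^ j) (ρ := 2) (R := R) (σ := σ) (r := r)
    (fun j => by have := hLp j; positivity) (fun j => by have := hLp j; positivity)
    one_lt_two (fun j => by
      have h3 := hLp j
      have h4 := hLp (j + 1)
      rw [zpow_add_one₀ two_ne_zero, mul_comm ((2 : ℝ) ^ j), mul_div_assoc]
      have := hL1 j
      gcongr) (fun j => by
      have h3 := hLp j
      have h4 := hLp (j + 1)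
      have h5 : L j ^ β ≤ 2 ^ (2 * d * β) * L (j + 1) ^ β := by
        rw [Real.rpow_mul zero_le_two, ← Real.mul_rpow (by positivity) h4.le]
        have := hL2 j
        gcongr
      rw [zpow_add_one₀ two_ne_zero, hR, Real.rpow_add two_pos, Real.rpow_one, div_le_iff₀ (by positivity)]
      have h6 : 1 ≤ 2 ^ (2 * d * β) * L (j + 1) ^ β / L j ^ β := by
        rwa [one_le_div (by positivity)]
      calc (2 : ℝ) ^ j * 2 ≤ (2 ^ j * 2) * (2 ^ (2 * d * β) * L (j + 1) ^ β / L j ^ β) :=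
            le_mul_of_one_le_right (by positivity) h6
        _ = _ := by ring)
    (fun j => by
      have hj := hLp j
      refine (hKΛ _ (by positivity) j).trans (le_of_eq ?_)
      rw [hΛL, ENNReal.ofReal_rpow_of_pos hj, ← ENNReal.ofReal_mul (by positivity),
        div_mul_cancel₀ _ (by positivity), ← ENNReal.ofReal_add (by positivity) (by positivity),
        two_mul]) hσ0 hr
  refine this.trans ?_
  have hterm : ∀ j, ENNReal.ofReal ((((2 : ℝ) ^ j / L j ^ β) ^ (-σ) * (2 * 2 ^ j)) ^ r) =
      ENNReal.ofReal (2 ^ r) * (ENNReal.ofReal (((2 : ℝ) ^ j) ^ d) * Λ j) := by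
    intro j
    have hj := hLp j
    have hj2 := h2 j
    rw [hΛL, ← ENNReal.ofReal_mul (by positivity), ← ENNReal.ofReal_mul (by positivity)]
    congr 1
    have e2 : β * (-σ * r) = -1 := by rw [hβ, ← hη]; field_simp
    rw [Real.mul_rpow (by positivity) (by positivity), Real.mul_rpow (by positivity) (by positivity),
      ← Real.rpow_mul (by positivity), Real.div_rpow (by positivity) (by positivity),
      ← Real.rpow_mul (by positivity), e2, Real.rpow_neg hj.le, Real.rpow_one, ← hη',
      show (1 - σ) * r = -σ * r + r by ring, Real.rpow_add hj2]
    field_simp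
  simp only [hterm]
  rw [ENNReal.tsum_mul_left, add_mul, mul_assoc, mul_assoc]
  refine le_trans ?_ le_self_add
  gcongr

/-- Layer-cake bound for `g ^ d` along the levels `4 * k j`. The bound by `M * 2 ^ (j σ)`
guarantees that some level lies below `g`; if all levels do, the right-hand side is infinite
because `k` is nondecreasing. -/
lemma pointwise_inf {d σ M : ℝ} (hd : 0 < d) (hσ : 0 < σ) {k : ℤ → ℝ}
    (hk : ∀ j, 0 < k j) (hk1 : ∀ j, k j ≤ k (j + 1))
    (hk2 : ∀ j, k (j + 1) ≤ 2 * k j) (hM : ∀ j, k j ≤ M * (2 ^ j) ^ σ)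
    {g B : ℝ≥0∞} (hz : g = 0 ↔ B = 0) :
    g ^ d * B ≤ ENNReal.ofReal (8 ^ d) *
      ∑' j, ENNReal.ofReal (k j ^ d) * (if ENNReal.ofReal (4 * k j) < g then B else 0) := by
  rcases eq_or_ne g 0 with hg | hg
  · simp [hz.1 hg]
  have hB : B ≠ 0 := fun h => hg (hz.2 h)
  have h2 := two_zpow_pos
  have hmono : Monotone k := monotone_int_of_le_succ hk1
  have hMp : 0 < M := by
    have h3 := (hk 0).trans_le (hM 0)
    simpa using h3
  -- the bound `k j ≤ M 2 ^ (j σ)` forces `k j → 0` as `j → -∞`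
  have hne : ∃ j, ENNReal.ofReal (4 * k j) < g := by
    have hs : 0 < (min g 1).toReal := ENNReal.toReal_pos (by simp [hg]) (by simp)
    obtain ⟨j, hj, -⟩ := exists_cover (fun j : ℤ => 4 * (M * (2 ^ j) ^ σ))
      (fun j => by have := h2 j; positivity) (ρ := 2 ^ σ) (Real.one_lt_rpow one_lt_two hσ)
      (fun j => by
        have := h2 j
        rw [zpow_add_one₀ two_ne_zero, Real.mul_rpow this.le zero_le_two]
        apply le_of_eq; ring) hs
    refine ⟨j, ?_⟩
    have h3 : 4 * k j < (min g 1).toReal := lt_of_le_of_lt (by gcongr; exact hM j) hj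
    rw [← ENNReal.ofReal_lt_ofReal_iff hs, ENNReal.ofReal_toReal (by simp)] at h3
    exact h3.trans_le (min_le_left _ _)
  by_cases hbdd : ∃ b : ℤ, ∀ z : ℤ, ENNReal.ofReal (4 * k z) < g → z ≤ b
  · obtain ⟨j, hj, hmax⟩ := Int.exists_greatest_of_bdd hbdd hne
    refine le_trans ?_ (mul_le_mul_right (ENNReal.le_tsum j) _)
    rw [if_pos hj, ← mul_assoc, ← ENNReal.ofReal_mul (by positivity)]
    gcongr
    have hj' : g ≤ ENNReal.ofReal (4 * k (j + 1)) := by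
      by_contra! hc
      have := hmax _ hc
      omega
    have hkj := hk j
    calc g ^ d ≤ (ENNReal.ofReal (8 * k j)) ^ d := by
          gcongr
          refine hj'.trans (ENNReal.ofReal_le_ofReal ?_)
          linarith [hk2 j]
      _ = _ := by
          rw [ENNReal.ofReal_rpow_of_pos (by positivity), Real.mul_rpow (by norm_num) hkj.le]
  · push Not at hbdd
    have hall : ∀ j, ENNReal.ofReal (4 * k j) < g := by
      intro j
      obtain ⟨z, hz1, hz2⟩ := hbdd j
      refine lt_of_le_of_lt (ENNReal.ofReal_le_ofReal ?_) hz1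
      have := hmono hz2.le
      linarith
    have hk0 := hk 0
    have : ∑' j, ENNReal.ofReal (k j ^ d) * (if ENNReal.ofReal (4 * k j) < g then B else 0) = ⊤ := by
      simp only [hall, if_true]
      refine top_le_iff.1 ?_
      calc (⊤ : ℝ≥0∞) = ∑' _ : ℕ, ENNReal.ofReal (k 0 ^ d) * B := by
            rw [ENNReal.tsum_const_eq_top_of_ne_zero]
            refine mul_ne_zero ?_ hB
            simp; positivity
        _ ≤ ∑' m : ℕ, ENNReal.ofReal (k (m : ℤ) ^ d) * B := by
            gcongr with m
            exact hmono (by positivity)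
        _ ≤ _ := ENNReal.tsum_comp_le_tsum_of_injective (f := fun m : ℕ => (m : ℤ))
            Nat.cast_injective (fun j : ℤ => ENNReal.ofReal (k j ^ d) * B)
    rw [this, ENNReal.mul_top (by simp; positivity)]
    exact le_top

/-- Lower bound for the interpolation integral when `p₀ = ∞`. At `s = 2 ^ j`, a near-optimal
decomposition has first part at most `2 k j`, where `k j = K (2 ^ j)`; so on `{A > 4 k j}` the second
part dominates `B` up to a constant, and `∑_{A i > 4 k j} B i ≤ C (k j / 2 ^ j) ^ P₁`. -/
lemma lower_inf {P₁ σ r d : ℝ} (hP₁ : 0 < P₁) (hσ0 : 0 < σ) (hr : 0 < r)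
    (hd : 0 < d) (hη : σ * r = P₁) (hη' : (1 - σ) * r = d) :
    ∃ C : ℝ≥0∞, C < ⊤ ∧ ∀ (ι : Type) (A B : ι → ℝ≥0∞) (K : ℝ → ℝ≥0∞),
      (∀ i, A i = 0 ↔ B i = 0) →
      (∀ s t, 0 < s → s ≤ t → K s ≤ K t) → (∀ s, 0 < s → K (2 * s) ≤ 2 * K s) →
      (∀ s, 0 < s → ∀ c, K s < c → ∃ b g : ι → ℝ≥0∞,
        (⨆ i, b i) + ENNReal.ofReal s * (∑' i, g i) ^ P₁⁻¹ < c ∧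
        ∀ i, A i ≤ 2 * b i ∨ B i ≤ 2 ^ P₁ * g i) →
      ∑' i, A i ^ d * B i ≤ C *
      ∫⁻ t in Set.Ioi (0 : ℝ), (ENNReal.ofReal t ^ (-σ) * K t) ^ r / ENNReal.ofReal t := by
  refine ⟨ENNReal.ofReal (8 ^ d) * (ENNReal.ofReal (4 ^ P₁) *
    ENNReal.ofReal (2 ^ (σ * r + 1))) + 1,
    ENNReal.add_lt_top.2 ⟨ENNReal.mul_lt_top ofReal_lt_top (ENNReal.mul_lt_top ofReal_lt_top
      ofReal_lt_top), one_lt_top⟩, fun ι A B K hz hK hK2 hdec => ?_⟩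
  set I := ∫⁻ t in Set.Ioi (0 : ℝ), (ENNReal.ofReal t ^ (-σ) * K t) ^ r / ENNReal.ofReal t with hI
  rcases eq_or_ne I ⊤ with htop | htop
  · rw [htop, ENNReal.mul_top (by simp)]; exact le_top
  have hsum := sum_le_lintegral hK hσ0 hr
  rw [← hI] at hsum
  have h2 := two_zpow_pos
  have hKtop : ∀ j : ℤ, K (2 ^ j) ≠ ⊤ := by
    intro j hj
    have h3 := (ENNReal.le_tsum j).trans hsum
    rw [hj, ENNReal.ofReal_rpow_of_pos (h2 j), ENNReal.mul_top (by simp; positivity),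
      ENNReal.top_rpow_of_pos hr] at h3
    exact (ENNReal.mul_lt_top ofReal_lt_top htop.lt_top).ne (top_le_iff.1 h3)
  have hpos : ∀ s, 0 < s → ∀ i, A i ≠ 0 → K s ≠ 0 := by
    intro s hs i hA hKs
    have hB : B i ≠ 0 := fun h => hA ((hz i).2 h)
    have hs' : ENNReal.ofReal s ≠ 0 := by simpa using hs
    obtain ⟨b, g, hbg, hor⟩ := hdec s hs
      (min (A i / 2) (ENNReal.ofReal s * (B i ^ P₁⁻¹ / 2))) (by
        rw [hKs]
        refine lt_min (ENNReal.div_pos hA (by simp)) (ENNReal.mul_pos hs'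
          (ENNReal.div_pos ?_ (by simp)).ne')
        simp [ENNReal.rpow_eq_zero_iff, hB, hP₁.le])
    rw [lt_min_iff] at hbg
    rcases hor i with h | h
    · refine absurd hbg.1 (not_lt.2 ?_)
      refine le_trans ?_ le_self_add
      rw [ENNReal.div_le_iff (by simp) (by simp), mul_comm]
      exact h.trans (by gcongr; exact le_iSup b i)
    · refine absurd hbg.2 (not_lt.2 ?_)
      refine le_trans ?_ le_add_self
      gcongr
      rw [ENNReal.div_le_iff (by simp) (by simp)]
      calc B i ^ P₁⁻¹ ≤ (2 ^ P₁ * ∑' i, g i) ^ P₁⁻¹ := by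
            gcongr; exact h.trans (by gcongr; exact ENNReal.le_tsum i)
        _ = _ := by
            rw [ENNReal.mul_rpow_of_nonneg _ _ (by positivity), ENNReal.rpow_rpow_inv hP₁.ne',
              mul_comm]
  by_cases hall : ∀ i, A i = 0
  · have : ∑' i, A i ^ d * B i = 0 := by
      rw [ENNReal.tsum_eq_zero]
      intro i
      rw [hall i, ENNReal.zero_rpow_of_pos hd, zero_mul]
    rw [this]; exact zero_le
  push Not at hall
  obtain ⟨i₀, hi₀⟩ := hall
  set k : ℤ → ℝ := fun j => (K (2 ^ j)).toReal with hk
  have hkp : ∀ j, 0 < k j := fun j => ENNReal.toReal_pos (hpos _ (h2 j) i₀ hi₀) (hKtop j)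
  have hKk : ∀ j : ℤ, K (2 ^ j) = ENNReal.ofReal (k j) := fun j =>
    (ENNReal.ofReal_toReal (hKtop j)).symm
  have hk1 : ∀ j, k j ≤ k (j + 1) := by
    intro j
    refine ENNReal.toReal_mono (hKtop _) (hK _ _ (h2 j) ?_)
    gcongr
    · norm_num
    · linarith
  have hk2 : ∀ j, k (j + 1) ≤ 2 * k j := by
    intro j
    rw [← ENNReal.ofReal_le_ofReal_iff (by have := hkp j; positivity), ← hKk,
      ENNReal.ofReal_mul zero_le_two, ← hKk, zpow_add_one₀ two_ne_zero, mul_comm]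
    simpa using hK2 _ (h2 j)
  have hst : ∀ j : ℤ, (ENNReal.ofReal (2 ^ j) ^ (-σ) * K (2 ^ j)) ^ r =
      ENNReal.ofReal ((((2 : ℝ) ^ j) ^ (-σ) * k j) ^ r) := by
    intro j
    have hj := hkp j
    have hj2 := h2 j
    rw [hKk, ENNReal.ofReal_rpow_of_pos hj2, ← ENNReal.ofReal_mul (by positivity),
      ENNReal.ofReal_rpow_of_pos (by positivity)]
  -- each summand of the discretised integral is at most the whole sum
  obtain ⟨M, hM⟩ : ∃ M : ℝ, ∀ j, k j ≤ M * (2 ^ j) ^ σ := by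
    set T := ENNReal.ofReal (2 ^ (σ * r + 1)) * I with hT
    have hTtop : T ≠ ⊤ := (ENNReal.mul_lt_top ofReal_lt_top htop.lt_top).ne
    refine ⟨T.toReal ^ r⁻¹, fun j => ?_⟩
    have hj := hkp j
    have hj2 := h2 j
    have h3 := (ENNReal.le_tsum j).trans hsum
    rw [hst, ENNReal.ofReal_le_iff_le_toReal hTtop, ← Real.le_rpow_inv_iff_of_pos (by positivity)
      (by positivity) hr, Real.rpow_neg hj2.le, mul_comm, ← div_eq_mul_inv,
      div_le_iff₀ (by positivity)] at h3
    exact h3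
  have hΛ : ∀ j, ∑' i, (if ENNReal.ofReal (4 * k j) < A i then B i else 0) ≤
      ENNReal.ofReal (4 ^ P₁ * (k j / 2 ^ j) ^ P₁) := by
    intro j
    have hj := hkp j
    have hj2 := h2 j
    obtain ⟨b, g, hbg, hor⟩ := hdec _ hj2 (ENNReal.ofReal (2 * k j)) (by
      rw [hKk, ENNReal.ofReal_lt_ofReal_iff (by positivity)]; linarith)
    have hb : ⨆ i, b i ≤ ENNReal.ofReal (2 * k j) := (le_self_add.trans_lt hbg).le
    have hg : ∑' i, g i ≤ ENNReal.ofReal ((2 * (k j / 2 ^ j)) ^ P₁) := by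
      have h3 := (le_add_self.trans_lt hbg).le
      rw [mul_comm, ← ENNReal.le_div_iff_mul_le (by left; simp; positivity)
        (Or.inl ofReal_ne_top), ENNReal.rpow_inv_le_iff hP₁, ← ENNReal.ofReal_div_of_pos hj2,
        ENNReal.ofReal_rpow_of_pos (by positivity)] at h3
      rwa [mul_div_assoc] at h3
    have e2 : ∀ P : ℝ, (2 : ℝ≥0∞) ^ P = ENNReal.ofReal (2 ^ P) := by
      intro P
      rw [← ENNReal.ofReal_rpow_of_pos two_pos]; simp
    calc ∑' i, (if ENNReal.ofReal (4 * k j) < A i then B i else 0)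
        ≤ ∑' i, 2 ^ P₁ * g i := by
          refine ENNReal.tsum_le_tsum fun i => ?_
          split_ifs with hi
          · rcases hor i with h | h
            · refine absurd hi (not_lt.2 (h.trans ?_))
              calc 2 * b i ≤ 2 * ENNReal.ofReal (2 * k j) := by
                    gcongr; exact (le_iSup b i).trans hb
                _ = ENNReal.ofReal (4 * k j) := by
                    rw [show (4 : ℝ) * k j = 2 * (2 * k j) by ring,
                      ENNReal.ofReal_mul (p := 2) zero_le_two]
                    simp
            · exact h
          · exact zero_le
      _ = 2 ^ P₁ * ∑' i, g i := by rw [ENNReal.tsum_mul_left]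
      _ ≤ 2 ^ P₁ * ENNReal.ofReal ((2 * (k j / 2 ^ j)) ^ P₁) := by gcongr
      _ = _ := by
          rw [e2, ← ENNReal.ofReal_mul (by positivity)]
          congr 1
          rw [Real.mul_rpow zero_le_two (by positivity),
            show (4 : ℝ) = 2 * 2 by norm_num, Real.mul_rpow zero_le_two zero_le_two, mul_assoc]
  calc ∑' i, A i ^ d * B i
      ≤ ∑' i, ENNReal.ofReal (8 ^ d) * ∑' j, ENNReal.ofReal (k j ^ d) *
          (if ENNReal.ofReal (4 * k j) < A i then B i else 0) :=
        ENNReal.tsum_le_tsum fun i => pointwise_inf hd hσ0 hkp hk1 hk2 hM (hz i)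
    _ = ENNReal.ofReal (8 ^ d) * ∑' j, ENNReal.ofReal (k j ^ d) *
        ∑' i, (if ENNReal.ofReal (4 * k j) < A i then B i else 0) := by
        rw [ENNReal.tsum_mul_left, ENNReal.tsum_comm]
        simp only [ENNReal.tsum_mul_left]
    _ ≤ ENNReal.ofReal (8 ^ d) * ∑' j, ENNReal.ofReal (k j ^ d) *
        ENNReal.ofReal (4 ^ P₁ * (k j / 2 ^ j) ^ P₁) := by
        gcongr with j; exact hΛ j
    _ = ENNReal.ofReal (8 ^ d) * (ENNReal.ofReal (4 ^ P₁) *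
        ∑' j : ℤ, (ENNReal.ofReal (2 ^ j) ^ (-σ) * K (2 ^ j)) ^ r) := by
        congr 1
        rw [← ENNReal.tsum_mul_left]
        congr 1
        ext1 j
        have hj := hkp j
        have hj2 := h2 j
        rw [hst, ← ENNReal.ofReal_mul (by positivity), ← ENNReal.ofReal_mul (by positivity)]
        congr 1
        rw [mul_left_comm]
        congr 1
        have e1 : k j ^ r = k j ^ d * k j ^ P₁ := by
          rw [← Real.rpow_add hj]
          congr 1
          linarith
        rw [Real.mul_rpow (by positivity) hj.le, e1, Real.div_rpow hj.le hj2.le,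
          ← Real.rpow_mul hj2.le, neg_mul, hη, Real.rpow_neg hj2.le]
        field_simp
    _ ≤ ENNReal.ofReal (8 ^ d) * (ENNReal.ofReal (4 ^ P₁) *
        (ENNReal.ofReal (2 ^ (σ * r + 1)) * I)) := by gcongr
    _ ≤ _ := by
        rw [add_mul, mul_assoc, mul_assoc]
        exact le_self_add

/-! ### Averages over Whitney cubes -/

lemma avgQ_add_le {n : ℕ} {q : ℝ≥0∞} (hq : 1 ≤ q) {F G : (Fin n → ℝ) × ℝ → ℂ}
    (hF : Measurable F) (hG : Measurable G) (S : Set ((Fin n → ℝ) × ℝ)) :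
    avgQ n q (F + G) S ≤ avgQ n q F S + avgQ n q G S := by
  unfold avgQ
  rw [← mul_add]
  gcongr
  exact eLpNorm_add_le hF.aestronglyMeasurable hG.aestronglyMeasurable hq

lemma avgQ_congr {n : ℕ} {q : ℝ≥0∞} {F G : (Fin n → ℝ) × ℝ → ℂ}
    {S : Set ((Fin n → ℝ) × ℝ)} (hS : MeasurableSet S) (h : ∀ P ∈ S, F P = G P) :
    avgQ n q F S = avgQ n q G S := by
  unfold avgQ
  congr 1
  exact eLpNorm_congr_ae ((ae_restrict_iff' hS).2 (Filter.Eventually.of_forall h))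

lemma avgQ_zero {n : ℕ} {q : ℝ≥0∞} (S : Set ((Fin n → ℝ) × ℝ)) :
    avgQ n q (fun _ => 0) S = 0 := by
  unfold avgQ
  simp

lemma measurableSet_whitneyCube (n : ℕ) (k : ℤ) (m : Fin n → ℤ) :
    MeasurableSet (whitneyCube n k m) := by
  unfold whitneyCube
  measurability

lemma whitneyCube_disjoint {n : ℕ} {Q Q' : ℤ × (Fin n → ℤ)} {P : (Fin n → ℝ) × ℝ}
    (h : P ∈ whitneyCube n Q.1 Q.2) (h' : P ∈ whitneyCube n Q'.1 Q'.2) : Q = Q' := by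
  obtain ⟨k, m⟩ := Q
  obtain ⟨k', m'⟩ := Q'
  obtain ⟨h1, h2, h3⟩ := h
  obtain ⟨h1', h2', h3'⟩ := h'
  simp only at *
  have hk1 := (zpow_lt_zpow_iff_right₀ (one_lt_two (α := ℝ))).1 (h2.trans h3')
  have hk2 := (zpow_lt_zpow_iff_right₀ (one_lt_two (α := ℝ))).1 (h2'.trans h3)
  obtain rfl : k = k' := by omega
  congr 1
  ext i
  have hp : (0 : ℝ) < 2 ^ k := by positivity
  have e1 := lt_of_mul_lt_mul_right ((h1 i).1.trans_lt (h1' i).2) hp.le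
  have e2 := lt_of_mul_lt_mul_right ((h1' i).1.trans_lt (h1 i).2) hp.le
  have e1' : m i < m' i + 1 := by exact_mod_cast e1
  have e2' : m' i < m i + 1 := by exact_mod_cast e2
  omega

/-- The average of `F` over the Whitney cube with index `Q = (k, m)`. -/
def avgW (n : ℕ) (q : ℝ≥0∞) (F : (Fin n → ℝ) × ℝ → ℂ) (Q : ℤ × (Fin n → ℤ)) : ℝ≥0∞ :=
  avgQ n q F (whitneyCube n Q.1 Q.2)

/-- The side length of the Whitney cube with index `Q = (k, m)`. -/
def side {n : ℕ} (Q : ℤ × (Fin n → ℤ)) : ℝ≥0∞ := ENNReal.ofReal ((2 : ℝ) ^ Q.1)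

/-- The summand of `‖F‖_{L(p,θ,q)}^p` at the cube `Q`, as a function of the average of `F`. -/
def cubeTerm {n : ℕ} (P θ : ℝ) (a : ℤ × (Fin n → ℤ) → ℝ≥0∞) (Q : ℤ × (Fin n → ℤ)) : ℝ≥0∞ :=
  a Q ^ P * side Q ^ ((n : ℝ) + P - P * θ)

/-- The quantity at the cube `Q` whose supremum is `‖F‖_{L(∞,θ,q)}`. -/
def supTerm {n : ℕ} (θ : ℝ) (a : ℤ × (Fin n → ℤ) → ℝ≥0∞) (Q : ℤ × (Fin n → ℤ)) : ℝ≥0∞ :=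
  side Q ^ (1 - θ) * a Q

section terms
variable {n : ℕ} {P θ : ℝ} {a : ℤ × (Fin n → ℤ) → ℝ≥0∞} {Q : ℤ × (Fin n → ℤ)}

lemma side_ne_zero : side Q ≠ 0 := by
  unfold side; simp; positivity

lemma side_ne_top : side Q ≠ ⊤ := ofReal_ne_top

lemma side_rpow_ne_zero (x : ℝ) : side Q ^ x ≠ 0 := by
  simp [ENNReal.rpow_eq_zero_iff, side_ne_zero, side_ne_top]

lemma side_rpow_ne_top (x : ℝ) : side Q ^ x ≠ ⊤ :=
  ENNReal.rpow_ne_top_of_ne_zero side_ne_zero side_ne_top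

lemma cubeTerm_eq_zero (hP : 0 < P) : cubeTerm P θ a Q = 0 ↔ a Q = 0 := by
  rw [cubeTerm, mul_eq_zero, or_iff_left (side_rpow_ne_zero _), ENNReal.rpow_eq_zero_iff_of_pos hP]

lemma cubeTerm_eq_top (hP : 0 < P) : cubeTerm P θ a Q = ⊤ ↔ a Q = ⊤ := by
  simp only [cubeTerm, ENNReal.mul_eq_top, ne_eq, side_rpow_ne_zero, side_rpow_ne_top,
    not_false_eq_true, and_true, and_false, false_or, ENNReal.rpow_eq_top_iff_of_pos hP]

lemma supTerm_eq_zero : supTerm θ a Q = 0 ↔ a Q = 0 := by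
  rw [supTerm, mul_eq_zero, or_iff_right (side_rpow_ne_zero _)]

lemma supTerm_eq_top : supTerm θ a Q = ⊤ ↔ a Q = ⊤ := by
  simp only [supTerm, ENNReal.mul_eq_top, ne_eq, side_rpow_ne_zero, side_rpow_ne_top,
    not_false_eq_true, true_and, false_and, or_false]

lemma cubeTerm_le {b : ℤ × (Fin n → ℤ) → ℝ≥0∞} (hP : 0 < P) (h : a Q ≤ 2 * b Q) :
    cubeTerm P θ a Q ≤ 2 ^ P * cubeTerm P θ b Q := by
  unfold cubeTerm
  rw [← mul_assoc, ← ENNReal.mul_rpow_of_nonneg _ _ hP.le]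
  gcongr

lemma supTerm_le {b : ℤ × (Fin n → ℤ) → ℝ≥0∞} (h : a Q ≤ 2 * b Q) :
    supTerm θ a Q ≤ 2 * supTerm θ b Q := by
  unfold supTerm
  rw [mul_left_comm]
  gcongr

lemma cubeTerm_indicator (hP : 0 < P) (E : Set (ℤ × (Fin n → ℤ))) :
    cubeTerm P θ (E.indicator a) = E.indicator (cubeTerm P θ a) := by
  ext Q
  by_cases hQ : Q ∈ E
  · simp [cubeTerm, hQ]
  · simp [cubeTerm, hQ, hP]

lemma supTerm_indicator (E : Set (ℤ × (Fin n → ℤ))) :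
    supTerm θ (E.indicator a) = E.indicator (supTerm θ a) := by
  ext Q
  by_cases hQ : Q ∈ E
  · simp [supTerm, hQ]
  · simp [supTerm, hQ]

/-- The summands for the interpolated parameters are geometric means of the summands at the two
endpoints. -/
lemma cubeTerm_interp {P₀ P₁ θ₀ θ₁ r θ η σ : ℝ} (hP₀ : 0 < P₀) (hP₁ : 0 < P₁)
    (h0 : 0 < η) (h1 : η < 1) (hη : σ * r = η * P₁) (hη' : (1 - σ) * r = (1 - η) * P₀)
    (hθ : θ = (1 - σ) * θ₀ + σ * θ₁) :
    cubeTerm P₀ θ₀ a Q ^ (1 - η) * cubeTerm P₁ θ₁ a Q ^ η = cubeTerm r θ a Q := by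
  unfold cubeTerm
  have h1' : 0 < 1 - η := by linarith
  rw [ENNReal.mul_rpow_of_nonneg _ _ h1'.le, ENNReal.mul_rpow_of_nonneg _ _ h0.le,
    ← ENNReal.rpow_mul, ← ENNReal.rpow_mul, ← ENNReal.rpow_mul, ← ENNReal.rpow_mul,
    mul_mul_mul_comm, ← ENNReal.rpow_add_of_nonneg _ _ (by positivity) (by positivity),
    ← ENNReal.rpow_add _ _ side_ne_zero side_ne_top, hθ]
  congr 2
  · linarith
  · linear_combination (1 - θ₁) * (-hη) + (1 - θ₀) * (-hη')

lemma supTerm_interp {P₁ θ₀ θ₁ r θ d σ : ℝ} (hP₁ : 0 < P₁) (hd : 0 < d)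
    (hη : σ * r = P₁) (hη' : (1 - σ) * r = d) (hθ : θ = (1 - σ) * θ₀ + σ * θ₁) :
    supTerm θ₀ a Q ^ d * cubeTerm P₁ θ₁ a Q = cubeTerm r θ a Q := by
  unfold cubeTerm supTerm
  rw [ENNReal.mul_rpow_of_nonneg _ _ hd.le, ← ENNReal.rpow_mul, mul_comm (side Q ^ _),
    mul_mul_mul_comm, ← ENNReal.rpow_add_of_nonneg _ _ hd.le hP₁.le,
    ← ENNReal.rpow_add _ _ side_ne_zero side_ne_top, hθ]
  congr 2
  · linarith
  · linear_combination (1 - θ₁) * (-hη) + (1 - θ₀) * (-hη')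

end terms

lemma LGauge_fin {n : ℕ} {p : ℝ≥0∞} (hp : p ≠ ⊤) {θ : ℝ} {q : ℝ≥0∞}
    {F : (Fin n → ℝ) × ℝ → ℂ} (hF : Measurable F) :
    LGauge n p θ q F = (∑' Q, cubeTerm p.toReal θ (avgW n q F) Q) ^ p.toReal⁻¹ := by
  rw [LGauge, if_pos hF, LNorm, if_neg hp, ← ENNReal.tsum_prod]
  rfl

lemma LGauge_top {n : ℕ} {θ : ℝ} {q : ℝ≥0∞}
    {F : (Fin n → ℝ) × ℝ → ℂ} (hF : Measurable F) :
    LGauge n ⊤ θ q F = ⨆ Q, supTerm θ (avgW n q F) Q := by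
  rw [LGauge, if_pos hF, LNorm, if_pos rfl, iSup_prod]
  rfl

/-! ### Decompositions of functions on the half-space -/

/-- Restriction of `F` to the union of the Whitney cubes indexed by `E`. Since the cubes are
pairwise disjoint, it splits the sequence of averages along `E`. -/
lemma exists_restrict {n : ℕ} {q : ℝ≥0∞} {F : (Fin n → ℝ) × ℝ → ℂ} (hF : Measurable F)
    (E : Set (ℤ × (Fin n → ℤ))) :
    ∃ b, Measurable b ∧ avgW n q b = E.indicator (avgW n q F) ∧
      avgW n q (F - b) = Eᶜ.indicator (avgW n q F) := by
  set U : Set ((Fin n → ℝ) × ℝ) := ⋃ Q ∈ E, whitneyCube n Q.1 Q.2 with hU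
  have hUm : MeasurableSet U :=
    MeasurableSet.biUnion (Set.to_countable E) fun Q _ => measurableSet_whitneyCube _ _ _
  have hin : ∀ Q ∈ E, ∀ P ∈ whitneyCube n Q.1 Q.2, P ∈ U := fun Q hQ P hP =>
    Set.mem_biUnion hQ hP
  have hout : ∀ Q, Q ∉ E → ∀ P ∈ whitneyCube n Q.1 Q.2, P ∉ U := by
    intro Q hQ P hP hPU
    obtain ⟨Q', hQ', hP'⟩ := Set.mem_iUnion₂.1 hPU
    exact hQ (whitneyCube_disjoint hP hP' ▸ hQ')
  refine ⟨U.indicator F, hF.indicator hUm, ?_, ?_⟩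
  · ext Q
    by_cases hQ : Q ∈ E
    · rw [Set.indicator_of_mem hQ]
      exact avgQ_congr (measurableSet_whitneyCube _ _ _) fun P hP => by simp [hin Q hQ P hP]
    · rw [Set.indicator_of_notMem hQ, ← avgQ_zero (q := q) (whitneyCube n Q.1 Q.2)]
      exact avgQ_congr (measurableSet_whitneyCube _ _ _) fun P hP => by simp [hout Q hQ P hP]
  · ext Q
    by_cases hQ : Q ∈ E
    · rw [Set.indicator_of_notMem (by simpa using hQ),
        ← avgQ_zero (q := q) (whitneyCube n Q.1 Q.2)]
      exact avgQ_congr (measurableSet_whitneyCube _ _ _) fun P hP => by simp [hin Q hQ P hP]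
    · rw [Set.indicator_of_mem (by simpa using hQ)]
      exact avgQ_congr (measurableSet_whitneyCube _ _ _) fun P hP => by simp [hout Q hQ P hP]

lemma Kfun_mono {𝔄 : Type*} [AddCommGroup 𝔄] (N₀ N₁ : 𝔄 → ℝ≥0∞) (a : 𝔄) (s t : ℝ)
    (_ : 0 < s) (hst : s ≤ t) : Kfun N₀ N₁ s a ≤ Kfun N₀ N₁ t a := by
  unfold Kfun
  gcongr

lemma Kfun_two_mul {𝔄 : Type*} [AddCommGroup 𝔄] (N₀ N₁ : 𝔄 → ℝ≥0∞) (a : 𝔄) (s : ℝ)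
    (_ : 0 < s) : Kfun N₀ N₁ (2 * s) a ≤ 2 * Kfun N₀ N₁ s a := by
  unfold Kfun
  rw [ENNReal.mul_iInf_of_ne (by simp) (by simp)]
  refine iInf_mono fun b => ?_
  rw [mul_add, ENNReal.ofReal_mul zero_le_two, mul_assoc, ENNReal.ofReal_ofNat]
  gcongr
  exact le_mul_of_one_le_left' (by simp)

/-- Near-optimal decompositions in the K-functional consist of measurable functions, the gauge
being infinite on the others, and by the triangle inequality on each cube one of the two parts
has average at least half of that of `F`. -/
lemma exists_decomp {n : ℕ} {q : ℝ≥0∞} (hq : 1 ≤ q) {p₀ p₁ : ℝ≥0∞} {θ₀ θ₁ s : ℝ} (hs : 0 < s)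
    {F : (Fin n → ℝ) × ℝ → ℂ} (hF : Measurable F) {c : ℝ≥0∞}
    (h : Kfun (LGauge n p₀ θ₀ q) (LGauge n p₁ θ₁ q) s F < c) :
    ∃ b, Measurable b ∧ Measurable (F - b) ∧
      LGauge n p₀ θ₀ q (F - b) + ENNReal.ofReal s * LGauge n p₁ θ₁ q b < c ∧
      ∀ Q, avgW n q F Q ≤ 2 * avgW n q (F - b) Q ∨ avgW n q F Q ≤ 2 * avgW n q b Q := by
  obtain ⟨b, hb⟩ := iInf_lt_iff.1 h
  have hbm : Measurable b := by
    by_contra hbm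
    rw [LGauge, LGauge, if_neg hbm, ENNReal.mul_top (by simpa using hs)] at hb
    simp at hb
  refine ⟨b, hbm, hF.sub hbm, hb, fun Q => ?_⟩
  have hadd := avgQ_add_le hq (hF.sub hbm) hbm (whitneyCube n Q.1 Q.2)
  rw [sub_add_cancel] at hadd
  change avgW n q F Q ≤ avgW n q (F - b) Q + avgW n q b Q at hadd
  rcases le_total (avgW n q (F - b) Q) (avgW n q b Q) with h | h
  · right
    rw [two_mul]
    exact hadd.trans (by gcongr)
  · left
    rw [two_mul]
    exact hadd.trans (by gcongr)

/-! ### Comparison of the interpolation norm with the space norm -/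

/-- Two-sided comparison of the `r`-th powers of the two norms, `r` being the real number
`p_σ`. When `p₀ = ∞` the relation `hrp` still reads correctly, since then `p₀.toReal⁻¹ = 0`. -/
lemma interp_pow (n : ℕ) (q : ℝ≥0∞) (hq : 1 ≤ q)
    (θ₀ θ₁ : ℝ) (p₀ p₁ : ℝ≥0∞) (hp₀ : 0 < p₀) (hp₁ : 0 < p₁) (hp₁' : p₁ < ⊤)
    (σ : ℝ) (hσ0 : 0 < σ) (hσ1 : σ < 1) (r : ℝ) (hr : 0 < r)
    (hrp : r⁻¹ = (1 - σ) * p₀.toReal⁻¹ + σ * p₁.toReal⁻¹)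
    (θσ : ℝ) (hθσ : θσ = (1 - σ) * θ₀ + σ * θ₁) :
    ∃ C₁ C₂ : ℝ≥0∞, C₁ < ⊤ ∧ C₂ < ⊤ ∧
      ∀ F : (Fin n → ℝ) × ℝ → ℂ, Measurable F →
        ∫⁻ s in Set.Ioi (0 : ℝ), (ENNReal.ofReal s ^ (-σ) *
          Kfun (LGauge n p₀ θ₀ q) (LGauge n p₁ θ₁ q) s F) ^ r / ENNReal.ofReal s ≤
          C₁ * ∑' Q, cubeTerm r θσ (avgW n q F) Q ∧
        ∑' Q, cubeTerm r θσ (avgW n q F) Q ≤ C₂ *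
        ∫⁻ s in Set.Ioi (0 : ℝ), (ENNReal.ofReal s ^ (-σ) *
          Kfun (LGauge n p₀ θ₀ q) (LGauge n p₁ θ₁ q) s F) ^ r / ENNReal.ofReal s := by
  have hP₁ : 0 < p₁.toReal := ENNReal.toReal_pos hp₁.ne' hp₁'.ne
  have hσ1' : 0 < 1 - σ := by linarith
  rcases eq_or_ne p₀ ⊤ with rfl | hp₀'
  · have hη : σ * r = p₁.toReal := by
      rw [ENNReal.toReal_top, _root_.inv_zero, mul_zero, zero_add] at hrp
      have : r = p₁.toReal / σ := by
        rw [← inv_inj, hrp]; field_simp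
      rw [this]; field_simp
    have hd : 0 < (1 - σ) * r := by positivity
    obtain ⟨C₁, hC₁, h₁⟩ := upper_inf hP₁ hσ0 hr hd hη rfl
    obtain ⟨C₂, hC₂, h₂⟩ := lower_inf hP₁ hσ0 hr hd hη rfl
    refine ⟨C₁, C₂, hC₁, hC₂, fun F hF => ?_⟩
    have hi : ∀ Q, supTerm θ₀ (avgW n q F) Q ^ ((1 - σ) * r) *
        cubeTerm p₁.toReal θ₁ (avgW n q F) Q = cubeTerm r θσ (avgW n q F) Q := fun Q =>
      supTerm_interp hP₁ hd hη rfl hθσ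
    simp only [← hi]
    constructor
    · refine h₁ _ _ _ (fun s => Kfun _ _ s F) (fun Q => ?_) (fun Q => ?_) (Kfun_mono _ _ F)
        (fun s hs E => ?_)
      · rw [supTerm_eq_zero, cubeTerm_eq_zero hP₁]
      · rw [supTerm_eq_top, cubeTerm_eq_top hP₁]
      · obtain ⟨b, hb, hb1, hb2⟩ := exists_restrict (q := q) hF E
        refine (iInf_le _ b).trans ?_
        rw [LGauge_top (hF.sub hb), LGauge_fin hp₁'.ne hb, hb1, hb2, cubeTerm_indicator hP₁,
          supTerm_indicator]
    · refine h₂ _ _ _ (fun s => Kfun _ _ s F) (fun Q => ?_) (Kfun_mono _ _ F)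
        (Kfun_two_mul _ _ F) (fun s hs c hc => ?_)
      · rw [supTerm_eq_zero, cubeTerm_eq_zero hP₁]
      · obtain ⟨b, hb, hFb, hlt, hor⟩ := exists_decomp hq hs hF hc
        rw [LGauge_top hFb, LGauge_fin hp₁'.ne hb] at hlt
        exact ⟨_, _, hlt, fun Q => (hor Q).imp supTerm_le (cubeTerm_le hP₁)⟩
  · have hP₀ : 0 < p₀.toReal := ENNReal.toReal_pos hp₀.ne' hp₀'
    set η := σ * r / p₁.toReal with hηdef
    have hη : σ * r = η * p₁.toReal := by rw [hηdef]; field_simp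
    have h0 : 0 < η := by positivity
    have hone : 1 - η = (1 - σ) * r / p₀.toReal := by
      have : r * r⁻¹ = 1 := mul_inv_cancel₀ hr.ne'
      rw [hrp] at this
      rw [hηdef]
      simp only [div_eq_mul_inv]
      linear_combination -this
    have hη' : (1 - σ) * r = (1 - η) * p₀.toReal := by rw [hone]; field_simp
    have h1 : η < 1 := by
      have : 0 < 1 - η := by rw [hone]; positivity
      linarith
    obtain ⟨C₁, hC₁, h₁⟩ := upper_fin hP₀ hP₁ hσ0 hr h0 h1 hη hη'
    obtain ⟨C₂, hC₂, h₂⟩ := lower_fin hP₀ hP₁ hσ0 hr h0 h1 hη hη'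
    refine ⟨C₁, C₂, hC₁, hC₂, fun F hF => ?_⟩
    have hi : ∀ Q, cubeTerm p₀.toReal θ₀ (avgW n q F) Q ^ (1 - η) *
        cubeTerm p₁.toReal θ₁ (avgW n q F) Q ^ η = cubeTerm r θσ (avgW n q F) Q := fun Q =>
      cubeTerm_interp hP₀ hP₁ h0 h1 hη hη' hθσ
    simp only [← hi]
    constructor
    · refine h₁ _ _ _ (fun s => Kfun _ _ s F) (fun Q => ?_) (fun Q => ?_) (Kfun_mono _ _ F)
        (fun s hs E => ?_)
      · rw [cubeTerm_eq_zero hP₀, cubeTerm_eq_zero hP₁]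
      · rw [cubeTerm_eq_top hP₀, cubeTerm_eq_top hP₁]
      · obtain ⟨b, hb, hb1, hb2⟩ := exists_restrict (q := q) hF E
        refine (iInf_le _ b).trans ?_
        rw [LGauge_fin hp₀' (hF.sub hb), LGauge_fin hp₁'.ne hb, hb1, hb2, cubeTerm_indicator hP₁,
          cubeTerm_indicator hP₀]
    · refine h₂ _ _ _ (fun s => Kfun _ _ s F) (fun Q => ?_) (fun Q => ?_) (Kfun_mono _ _ F)
        (Kfun_two_mul _ _ F) (fun s hs c hc => ?_)
      · rw [cubeTerm_eq_zero hP₀, cubeTerm_eq_zero hP₁]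
      · rw [cubeTerm_eq_top hP₀, cubeTerm_eq_top hP₁]
      · obtain ⟨b, hb, hFb, hlt, hor⟩ := exists_decomp hq hs hF hc
        rw [LGauge_fin hp₀' hFb, LGauge_fin hp₁'.ne hb] at hlt
        exact ⟨_, _, hlt, fun Q => (hor Q).imp (cubeTerm_le hP₀) (cubeTerm_le hP₁)⟩

/-- Theorem: real interpolation of the spaces `L(p,θ,q)`. For
`1 ≤ q ≤ ∞`, `0 < p₀ ≤ ∞`, `0 < p₁ < ∞`, `0 < σ < 1`, `θ_σ = (1−σ)θ₀ + σθ₁` and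
`1/p_σ = (1−σ)/p₀ + σ/p₁`, the real interpolation space
`(L(p₀,θ₀,q), L(p₁,θ₁,q))_{σ,p_σ}` coincides with `L(p_σ,θ_σ,q)`, with equivalent
(quasi-)norms. -/
theorem interpolation_L (n : ℕ) (hn : 1 ≤ n) (q : ℝ≥0∞) (hq : 1 ≤ q)
    (θ₀ θ₁ : ℝ) (p₀ p₁ : ℝ≥0∞) (hp₀ : 0 < p₀) (hp₁ : 0 < p₁) (hp₁' : p₁ < ⊤)
    (σ : ℝ) (hσ0 : 0 < σ) (hσ1 : σ < 1)
    (pσ : ℝ≥0∞) (hpσ : pσ⁻¹ = ENNReal.ofReal (1 - σ) * p₀⁻¹ + ENNReal.ofReal σ * p₁⁻¹)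
    (θσ : ℝ) (hθσ : θσ = (1 - σ) * θ₀ + σ * θ₁) :
    ∃ C : ℝ≥0∞, 1 < C ∧ C < ⊤ ∧
      ∀ F : (Fin n → ℝ) × ℝ → ℂ, Measurable F →
        ((interpNorm (LGauge n p₀ θ₀ q) (LGauge n p₁ θ₁ q) σ pσ F < ⊤ ↔
            LGauge n pσ θσ q F < ⊤) ∧
          C⁻¹ * LGauge n pσ θσ q F ≤
            interpNorm (LGauge n p₀ θ₀ q) (LGauge n p₁ θ₁ q) σ pσ F ∧
          interpNorm (LGauge n p₀ θ₀ q) (LGauge n p₁ θ₁ q) σ pσ F ≤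
            C * LGauge n pσ θσ q F) := by
  have hinv_top : pσ⁻¹ ≠ ⊤ := by
    rw [hpσ]
    exact ENNReal.add_ne_top.2 ⟨ENNReal.mul_ne_top ofReal_ne_top (ENNReal.inv_ne_top.2 hp₀.ne'),
      ENNReal.mul_ne_top ofReal_ne_top (ENNReal.inv_ne_top.2 hp₁.ne')⟩
  have hinv_zero : pσ⁻¹ ≠ 0 := by
    rw [hpσ]
    have : ENNReal.ofReal σ * p₁⁻¹ ≠ 0 :=
      mul_ne_zero (by simpa using hσ0) (ENNReal.inv_ne_zero.2 hp₁'.ne)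
    simp [this]
  have hpσ0 : pσ ≠ 0 := ENNReal.inv_ne_top.1 hinv_top
  have hpσt : pσ ≠ ⊤ := ENNReal.inv_ne_zero.1 hinv_zero
  have hr : 0 < pσ.toReal := ENNReal.toReal_pos hpσ0 hpσt
  have hrp : pσ.toReal⁻¹ = (1 - σ) * p₀.toReal⁻¹ + σ * p₁.toReal⁻¹ := by
    rw [← ENNReal.toReal_inv, hpσ, ENNReal.toReal_add, ENNReal.toReal_mul, ENNReal.toReal_mul,
      ENNReal.toReal_ofReal (by linarith), ENNReal.toReal_ofReal hσ0.le, ENNReal.toReal_inv,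
      ENNReal.toReal_inv]
    · exact ENNReal.mul_ne_top ofReal_ne_top (ENNReal.inv_ne_top.2 hp₀.ne')
    · exact ENNReal.mul_ne_top ofReal_ne_top (ENNReal.inv_ne_top.2 hp₁.ne')
  obtain ⟨C₁, C₂, hC₁, hC₂, h⟩ := interp_pow n q hq θ₀ θ₁ p₀ p₁ hp₀ hp₁ hp₁' σ hσ0 hσ1
    pσ.toReal hr hrp θσ hθσ
  have hr' : 0 ≤ pσ.toReal⁻¹ := by positivity
  set C := C₁ ^ pσ.toReal⁻¹ + C₂ ^ pσ.toReal⁻¹ + 2 with hC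
  have hCtop : C < ⊤ := ENNReal.add_lt_top.2 ⟨ENNReal.add_lt_top.2
    ⟨ENNReal.rpow_lt_top_of_nonneg hr' hC₁.ne, ENNReal.rpow_lt_top_of_nonneg hr' hC₂.ne⟩,
    by simp⟩
  have hC1 : 1 < C := lt_of_lt_of_le (by norm_num) le_add_self
  refine ⟨C, hC1, hCtop, fun F hF => ?_⟩
  obtain ⟨hle, hge⟩ := h F hF
  have hup : interpNorm (LGauge n p₀ θ₀ q) (LGauge n p₁ θ₁ q) σ pσ F ≤
      C * LGauge n pσ θσ q F := by
    rw [interpNorm, if_neg hpσt, LGauge_fin hpσt hF]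
    refine (ENNReal.rpow_le_rpow hle hr').trans ?_
    rw [ENNReal.mul_rpow_of_nonneg _ _ hr']
    gcongr
    exact le_self_add.trans le_self_add
  have hlow : LGauge n pσ θσ q F ≤
      C * interpNorm (LGauge n p₀ θ₀ q) (LGauge n p₁ θ₁ q) σ pσ F := by
    rw [interpNorm, if_neg hpσt, LGauge_fin hpσt hF]
    refine (ENNReal.rpow_le_rpow hge hr').trans ?_
    rw [ENNReal.mul_rpow_of_nonneg _ _ hr']
    gcongr
    exact le_add_self.trans le_self_add
  refine ⟨⟨fun hfin => hlow.trans_lt (ENNReal.mul_lt_top hCtop hfin),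
    fun hfin => hup.trans_lt (ENNReal.mul_lt_top hCtop hfin)⟩, ?_, hup⟩
  rw [mul_comm, ← div_eq_mul_inv]
  exact ENNReal.div_le_of_le_mul' hlow

end
end

section
/- Let 1 ≤ p < ∞ and 0 < θ < 1, let f : ℝ^n → ℂ be locally integrable with ‖f‖_{Ḃ^{p,p}_θ(ℝ^n)} < ∞, let x₀ ∈ ℝ^n, and fix K > 0. For R > 0 let c̃_R = ⨍_{Δ(x₀,2R)∖Δ(x₀,R)} f. Then for every ε > 0 there exists R₀ > 0 such that for every R > R₀ and every Lipschitz function ξ_R : ℝ^n → ℝ with ξ_R = 1 on Δ(x₀,R), ξ_R = 0 outside Δ(x₀,2R), and |∇ξ_R| ≤ K/R almost everywhere, one has ‖f − (f − c̃_R)ξ_R‖_{Ḃ^{p,p}_θ(ℝ^n)} < ε. -/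
/-!
Put `η = 1 - ξ`. The function `f - (f - c) ξ` differs from `(f - c) η` by the constant `c`, so both
have the same Besov seminorm. The increments of the latter split as
`η x (f x - f y) + (f y - c) (η x - η y)`. Since `η` vanishes on the ball of radius `R`, the first
term only sees the Besov energy of `f` at points outside that ball.

For the second term, Jensen's inequality bounds `|f y - c| ^ p` by the average of `|f y - f z| ^ p`
over `z` in the annulus `A` on which `c` is the mean of `f` (`enorm_sub_average_rpow_le`). The
remaining factor `W y / |A|`, with `W y = ∫ |η x - η y| ^ p / |x - y| ^ (n + p θ) dx`, is at most a
constant times `|z - y| ^ (-n - p θ)` for all `z` in `A`, uniformly in `R`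
(`cutoffEnergy_mul_le`). So the second term is again bounded by the energy of `f` at the points of
`A`, which lie outside the ball of radius `R`.

Thus the whole energy is at most a constant times the tail of a convergent integral
(`lintegral_besovKernel_mul_le`), and that tail tends to zero (`exists_besov_tail_lt`).
-/

open MeasureTheory ENNReal Metric

noncomputable section

/-- The homogeneous Besov seminorm `‖f‖_{Ḃ^{p,p}_θ(ℝ^n)}`, valued in `ℝ≥0∞`:
`(∫_{ℝ^n} ∫_{ℝ^n} |f x − f y|^p / |x−y|^{n+pθ} dx dy)^{1/p}`. -/
def besovNorm (n : ℕ) (p θ : ℝ) (f : EuclideanSpace ℝ (Fin n) → ℂ) : ℝ≥0∞ :=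
  (∫⁻ x, ∫⁻ y, ENNReal.ofReal ‖f x - f y‖ ^ p / ENNReal.ofReal (dist x y) ^ ((n : ℝ) + p * θ)) ^ p⁻¹

/-! ### Energy of a Lipschitz cutoff -/

/-- The radial profile bounding the scaled kernel of a cutoff. Near the origin it behaves like
`r ^ (p * (1 - θ) - n)`, integrable since `θ < 1`; at infinity like `r ^ (-n - p * θ)`, integrable
since `0 < θ`. -/
lemma radial_integrable {n : ℕ} (hn : 1 ≤ n) {p θ K M : ℝ} (hp : 1 ≤ p) (hθ0 : 0 < θ)
    (hθ1 : θ < 1) (hK : 0 < K) (hM : 0 < M) :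
    Integrable (fun u : EuclideanSpace ℝ (Fin n) =>
      (min (K * ‖u‖) M) ^ p * ‖u‖ ^ (-((n : ℝ) + p * θ))) volume := by
  have : Nonempty (Fin n) := ⟨⟨0, hn⟩⟩
  have hp0 : 0 < p := by linarith
  rw [integrable_fun_norm_addHaar volume
    (f := fun r : ℝ => (min (K * r) M) ^ p * r ^ (-((n : ℝ) + p * θ)))]
  simp only [finrank_euclideanSpace, Fintype.card_fin, smul_eq_mul]
  have hmeas : Measurable (fun r : ℝ =>
      r ^ (n - 1) * ((min (K * r) M) ^ p * r ^ (-((n : ℝ) + p * θ)))) := by fun_prop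
  have hpow : ∀ r : ℝ, 0 < r → r ^ (n - 1) = r ^ ((n : ℝ) - 1) := by
    intro r hr
    rw [← Real.rpow_natCast, Nat.cast_sub hn, Nat.cast_one]
  rw [← Set.Ioo_union_Ici_eq_Ioi (zero_lt_one : (0 : ℝ) < 1), integrableOn_union]
  constructor
  · have h1 : IntegrableOn (fun r : ℝ => K ^ p * r ^ (p * (1 - θ) - 1)) (Set.Ioo 0 1) := by
      refine Integrable.const_mul ?_ _
      refine (intervalIntegral.integrableOn_Ioo_rpow_iff zero_lt_one).2 ?_
      have : 0 < p * (1 - θ) := by apply mul_pos hp0; linarith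
      linarith
    refine Integrable.mono' h1 hmeas.aestronglyMeasurable ?_
    refine (ae_restrict_iff' measurableSet_Ioo).2 (.of_forall fun r hr => ?_)
    have hr0 : 0 < r := hr.1
    have hmin : 0 ≤ min (K * r) M := le_min (by positivity) hM.le
    rw [Real.norm_of_nonneg (by positivity), hpow r hr0]
    calc r ^ ((n : ℝ) - 1) * (min (K * r) M ^ p * r ^ (-((n : ℝ) + p * θ)))
        ≤ r ^ ((n : ℝ) - 1) * ((K * r) ^ p * r ^ (-((n : ℝ) + p * θ))) := by
          gcongr
          exact min_le_left _ _
      _ = K ^ p * (r ^ ((n : ℝ) - 1) * r ^ p * r ^ (-((n : ℝ) + p * θ))) := by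
          rw [Real.mul_rpow hK.le hr0.le]; ring
      _ = K ^ p * r ^ (p * (1 - θ) - 1) := by
          rw [← Real.rpow_add hr0, ← Real.rpow_add hr0]
          congr 2; ring
  · rw [integrableOn_Ici_iff_integrableOn_Ioi]
    have h1 : IntegrableOn (fun r : ℝ => M ^ p * r ^ (-1 - p * θ)) (Set.Ioi 1) := by
      refine Integrable.const_mul ?_ _
      refine integrableOn_Ioi_rpow_of_lt ?_ zero_lt_one
      have : 0 < p * θ := by positivity
      linarith
    refine Integrable.mono' h1 hmeas.aestronglyMeasurable ?_
    refine (ae_restrict_iff' measurableSet_Ioi).2 (.of_forall fun r hr => ?_)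
    have hr0 : 0 < r := lt_trans zero_lt_one hr
    have hmin : 0 ≤ min (K * r) M := le_min (by positivity) hM.le
    rw [Real.norm_of_nonneg (by positivity), hpow r hr0]
    calc r ^ ((n : ℝ) - 1) * (min (K * r) M ^ p * r ^ (-((n : ℝ) + p * θ)))
        ≤ r ^ ((n : ℝ) - 1) * (M ^ p * r ^ (-((n : ℝ) + p * θ))) := by
          gcongr
          exact min_le_right _ _
      _ = M ^ p * (r ^ ((n : ℝ) - 1) * r ^ (-((n : ℝ) + p * θ))) := by ring
      _ = M ^ p * r ^ (-1 - p * θ) := by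
          rw [← Real.rpow_add hr0]
          congr 2; ring

/-- The part of the Besov energy of `η` carried by the point `y`: the inner integral
`∫ |η x - η y| ^ p / |x - y| ^ (n + p θ) dx`. -/
def cutoffEnergy {n : ℕ} (p θ : ℝ) (η : EuclideanSpace ℝ (Fin n) → ℝ)
    (y : EuclideanSpace ℝ (Fin n)) : ℝ≥0∞ :=
  ∫⁻ x, ‖η x - η y‖ₑ ^ p / edist x y ^ ((n : ℝ) + p * θ)

/-- A bounded function with Lipschitz constant `K / R` has energy at most a constant times
`R ^ (-p θ)` at every point, by rescaling to `R = 1`. -/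
lemma cutoffEnergy_le {n : ℕ} (hn : 1 ≤ n) {p θ K M : ℝ} (hp : 1 ≤ p) (hθ0 : 0 < θ)
    (hθ1 : θ < 1) (hK : 0 < K) (hM : 0 < M) :
    ∃ C : ℝ≥0∞, C ≠ ⊤ ∧ ∀ R : ℝ, 0 < R → ∀ η : EuclideanSpace ℝ (Fin n) → ℝ,
      LipschitzWith (Real.toNNReal (K / R)) η → (∀ x y, |η x - η y| ≤ M) →
      ∀ y, cutoffEnergy p θ η y ≤ C * ENNReal.ofReal (R ^ (-(p * θ))) := by
  have hp0 : 0 < p := by linarith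
  have hint := radial_integrable hn hp hθ0 hθ1 hK hM
  set φ : EuclideanSpace ℝ (Fin n) → ℝ :=
    fun u => (min (K * ‖u‖) M) ^ p * ‖u‖ ^ (-((n : ℝ) + p * θ)) with hφ
  refine ⟨∫⁻ u, ENNReal.ofReal (φ u), ?_, ?_⟩
  · exact hint.lintegral_lt_top.ne
  intro R hR η hη hηM y
  have hpt : ∀ x, ‖η x - η y‖ₑ ^ p / edist x y ^ ((n : ℝ) + p * θ) ≤
      ENNReal.ofReal (R ^ (-((n : ℝ) + p * θ))) * ENNReal.ofReal (φ (R⁻¹ • (x - y))) := by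
    intro x
    rcases eq_or_ne x y with rfl | hxy
    · simp [ENNReal.zero_rpow_of_pos hp0]
    have hd : 0 < dist x y := dist_pos.2 hxy
    have hlip : |η x - η y| ≤ K / R * dist x y := by
      have := hη.dist_le_mul x y
      rwa [Real.coe_toNNReal _ (by positivity), Real.dist_eq] at this
    have hnorm : ‖R⁻¹ • (x - y)‖ = R⁻¹ * dist x y := by
      rw [norm_smul, Real.norm_of_nonneg (by positivity), dist_eq_norm]
    rw [edist_dist, ← ofReal_norm, Real.norm_eq_abs,
      ENNReal.ofReal_rpow_of_nonneg (abs_nonneg _) hp0.le, ENNReal.ofReal_rpow_of_pos hd,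
      ← ENNReal.ofReal_div_of_pos (by positivity), ← ENNReal.ofReal_mul (by positivity)]
    apply ENNReal.ofReal_le_ofReal
    rw [hφ]
    simp only [hnorm]
    rw [Real.mul_rpow (by positivity) hd.le, Real.rpow_neg (by positivity : 0 ≤ R⁻¹),
      Real.inv_rpow hR.le, inv_inv, Real.rpow_neg hR.le, Real.rpow_neg hd.le]
    have hRd : R ^ ((n : ℝ) + p * θ) ≠ 0 := by positivity
    have : |η x - η y| ^ p ≤ (min (K * (R⁻¹ * dist x y)) M) ^ p := by
      gcongr
      refine le_min ?_ (hηM x y)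
      calc _ ≤ _ := hlip
        _ = _ := by field_simp
    calc _ ≤ (min (K * (R⁻¹ * dist x y)) M) ^ p / dist x y ^ ((n : ℝ) + p * θ) := by gcongr
      _ = _ := by field_simp
  calc cutoffEnergy p θ η y
      ≤ ∫⁻ x, ENNReal.ofReal (R ^ (-((n : ℝ) + p * θ))) *
          ENNReal.ofReal (φ (R⁻¹ • (x - y))) := lintegral_mono hpt
    _ = ENNReal.ofReal (R ^ (-((n : ℝ) + p * θ))) * ∫⁻ x, ENNReal.ofReal (φ (R⁻¹ • x)) := by
        rw [lintegral_const_mul' _ _ ofReal_ne_top,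
          lintegral_sub_right_eq_self (fun x => ENNReal.ofReal (φ (R⁻¹ • x))) y]
    _ = ENNReal.ofReal (R ^ (-((n : ℝ) + p * θ))) *
          (ENNReal.ofReal (R ^ n) * ∫⁻ u, ENNReal.ofReal (φ u)) := by
        have hm : Measurable (fun u => ENNReal.ofReal (φ u)) := by
          rw [hφ]; fun_prop
        rw [← lintegral_map hm (measurable_const_smul R⁻¹),
          Measure.map_addHaar_smul _ (inv_ne_zero hR.ne'), lintegral_smul_measure]
        simp [abs_of_pos hR]
    _ = _ := by
        rw [← mul_assoc, ← ENNReal.ofReal_mul (by positivity), mul_comm, ← Real.rpow_natCast R n,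
          ← Real.rpow_add hR]
        congr 3; ring

/-- This fails for `n = 0`, where the annulus is empty. -/
lemma volume_annulus_ge {n : ℕ} (hn : 1 ≤ n) (x₀ : EuclideanSpace ℝ (Fin n)) {R : ℝ} (hR : 0 < R) :
    volume (ball x₀ R) ≤ volume (ball x₀ (2 * R) \ ball x₀ R) := by
  rw [measure_sdiff (ball_subset_ball (by linarith)) measurableSet_ball.nullMeasurableSet
    measure_ball_lt_top.ne]
  refine ENNReal.le_sub_of_add_le_left measure_ball_lt_top.ne ?_
  rw [Measure.addHaar_ball_mul_of_pos _ _ two_pos R, Measure.addHaar_ball_center _ x₀, ← two_mul]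
  gcongr
  calc (2 : ℝ≥0∞) = ENNReal.ofReal 2 := by simp
    _ ≤ _ := by
      apply ENNReal.ofReal_le_ofReal
      rw [finrank_euclideanSpace, Fintype.card_fin]
      exact le_self_pow₀ (by norm_num) (by omega)

/-- The energy of a cutoff at `y`, divided by the volume of the annulus, is at most a constant times
`|z - y| ^ (-n - p θ)` for every `z` in the ball of radius `2 R`. For `y` within `4 R` of `x₀` this
is the scaling bound `cutoffEnergy_le`; for the other `y` only points `x` of the ball of
radius `2 R` contribute, and for these `|z - y| ≤ 3 |x - y|`. -/
lemma cutoffEnergy_mul_le {n : ℕ} (hn : 1 ≤ n) {p θ K M : ℝ} (hp : 1 ≤ p) (hθ0 : 0 < θ)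
    (hθ1 : θ < 1) (hK : 0 < K) (hM : 0 < M) (x₀ : EuclideanSpace ℝ (Fin n)) :
    ∃ C : ℝ≥0∞, C ≠ ⊤ ∧ ∀ R : ℝ, 0 < R → ∀ η : EuclideanSpace ℝ (Fin n) → ℝ,
      LipschitzWith (Real.toNNReal (K / R)) η → (∀ x y, |η x - η y| ≤ M) →
      (∀ x, x ∉ ball x₀ (2 * R) → η x = 1) →
      ∀ y, ∀ z ∈ ball x₀ (2 * R), cutoffEnergy p θ η y * edist z y ^ ((n : ℝ) + p * θ) ≤
        C * volume (ball x₀ (2 * R) \ ball x₀ R) := by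
  have hp0 : 0 < p := by linarith
  obtain ⟨C, hC, hCW⟩ := cutoffEnergy_le (n := n) hn hp hθ0 hθ1 hK hM
  set d : ℝ := (n : ℝ) + p * θ with hd
  have hd0 : 0 < d := by positivity
  set ω : ℝ≥0∞ := volume (ball (0 : EuclideanSpace ℝ (Fin n)) 1) with hω
  have hω0 : ω ≠ 0 := (measure_ball_pos _ _ one_pos).ne'
  have hωt : ω ≠ ⊤ := measure_ball_lt_top.ne
  -- `C₁` serves the points `y` within `4 R` of `x₀`, and `C₂` the remaining ones
  set C₁ : ℝ≥0∞ := C * ENNReal.ofReal (6 ^ d) / ω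
  set C₂ : ℝ≥0∞ := ENNReal.ofReal (M ^ p * 3 ^ d) * ENNReal.ofReal (2 ^ n)
  have hvol : ∀ R : ℝ, 0 < R → volume (ball x₀ R) = ENNReal.ofReal (R ^ n) * ω := by
    intro R hR
    rw [Measure.addHaar_ball_of_pos _ _ hR, finrank_euclideanSpace, Fintype.card_fin]
  refine ⟨C₁ + C₂, ?_, ?_⟩
  · refine ENNReal.add_ne_top.2 ⟨ENNReal.div_ne_top (ENNReal.mul_ne_top hC ofReal_ne_top) hω0,
      ENNReal.mul_ne_top ofReal_ne_top ofReal_ne_top⟩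
  intro R hR η hη hηM hη1 y z hz
  refine le_trans ?_ (mul_le_mul_right (volume_annulus_ge hn x₀ hR) _)
  rw [add_mul]
  by_cases hy : y ∈ ball x₀ (4 * R)
  · refine le_trans ?_ le_self_add
    have hzy : dist z y ≤ 6 * R := by
      have := dist_triangle_right z y x₀
      rw [mem_ball] at hz hy
      linarith
    calc _ ≤ (C * ENNReal.ofReal (R ^ (-(p * θ)))) * ENNReal.ofReal (6 * R) ^ d := by
          gcongr
          · exact hCW R hR η hη hηM y
          · rw [edist_dist]; exact ENNReal.ofReal_le_ofReal hzy
      _ = C * ENNReal.ofReal (6 ^ d) * ENNReal.ofReal (R ^ n) := by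
          rw [ENNReal.ofReal_rpow_of_pos (by positivity), mul_assoc, mul_assoc,
            ← ENNReal.ofReal_mul (by positivity), ← ENNReal.ofReal_mul (by positivity)]
          congr 2
          rw [Real.mul_rpow (by norm_num) hR.le, mul_left_comm, ← Real.rpow_add hR,
            ← Real.rpow_natCast R n]
          congr 2
          rw [hd]; ring
      _ = _ := by
          rw [hvol R hR]
          simp only [C₁]
          rw [mul_comm (ENNReal.ofReal (R ^ n)), ← mul_assoc, ENNReal.div_mul_cancel hω0 hωt]
  · refine le_trans ?_ le_add_self
    have hy' : 4 * R ≤ dist y x₀ := by simpa [mem_ball] using hy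
    have hηy : η y = 1 := hη1 y (by rw [mem_ball]; linarith)
    have hpt : ∀ x, ‖η x - η y‖ₑ ^ p / edist x y ^ d * edist z y ^ d ≤
        (ball x₀ (2 * R)).indicator (fun _ => ENNReal.ofReal (M ^ p * 3 ^ d)) x := by
      intro x
      by_cases hx : x ∈ ball x₀ (2 * R)
      · rw [Set.indicator_of_mem hx]
        have hx' := hx
        rw [mem_ball] at hx' hz
        have h1 : 2 * R ≤ dist x y := by
          have := dist_triangle_left y x₀ x
          linarith
        have h2 : dist z y ≤ 3 * dist x y := by
          have := dist_triangle z x₀ y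
          have := dist_triangle_left x₀ y x
          linarith
        have hd0' : 0 < dist x y := by linarith
        rw [edist_dist, edist_dist, ← ofReal_norm, Real.norm_eq_abs,
          ENNReal.ofReal_rpow_of_nonneg (abs_nonneg _) hp0.le, ENNReal.ofReal_rpow_of_pos hd0',
          ENNReal.ofReal_rpow_of_nonneg dist_nonneg hd0.le,
          ← ENNReal.ofReal_div_of_pos (by positivity), ← ENNReal.ofReal_mul (by positivity)]
        apply ENNReal.ofReal_le_ofReal
        have h3 : dist z y ^ d ≤ 3 ^ d * dist x y ^ d := by
          rw [← Real.mul_rpow (by norm_num) hd0'.le]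
          gcongr
        calc _ ≤ M ^ p / dist x y ^ d * (3 ^ d * dist x y ^ d) := by
              gcongr
              exact hηM x y
          _ = _ := by field_simp
      · simp [hη1 x hx, hηy, ENNReal.zero_rpow_of_pos hp0]
    have hne : edist z y ^ d ≠ ⊤ := ENNReal.rpow_ne_top_of_nonneg hd0.le (edist_ne_top _ _)
    calc cutoffEnergy p θ η y * edist z y ^ d
        = ∫⁻ x, ‖η x - η y‖ₑ ^ p / edist x y ^ d * edist z y ^ d := by
          rw [lintegral_mul_const' _ _ hne, cutoffEnergy]
      _ ≤ ∫⁻ x, (ball x₀ (2 * R)).indicator (fun _ => ENNReal.ofReal (M ^ p * 3 ^ d)) x :=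
          lintegral_mono hpt
      _ = ENNReal.ofReal (M ^ p * 3 ^ d) * volume (ball x₀ (2 * R)) := by
          rw [lintegral_indicator measurableSet_ball, setLIntegral_const]
      _ = _ := by
          rw [hvol R hR, hvol (2 * R) (by positivity), mul_pow,
            ENNReal.ofReal_mul (p := 2 ^ n) (by positivity)]
          simp only [C₂]
          ring

/-! ### The Besov kernel and its tail -/

/-- Jensen's inequality for the distance from `a` to the average of `f` over `A`. -/
lemma enorm_sub_average_rpow_le {n : ℕ} {p : ℝ} (hp : 1 ≤ p)
    {f : EuclideanSpace ℝ (Fin n) → ℂ} {A : Set (EuclideanSpace ℝ (Fin n))}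
    (hA0 : volume A ≠ 0) (hAt : volume A ≠ ⊤) (hf : IntegrableOn f A volume) (a : ℂ) :
    ‖a - ⨍ z in A, f z‖ₑ ^ p ≤ (volume A)⁻¹ * ∫⁻ z in A, ‖f z - a‖ₑ ^ p := by
  have hp0 : 0 < p := by linarith
  rw [setAverage_eq']
  set ν : Measure (EuclideanSpace ℝ (Fin n)) := (volume A)⁻¹ • volume.restrict A with hν
  have hprob : IsProbabilityMeasure ν :=
    ⟨by simp [hν, ENNReal.inv_mul_cancel hA0 hAt]⟩
  have hfν : Integrable f ν := hf.smul_measure (ENNReal.inv_ne_top.2 hA0)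
  have h1 : a - ∫ z, f z ∂ν = -∫ z, (f z - a) ∂ν := by
    rw [integral_sub hfν (integrable_const _)]
    simp
  have h2 : ‖a - ∫ z, f z ∂ν‖ₑ ≤ ∫⁻ z, ‖f z - a‖ₑ ∂ν := by
    rw [h1, enorm_neg]
    exact enorm_integral_le_lintegral_enorm _
  have h3 := eLpNorm'_le_eLpNorm'_of_exponent_le (f := fun z => f z - a) zero_lt_one hp ν
    (hfν.aestronglyMeasurable.sub aestronglyMeasurable_const)
  simp only [eLpNorm', ENNReal.rpow_one, div_one] at h3
  calc ‖a - ∫ z, f z ∂ν‖ₑ ^ p ≤ ((∫⁻ z, ‖f z - a‖ₑ ^ p ∂ν) ^ (1 / p)) ^ p := by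
        gcongr
        exact h2.trans h3
    _ = ∫⁻ z, ‖f z - a‖ₑ ^ p ∂ν := by
        rw [← ENNReal.rpow_mul, one_div_mul_cancel hp0.ne', ENNReal.rpow_one]
    _ = _ := by rw [hν, lintegral_smul_measure, smul_eq_mul]

/-- The integrand `|f x - f y| ^ p / |x - y| ^ (n + p θ)` of the Besov seminorm. On the diagonal it
takes the value `0` (as `0 / 0 = 0`) when `p` and `n + p θ` are positive. -/
def besovKernel {n : ℕ} (p θ : ℝ) (f : EuclideanSpace ℝ (Fin n) → ℂ)
    (x y : EuclideanSpace ℝ (Fin n)) : ℝ≥0∞ :=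
  ‖f x - f y‖ₑ ^ p / edist x y ^ ((n : ℝ) + p * θ)

lemma besovNorm_eq (n : ℕ) (p θ : ℝ) (f : EuclideanSpace ℝ (Fin n) → ℂ) :
    besovNorm n p θ f = (∫⁻ x, ∫⁻ y, besovKernel p θ f x y) ^ p⁻¹ := by
  simp only [besovNorm, besovKernel, ofReal_norm, edist_dist]

lemma aemeasurable_besovKernel {n : ℕ} (p θ : ℝ) {f : EuclideanSpace ℝ (Fin n) → ℂ}
    (hf : AEStronglyMeasurable f volume) :
    AEMeasurable (Function.uncurry (besovKernel p θ f)) (volume.prod volume) := by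
  have h1 : AEMeasurable (fun q : EuclideanSpace ℝ (Fin n) × EuclideanSpace ℝ (Fin n) =>
      ‖f q.1 - f q.2‖ₑ) (volume.prod volume) :=
    (hf.comp_fst.sub hf.comp_snd).enorm
  have h2 : Measurable (fun q : EuclideanSpace ℝ (Fin n) × EuclideanSpace ℝ (Fin n) =>
      edist q.1 q.2) := measurable_edist
  exact (h1.pow_const p).div (h2.pow_const _).aemeasurable

/-- The Besov energy of `f` carried by the points outside a large ball is small: it is the measure
of the complement of the ball for the finite measure whose density is the inner integral. -/
lemma exists_besov_tail_lt {n : ℕ} (p θ : ℝ) {f : EuclideanSpace ℝ (Fin n) → ℂ}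
    (hfin : ∫⁻ x, ∫⁻ y, besovKernel p θ f x y ≠ ⊤) (x₀ : EuclideanSpace ℝ (Fin n))
    {δ : ℝ≥0∞} (hδ : 0 < δ) :
    ∃ R₀ : ℝ, 0 < R₀ ∧ ∀ R : ℝ, R₀ < R →
      ∫⁻ x in (ball x₀ R)ᶜ, ∫⁻ y, besovKernel p θ f x y < δ := by
  set G : EuclideanSpace ℝ (Fin n) → ℝ≥0∞ := fun x => ∫⁻ y, besovKernel p θ f x y
  set ν := volume.withDensity G with hν
  have hms : ∀ r : ℝ, MeasurableSet (ball x₀ r)ᶜ := fun r => measurableSet_ball.compl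
  have hanti : Antitone (fun r : ℝ => (ball x₀ r)ᶜ) := fun r s hrs =>
    Set.compl_subset_compl.2 (ball_subset_ball hrs)
  have hempty : ⋂ r : ℝ, (ball x₀ r)ᶜ = ∅ := by
    refine Set.eq_empty_of_forall_notMem fun x hx => ?_
    have := Set.mem_iInter.1 hx (dist x x₀ + 1)
    simp [mem_ball] at this
  have ht := tendsto_measure_iInter_atTop (μ := ν) (fun r => (hms r).nullMeasurableSet) hanti
    ⟨0, ne_top_of_le_ne_top (b := ν Set.univ)
      (by rwa [hν, withDensity_apply _ MeasurableSet.univ, setLIntegral_univ])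
      (measure_mono (Set.subset_univ _))⟩
  rw [hempty, measure_empty] at ht
  obtain ⟨R₀, hR₀⟩ := Filter.eventually_atTop.1 (ht.eventually_lt_const hδ)
  refine ⟨max R₀ 1, by positivity, fun R hR => ?_⟩
  have := hR₀ R ((le_max_left _ _).trans hR.le)
  simpa [hν, withDensity_apply _ (hms R)] using this

/-! ### Energy of a truncated function -/

/-- With `c` the average of `f` over the annulus and `η` a bounded function with Lipschitz constant
`K / R`, vanishing on the ball of radius `R` and equal to `1` off the ball of radius `2 R`, the Besov energy of `(f - c) η` is at most a
constant, independent of `R`, times the tail of the Besov energy of `f` outside the ball of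
radius `R`. -/
lemma lintegral_besovKernel_mul_le {n : ℕ} (hn : 1 ≤ n) {p θ K M : ℝ} (hp : 1 ≤ p) (hθ0 : 0 < θ)
    (hθ1 : θ < 1) (hK : 0 < K) (hM : 0 < M) {f : EuclideanSpace ℝ (Fin n) → ℂ}
    (hf : LocallyIntegrable f volume) (x₀ : EuclideanSpace ℝ (Fin n)) :
    ∃ C : ℝ≥0∞, C ≠ ⊤ ∧ ∀ R : ℝ, 0 < R → ∀ η : EuclideanSpace ℝ (Fin n) → ℝ,
      LipschitzWith (Real.toNNReal (K / R)) η → (∀ x, |η x| ≤ M) →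
      (∀ x ∈ ball x₀ R, η x = 0) → (∀ x, x ∉ ball x₀ (2 * R) → η x = 1) →
      ∫⁻ x, ∫⁻ y, besovKernel p θ
          (fun x => (f x - ⨍ z in ball x₀ (2 * R) \ ball x₀ R, f z) * (η x : ℂ)) x y ≤
        C * ∫⁻ x in (ball x₀ R)ᶜ, ∫⁻ y, besovKernel p θ f x y := by
  have hp0 : 0 < p := by linarith
  obtain ⟨C, hC, hCW⟩ := cutoffEnergy_mul_le (n := n) (M := 2 * M) hn hp hθ0 hθ1 hK
    (by positivity) x₀
  set d : ℝ := (n : ℝ) + p * θ with hd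
  have hd0 : 0 < d := by positivity
  refine ⟨(2 : ℝ≥0∞) ^ (p - 1) * (ENNReal.ofReal M ^ p + C), ?_, ?_⟩
  · refine ENNReal.mul_ne_top (ENNReal.rpow_ne_top_of_nonneg (by linarith) (by simp)) ?_
    exact ENNReal.add_ne_top.2 ⟨ENNReal.rpow_ne_top_of_nonneg hp0.le ofReal_ne_top, hC⟩
  intro R hR η hη hηM hη0 hη1
  set A := ball x₀ (2 * R) \ ball x₀ R with hAdef
  set c : ℂ := ⨍ z in A, f z with hc
  set T := ∫⁻ x in (ball x₀ R)ᶜ, ∫⁻ y, besovKernel p θ f x y with hT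
  have hAm : MeasurableSet A := measurableSet_ball.diff measurableSet_ball
  have hA0 : volume A ≠ 0 :=
    ((measure_ball_pos volume x₀ hR).trans_le (volume_annulus_ge hn x₀ hR)).ne'
  have hAt : volume A ≠ ⊤ := ((measure_mono Set.sdiff_subset).trans_lt measure_ball_lt_top).ne
  have hfA : IntegrableOn f A volume :=
    (hf.integrableOn_isCompact (isCompact_closedBall x₀ (2 * R))).mono_set
      (Set.sdiff_subset.trans ball_subset_closedBall)
  have hfm : AEStronglyMeasurable f volume := hf.aestronglyMeasurable
  have hηc : Measurable η := hη.continuous.measurable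
  -- `P` and `Q` bound the two terms of
  -- `η x * (f x - f y) + (f y - c) * (η x - η y)`, the increment of `(f - c) * η`
  set Q : EuclideanSpace ℝ (Fin n) → EuclideanSpace ℝ (Fin n) → ℝ≥0∞ := fun x y =>
    ‖f y - c‖ₑ ^ p * (‖η x - η y‖ₑ ^ p / edist x y ^ d) with hQ
  have hQm : AEMeasurable (Function.uncurry Q) (volume.prod volume) := by
    have h1 : AEMeasurable (fun q : EuclideanSpace ℝ (Fin n) × EuclideanSpace ℝ (Fin n) =>
        ‖f q.2 - c‖ₑ) (volume.prod volume) :=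
      (hfm.comp_snd.sub aestronglyMeasurable_const).enorm
    have h2 : Measurable (fun q : EuclideanSpace ℝ (Fin n) × EuclideanSpace ℝ (Fin n) =>
        ‖η q.1 - η q.2‖ₑ ^ p / edist q.1 q.2 ^ d) := by fun_prop
    exact (h1.pow_const p).mul h2.aemeasurable
  set P : EuclideanSpace ℝ (Fin n) → EuclideanSpace ℝ (Fin n) → ℝ≥0∞ := fun x y =>
    ‖η x‖ₑ ^ p * besovKernel p θ f x y with hP
  have hPm : AEMeasurable (Function.uncurry P) (volume.prod volume) := by
    have h2 : Measurable (fun q : EuclideanSpace ℝ (Fin n) × EuclideanSpace ℝ (Fin n) =>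
        ‖η q.1‖ₑ ^ p) := by fun_prop
    exact h2.aemeasurable.mul (aemeasurable_besovKernel p θ hfm)
  have hpt : ∀ x y, besovKernel p θ (fun x => (f x - c) * (η x : ℂ)) x y ≤
      (2 : ℝ≥0∞) ^ (p - 1) * (P x y + Q x y) := by
    intro x y
    have hsplit : (f x - c) * (η x : ℂ) - (f y - c) * (η y : ℂ) =
        (η x : ℂ) * (f x - f y) + (f y - c) * ((η x - η y : ℝ) : ℂ) := by
      push_cast; ring
    have hen : ∀ t : ℝ, ‖(t : ℂ)‖ₑ = ‖t‖ₑ := fun t => by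
      rw [← ofReal_norm, ← ofReal_norm, Complex.norm_real]
    calc besovKernel p θ (fun x => (f x - c) * (η x : ℂ)) x y
        ≤ ((2 : ℝ≥0∞) ^ (p - 1) * ((‖η x‖ₑ * ‖f x - f y‖ₑ) ^ p +
            (‖f y - c‖ₑ * ‖η x - η y‖ₑ) ^ p)) / edist x y ^ d := by
          rw [besovKernel, hsplit]
          gcongr
          refine le_trans ?_ (ENNReal.rpow_add_le_mul_rpow_add_rpow _ _ hp)
          gcongr
          refine (enorm_add_le _ _).trans_eq ?_
          rw [enorm_mul, enorm_mul, hen, hen]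
      _ = _ := by
          rw [ENNReal.mul_rpow_of_nonneg _ _ hp0.le, ENNReal.mul_rpow_of_nonneg _ _ hp0.le]
          simp only [hP, hQ, besovKernel, div_eq_mul_inv, ← hd]
          ring
  have hPle : ∫⁻ x, ∫⁻ y, P x y ≤ ENNReal.ofReal M ^ p * T := by
    rw [hT, ← lintegral_const_mul' _ _ (ENNReal.rpow_ne_top_of_nonneg hp0.le ofReal_ne_top),
      ← lintegral_indicator measurableSet_ball.compl]
    refine lintegral_mono fun x => ?_
    have hx : ∫⁻ y, P x y = ‖η x‖ₑ ^ p * ∫⁻ y, besovKernel p θ f x y :=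
      lintegral_const_mul' _ _ (ENNReal.rpow_ne_top_of_nonneg hp0.le enorm_ne_top)
    rw [hx]
    by_cases hxR : x ∈ ball x₀ R
    · simp [hη0 x hxR, ENNReal.zero_rpow_of_pos hp0]
    · rw [Set.indicator_of_mem (by exact hxR)]
      gcongr
      rw [← ofReal_norm]
      exact ENNReal.ofReal_le_ofReal (hηM x)
  have hQle : ∫⁻ x, ∫⁻ y, Q x y ≤ C * T := by
    rw [lintegral_lintegral_swap hQm]
    -- the Poincaré step: `f y - c` is averaged over the annulus, which avoids the ball
    -- of radius `R`, and the cutoff energy is traded for the Besov kernel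
    have hy : ∀ y, ∫⁻ x, Q x y ≤ C * ∫⁻ z in A, besovKernel p θ f z y := by
      intro y
      have hW : ∫⁻ x, Q x y = ‖f y - c‖ₑ ^ p * cutoffEnergy p θ η y :=
        lintegral_const_mul' _ _ (ENNReal.rpow_ne_top_of_nonneg hp0.le enorm_ne_top)
      have hWz : ∀ z ∈ A, cutoffEnergy p θ η y * edist z y ^ d ≤ C * volume A := fun z hz =>
        hCW R hR η hη (fun x y => (abs_sub _ _).trans (by linarith [hηM x, hηM y])) hη1 y z hz.1
      rw [hW, ← lintegral_const_mul' _ _ hC]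
      calc ‖f y - c‖ₑ ^ p * cutoffEnergy p θ η y
          ≤ ((volume A)⁻¹ * ∫⁻ z in A, ‖f z - f y‖ₑ ^ p) * cutoffEnergy p θ η y := by
            gcongr
            exact enorm_sub_average_rpow_le hp hA0 hAt hfA (f y)
        _ = (∫⁻ z in A, ‖f z - f y‖ₑ ^ p) * ((volume A)⁻¹ * cutoffEnergy p θ η y) := by ring
        _ ≤ ∫⁻ z in A, ‖f z - f y‖ₑ ^ p * ((volume A)⁻¹ * cutoffEnergy p θ η y) :=
            lintegral_mul_const_le _ _
        _ ≤ ∫⁻ z in A, C * besovKernel p θ f z y := by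
            refine setLIntegral_mono' hAm fun z hz => ?_
            rcases eq_or_ne z y with rfl | hzy
            · simp [ENNReal.zero_rpow_of_pos hp0]
            have he0 : edist z y ^ d ≠ 0 := by
              simp [ENNReal.rpow_eq_zero_iff, hzy, edist_ne_top]
            have het : edist z y ^ d ≠ ⊤ := ENNReal.rpow_ne_top_of_nonneg hd0.le (edist_ne_top _ _)
            rw [besovKernel, ← mul_div_assoc, mul_comm C, mul_div_assoc]
            gcongr
            rw [ENNReal.le_div_iff_mul_le (.inl he0) (.inl het), mul_assoc]
            calc _ ≤ (volume A)⁻¹ * (C * volume A) := by gcongr _ * ?_; exact hWz z hz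
              _ = C := by
                rw [mul_left_comm, ENNReal.inv_mul_cancel hA0 hAt, mul_one]
    calc ∫⁻ y, ∫⁻ x, Q x y ≤ ∫⁻ y, C * ∫⁻ z in A, besovKernel p θ f z y := lintegral_mono hy
      _ = C * ∫⁻ y, ∫⁻ z in A, besovKernel p θ f z y := lintegral_const_mul' _ _ hC
      _ = C * ∫⁻ z in A, ∫⁻ y, besovKernel p θ f z y := by
          have hac : (volume.restrict A).prod (volume : Measure (EuclideanSpace ℝ (Fin n))) ≪
              volume.prod volume :=
            Measure.restrict_le_self.absolutelyContinuous.prod Measure.AbsolutelyContinuous.rfl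
          rw [← lintegral_lintegral_swap ((aemeasurable_besovKernel p θ hfm).mono_ac hac)]
      _ ≤ C * T := by
          gcongr
          exact lintegral_mono_set fun z hz => hz.2
  calc _ ≤ ∫⁻ x, ∫⁻ y, (2 : ℝ≥0∞) ^ (p - 1) * (P x y + Q x y) :=
        lintegral_mono fun x => lintegral_mono fun y => hpt x y
    _ = (2 : ℝ≥0∞) ^ (p - 1) * ((∫⁻ x, ∫⁻ y, P x y) + ∫⁻ x, ∫⁻ y, Q x y) := by
        have h2 : (2 : ℝ≥0∞) ^ (p - 1) ≠ ⊤ :=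
          ENNReal.rpow_ne_top_of_nonneg (by linarith) (by simp)
        rw [lintegral_lintegral (hPm.add hQm |>.const_mul _), lintegral_const_mul' _ _ h2,
          lintegral_lintegral hPm, lintegral_lintegral hQm]
        congr 1
        exact lintegral_add_left' hPm _
    _ ≤ (2 : ℝ≥0∞) ^ (p - 1) * (ENNReal.ofReal M ^ p * T + C * T) := by gcongr
    _ = _ := by ring

/-! ### Localization -/

/-- Lemma: localization in Besov spaces. Let `1 ≤ p < ∞`, `0 < θ < 1`,
`f` locally integrable with finite Besov seminorm, `x₀ ∈ ℝ^n`, `K > 0`. With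
`c̃_R = ⨍_{Δ(x₀,2R)∖Δ(x₀,R)} f`, for every `ε > 0` there is `R₀ > 0` such that for all
`R > R₀` and every Lipschitz cutoff `ξ_R` (equal to `1` on `Δ(x₀,R)`, vanishing outside
`Δ(x₀,2R)`, with Lipschitz constant — i.e. a.e. gradient bound — at most `K/R`),
`‖f − (f − c̃_R)ξ_R‖_{Ḃ^{p,p}_θ} < ε`. -/
theorem besov_localize (n : ℕ) (p θ : ℝ) (hp : 1 ≤ p) (hθ0 : 0 < θ) (hθ1 : θ < 1)
    (f : EuclideanSpace ℝ (Fin n) → ℂ) (hf : LocallyIntegrable f volume)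
    (hfB : besovNorm n p θ f < ⊤) (x₀ : EuclideanSpace ℝ (Fin n)) (K : ℝ) (hK : 0 < K) :
    ∀ ε : ℝ, 0 < ε → ∃ R₀ : ℝ, 0 < R₀ ∧
      ∀ R : ℝ, R₀ < R →
        ∀ ξ : EuclideanSpace ℝ (Fin n) → ℝ,
          LipschitzWith (Real.toNNReal (K / R)) ξ →
          (∀ x ∈ Metric.ball x₀ R, ξ x = 1) →
          (∀ x, x ∉ Metric.ball x₀ (2 * R) → ξ x = 0) →
          besovNorm n p θ
              (fun x => f x -
                (f x - ⨍ y in Metric.ball x₀ (2 * R) \ Metric.ball x₀ R, f y) * (ξ x : ℂ))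
            < ENNReal.ofReal ε := by
  intro ε hε
  have hp0 : 0 < p := by linarith
  rcases Nat.eq_zero_or_pos n with rfl | hn
  · -- on a point every difference vanishes
    refine ⟨1, one_pos, fun R _ ξ _ _ _ => ?_⟩
    have hker : ∀ (h : EuclideanSpace ℝ (Fin 0) → ℂ) x y, besovKernel p θ h x y = 0 := by
      intro h x y
      rw [Subsingleton.elim x y]
      simp [besovKernel, ENNReal.zero_rpow_of_pos hp0]
    rw [besovNorm_eq]
    simp only [hker, lintegral_zero]
    rw [ENNReal.zero_rpow_of_pos (inv_pos.2 hp0)]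
    exact ENNReal.ofReal_pos.2 hε
  have hfin : ∫⁻ x, ∫⁻ y, besovKernel p θ f x y ≠ ⊤ := by
    intro h
    rw [besovNorm_eq, h, ENNReal.top_rpow_of_pos (inv_pos.2 hp0)] at hfB
    exact lt_irrefl _ hfB
  obtain ⟨C, hC, hCle⟩ := lintegral_besovKernel_mul_le (M := 1 + 2 * K) hn hp hθ0 hθ1 hK
    (by positivity) hf x₀
  have hεp : 0 < ENNReal.ofReal ε ^ p := ENNReal.rpow_pos (ENNReal.ofReal_pos.2 hε) ofReal_ne_top
  obtain ⟨R₀, hR₀, htail⟩ := exists_besov_tail_lt p θ hfin x₀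
    (δ := ENNReal.ofReal ε ^ p / (C + 1))
    (ENNReal.div_pos hεp.ne' (ENNReal.add_ne_top.2 ⟨hC, one_ne_top⟩))
  refine ⟨R₀, hR₀, fun R hR ξ hξ hξ1 hξ0 => ?_⟩
  have hRpos : 0 < R := hR₀.trans hR
  set c : ℂ := ⨍ y in ball x₀ (2 * R) \ ball x₀ R, f y with hc
  set η : EuclideanSpace ℝ (Fin n) → ℝ := fun x => 1 - ξ x with hη
  have hηlip : LipschitzWith (Real.toNNReal (K / R)) η := by
    refine LipschitzWith.of_dist_le_mul fun x y => ?_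
    have := hξ.dist_le_mul x y
    rwa [dist_sub_left]
  have hη0 : ∀ x ∈ ball x₀ R, η x = 0 := fun x hx => by simp [hη, hξ1 x hx]
  have hη1 : ∀ x, x ∉ ball x₀ (2 * R) → η x = 1 := fun x hx => by simp [hη, hξ0 x hx]
  have hηM : ∀ x, |η x| ≤ 1 + 2 * K := by
    intro x
    by_cases hx : x ∈ ball x₀ (2 * R)
    · have h1 := hηlip.dist_le_mul x x₀
      rw [hη0 x₀ (mem_ball_self hRpos), Real.dist_eq, sub_zero,
        Real.coe_toNNReal _ (by positivity)] at h1
      have h2 : K / R * dist x x₀ ≤ K / R * (2 * R) := by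
        gcongr
        exact (mem_ball.1 hx).le
      have h3 : K / R * (2 * R) = 2 * K := by field_simp
      linarith
    · rw [hη1 x hx, abs_one]
      linarith
  -- `f - (f - c) * ξ` and `(f - c) * (1 - ξ)` differ by the constant `c`
  have hker : ∀ x y, besovKernel p θ (fun x => f x - (f x - c) * (ξ x : ℂ)) x y =
      besovKernel p θ (fun x => (f x - c) * (η x : ℂ)) x y := by
    intro x y
    simp only [besovKernel, hη]
    congr 3
    push_cast; ring
  have hCt : C + 1 ≠ ⊤ := ENNReal.add_ne_top.2 ⟨hC, one_ne_top⟩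
  have hlt : ∫⁻ x, ∫⁻ y, besovKernel p θ (fun x => f x - (f x - c) * (ξ x : ℂ)) x y <
      ENNReal.ofReal ε ^ p := by
    simp only [hker]
    calc _ ≤ C * ∫⁻ x in (ball x₀ R)ᶜ, ∫⁻ y, besovKernel p θ f x y :=
          hCle R hRpos η hηlip hηM hη0 hη1
      _ ≤ (∫⁻ x in (ball x₀ R)ᶜ, ∫⁻ y, besovKernel p θ f x y) * (C + 1) := by
          rw [mul_comm]
          gcongr
          exact le_self_add
      _ < ENNReal.ofReal ε ^ p :=
          (ENNReal.lt_div_iff_mul_lt (.inl (by simp)) (.inl hCt)).1 (htail R hR)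
  rw [besovNorm_eq]
  calc _ < (ENNReal.ofReal ε ^ p) ^ p⁻¹ := ENNReal.rpow_lt_rpow hlt (inv_pos.2 hp0)
    _ = ENNReal.ofReal ε := by
        rw [← ENNReal.rpow_mul, mul_inv_cancel₀ hp0.ne', ENNReal.rpow_one]

end
end

section
/- Let 1 ≤ p < ∞ and 0 < θ < 1. Then smooth compactly supported functions are dense in the homogeneous Besov space: for every locally integrable f : ℝ^n → ℂ with ‖f‖_{Ḃ^{p,p}_θ(ℝ^n)} < ∞ and every ε > 0 there exists g ∈ C_c^∞(ℝ^n) with ‖f − g‖_{Ḃ^{p,p}_θ(ℝ^n)} < ε. -/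
/-!
Write `s = n + p θ` and work with the energy, the `p`-th power of the seminorm. By the convexity
inequality `(a + b) ^ p ≤ 2 ^ (p - 1) * (a ^ p + b ^ p)` it is subadditive up to a constant, so
smoothing and truncation can be treated one after the other.

*Smoothing.* The seminorm of `f` is the `L^p(ℝ^n × ℝ^n)` norm of the difference quotient
`|x - y| ^ (-s / p) * (f x - f y)`, and translating `f` by `t` translates this function by
`(t, t)`. Continuity of translations in `L^p` gives a small energy of `f (· - t) - f` for small `t`
(`exists_translation`), and Jensen's inequality transfers this to the mollification error
(`exists_mollification`).

*Truncation.* Let `χ_R = χ (· / R)` be a cutoff equal to `1` on the ball of radius `R`, and let `g`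
be measurable with finite energy. The function `h = (1 - χ_R) (g - c)` satisfies
`h x - h y = (1 - χ_R x) (g x - g y) - (χ_R x - χ_R y) (g y - c)`. The first term contributes at
most the part of the energy carried by `{|x| ≥ R}` (`tail`). For the second one,
`∫ |χ_R x - χ_R y| ^ p / |x - y| ^ s dx ≤ C R ^ n / (R + |y|) ^ s` (`exists_kernel_bound_one` for
`R = 1`, then `kernel_bound` by scaling), and the choice `c = g z` with `R ≤ |z| ≤ 3 R`, for which
`|y - z| ≤ 3 (R + |y|)`, leads to the bound `C' R ^ n ∫ |g y - g z| ^ p / |y - z| ^ s dy`. Choosing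
`z` so that this integral is at most its mean over a ball of radius `R` in the annulus
(`exists_good_point`) bounds it by the tail again, and the tail tends to zero as `R → ∞`
(`exists_tail_le`). This works for every `1 ≤ p < ∞`, including `p = 1`, without any embedding
or reflexivity.
-/

open MeasureTheory ENNReal Metric

noncomputable section

/-! ### The Besov energy -/

/-- The Euclidean space `ℝ^n`. -/
abbrev Eu (n : ℕ) : Type := EuclideanSpace ℝ (Fin n)

/-- The quotient `‖u x - u y‖ ^ p / |x - y| ^ s` under the double integral. -/
def quot {n : ℕ} (p s : ℝ) (u : Eu n → ℂ) (x y : Eu n) : ℝ≥0∞ :=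
  ‖u x - u y‖ₑ ^ p / edist x y ^ s

/-- The `p`-th power of the Besov seminorm, where `s` stands for `n + p θ`. -/
def energy {n : ℕ} (p s : ℝ) (u : Eu n → ℂ) : ℝ≥0∞ :=
  ∫⁻ x, ∫⁻ y, quot p s u x y

lemma besovNorm_eq_s5 (n : ℕ) (p θ : ℝ) (u : Eu n → ℂ) :
    besovNorm n p θ u = energy p (n + p * θ) u ^ p⁻¹ := by
  simp only [besovNorm, energy, quot, ofReal_norm, edist_dist]

lemma quot_symm {n : ℕ} (p s : ℝ) (u : Eu n → ℂ) (x y : Eu n) :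
    quot p s u x y = quot p s u y x := by
  simp only [quot, edist_comm x y]
  rw [← enorm_neg (u x - u y), neg_sub]

/-- On the diagonal the quotient `0 / 0` takes the value `0`. -/
lemma quot_self {n : ℕ} {p s : ℝ} (hp : 1 ≤ p) (u : Eu n → ℂ) (x : Eu n) :
    quot p s u x x = 0 := by
  simp [quot, ENNReal.zero_rpow_of_pos (lt_of_lt_of_le one_pos hp)]

@[fun_prop]
lemma measurable_quot {n : ℕ} {p s : ℝ} {u : Eu n → ℂ} (hu : Measurable u) :
    Measurable (fun z : Eu n × Eu n => quot p s u z.1 z.2) := by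
  unfold quot
  fun_prop

lemma energy_eq_prod {n : ℕ} {p s : ℝ} {u : Eu n → ℂ} (hu : Measurable u) :
    energy p s u = ∫⁻ z : Eu n × Eu n, quot p s u z.1 z.2 := by
  rw [Measure.volume_eq_prod, lintegral_prod _ (measurable_quot hu).aemeasurable, energy]

lemma energy_congr_ae {n : ℕ} {p s : ℝ} {u v : Eu n → ℂ} (h : u =ᵐ[volume] v) :
    energy p s u = energy p s v := by
  refine lintegral_congr_ae ?_
  filter_upwards [h] with x hx
  refine lintegral_congr_ae ?_
  filter_upwards [h] with y hy
  simp only [quot, hx, hy]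

lemma energy_sub_const {n : ℕ} {p s : ℝ} (u : Eu n → ℂ) (c : ℂ) :
    energy p s (fun x => u x - c) = energy p s u := by
  simp [energy, quot]

lemma enorm_add_rpow_le {p : ℝ} (hp : 1 ≤ p) (a b : ℂ) :
    ‖a + b‖ₑ ^ p ≤ 2 ^ (p - 1) * (‖a‖ₑ ^ p + ‖b‖ₑ ^ p) :=
  (ENNReal.rpow_le_rpow (enorm_add_le a b) (by linarith)).trans
    (ENNReal.rpow_add_le_mul_rpow_add_rpow _ _ hp)

lemma energy_add_le {n : ℕ} {p s : ℝ} (hp : 1 ≤ p) {u v : Eu n → ℂ}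
    (hu : Measurable u) (hv : Measurable v) :
    energy p s (fun x => u x + v x) ≤ 2 ^ (p - 1) * (energy p s u + energy p s v) := by
  rw [energy_eq_prod (u := fun x => u x + v x) (hu.add hv), energy_eq_prod hu, energy_eq_prod hv,
    ← lintegral_add_left (measurable_quot hu), ← lintegral_const_mul _ (by fun_prop)]
  refine lintegral_mono fun z => ?_
  simp only [quot]
  rw [← ENNReal.add_div, ← mul_div_assoc]
  gcongr
  refine le_trans (le_of_eq ?_) (enorm_add_rpow_le hp _ _)
  congr 2
  ring

/-! ### Approximation by mollification -/

/-- The difference quotient, distributed so that its `L^p` norm on `ℝ^n × ℝ^n` is the seminorm. -/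
def weightedDiff {n : ℕ} (p s : ℝ) (u : Eu n → ℂ) (z : Eu n × Eu n) : ℂ :=
  ((dist z.1 z.2 ^ (-(s / p)) : ℝ) : ℂ) * (u z.1 - u z.2)

lemma measurable_weightedDiff {n : ℕ} {p s : ℝ} {u : Eu n → ℂ} (hu : Measurable u) :
    Measurable (weightedDiff p s u) := by
  unfold weightedDiff
  fun_prop

lemma weightedDiff_enorm_rpow {n : ℕ} {p s : ℝ} (hp : 1 ≤ p) (u : Eu n → ℂ)
    (z : Eu n × Eu n) : ‖weightedDiff p s u z‖ₑ ^ p = quot p s u z.1 z.2 := by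
  have hp0 : 0 < p := by linarith
  obtain ⟨x, y⟩ := z
  by_cases h : x = y
  · subst h
    simp [quot_self hp, weightedDiff, hp0]
  have hd : 0 < dist x y := dist_pos.2 h
  simp only [weightedDiff, quot, enorm_mul]
  rw [ENNReal.mul_rpow_of_nonneg _ _ hp0.le, mul_comm,
    div_eq_mul_inv (‖u x - u y‖ₑ ^ p), ← ENNReal.rpow_neg]
  congr 1
  rw [← ofReal_norm, Complex.norm_real, Real.norm_of_nonneg (by positivity),
    ENNReal.ofReal_rpow_of_nonneg (by positivity) hp0.le, ← Real.rpow_mul hd.le,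
    edist_dist, ENNReal.ofReal_rpow_of_pos hd]
  congr 2
  field_simp

lemma eLpNorm_weightedDiff {n : ℕ} {p s : ℝ} (hp : 1 ≤ p) {u : Eu n → ℂ} (hu : Measurable u) :
    eLpNorm (weightedDiff p s u) (ENNReal.ofReal p) volume = energy p s u ^ p⁻¹ := by
  have hp0 : 0 < p := by linarith
  rw [eLpNorm_eq_lintegral_rpow_enorm_toReal (by simpa using hp0) ENNReal.ofReal_ne_top,
    ENNReal.toReal_ofReal hp0.le, energy_eq_prod hu, one_div]
  simp only [weightedDiff_enorm_rpow hp]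

/-- Translation is continuous in the Besov energy, because the diagonal translation of
`ℝ^n × ℝ^n` is continuous in `L^p`. -/
lemma exists_translation {n : ℕ} {p s : ℝ} (hp : 1 ≤ p) {f : Eu n → ℂ} (hf : Measurable f)
    (hE : energy p s f < ⊤) {η : ℝ≥0∞} (hη : 0 < η) :
    ∃ δ > 0, ∀ t : Eu n, ‖t‖ < δ → energy p s (fun x => f (x - t) - f x) ≤ η := by
  have hp0 : 0 < p := by linarith
  have : Fact ((1 : ℝ≥0∞) ≤ ENNReal.ofReal p) := ⟨by simpa using hp⟩
  have : Fact (ENNReal.ofReal p ≠ ∞) := ⟨ENNReal.ofReal_ne_top⟩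
  have : (volume : Measure (Eu n × Eu n)).IsAddHaarMeasure :=
    inferInstanceAs ((volume : Measure (Eu n)).prod (volume : Measure (Eu n))).IsAddHaarMeasure
  have : VAddInvariantMeasure (Eu n × Eu n) (Eu n × Eu n) volume := inferInstance
  have : (volume : Measure (Eu n × Eu n)).InnerRegularCompactLTTop := inferInstance
  have hG : MemLp (weightedDiff p s f) (ENNReal.ofReal p) (volume : Measure (Eu n × Eu n)) := by
    refine ⟨(measurable_weightedDiff hf).aestronglyMeasurable, ?_⟩
    rw [eLpNorm_weightedDiff hp hf]
    exact ENNReal.rpow_lt_top_of_nonneg (by positivity) hE.ne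
  have hc : Continuous (fun t : Eu n => DomAddAct.mk ((-t, -t) : Eu n × Eu n) +ᵥ hG.toLp) := by
    have h1 : Continuous (fun t : Eu n => DomAddAct.mk ((-t, -t) : Eu n × Eu n)) :=
      DomAddAct.continuous_mk.comp (by fun_prop)
    exact h1.vadd continuous_const
  have h0 := (hc.tendsto 0)
  rw [EMetric.tendsto_nhds] at h0
  have hη' : 0 < η ^ p⁻¹ := by
    rcases eq_or_ne η ⊤ with rfl | h
    · simp [hp0]
    · exact ENNReal.rpow_pos hη h
  obtain ⟨δ, hδ, H⟩ := Metric.eventually_nhds_iff.1 (h0 _ hη')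
  refine ⟨δ, hδ, fun t ht => ?_⟩
  have h2 := H (y := t) (by simpa using ht)
  rw [DomAddAct.mk_vadd_toLp, DomAddAct.mk_vadd_toLp, Lp.edist_toLp_toLp] at h2
  have h3 : ((fun z => weightedDiff p s f (((-t, -t) : Eu n × Eu n) +ᵥ z)) -
      fun z => weightedDiff p s f (((-0, -0) : Eu n × Eu n) +ᵥ z)) =
      weightedDiff p s (fun x => f (x - t) - f x) := by
    funext z
    simp [weightedDiff, sub_eq_neg_add]
    ring
  rw [h3, eLpNorm_weightedDiff hp (by fun_prop)] at h2
  exact ((ENNReal.rpow_lt_rpow_iff (by positivity)).1 h2).le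

/-- Jensen's inequality for the probability density `φ` and the convex function `‖·‖ ^ p`. -/
lemma jensen_average {n : ℕ} {p : ℝ} (hp : 1 ≤ p) {φ : Eu n → ℝ} (hφ : Continuous φ)
    (h0 : ∀ t, 0 ≤ φ t) (hi : Integrable φ) (h1 : ∫ t, φ t = 1) {H : Eu n → ℂ}
    (hH : Measurable H) :
    ‖∫ t, φ t • H t‖ₑ ^ p ≤ ∫⁻ t, ENNReal.ofReal (φ t) * ‖H t‖ₑ ^ p := by
  have hp0 : 0 < p := by linarith
  have hm : Measurable (fun t => ENNReal.ofReal (φ t)) := by fun_prop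
  set ν : Measure (Eu n) := volume.withDensity (fun t => ENNReal.ofReal (φ t)) with hν
  have hprob : IsProbabilityMeasure ν := by
    refine ⟨?_⟩
    rw [hν, withDensity_apply _ MeasurableSet.univ, Measure.restrict_univ,
      ← ofReal_integral_eq_lintegral_ofReal hi (.of_forall h0), h1, ENNReal.ofReal_one]
  have e1 : ‖∫ t, φ t • H t‖ₑ ≤ eLpNorm H 1 ν := by
    refine (enorm_integral_le_lintegral_enorm _).trans (le_of_eq ?_)
    rw [eLpNorm_one_eq_lintegral_enorm, hν, lintegral_withDensity_eq_lintegral_mul _ hm (by fun_prop)]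
    refine lintegral_congr fun t => ?_
    rw [enorm_smul, Real.enorm_of_nonneg (h0 t)]
    rfl
  have e2 : eLpNorm H 1 ν ≤ eLpNorm H (ENNReal.ofReal p) ν :=
    eLpNorm_le_eLpNorm_of_exponent_le (by simpa using hp) hH.aestronglyMeasurable
  rw [eLpNorm_eq_lintegral_rpow_enorm_toReal (by simpa using hp0) ENNReal.ofReal_ne_top,
    ENNReal.toReal_ofReal hp0.le, hν, lintegral_withDensity_eq_lintegral_mul _ hm (by fun_prop)] at e2
  refine (ENNReal.rpow_le_rpow (e1.trans e2) hp0.le).trans (le_of_eq ?_)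
  rw [← ENNReal.rpow_mul, one_div, inv_mul_cancel₀ hp0.ne', ENNReal.rpow_one]
  rfl

/-- A mollification of `f` at a small scale is close to `f` in energy: by Jensen's inequality
the energy of the error is at most an average of the energies of `f (· - t) - f`. -/
lemma exists_mollification {n : ℕ} {p s : ℝ} (hp : 1 ≤ p) {f : Eu n → ℂ} (hf : Measurable f)
    (hfl : LocallyIntegrable f volume) (hE : energy p s f < ⊤) {η : ℝ≥0∞} (hη : 0 < η) :
    ∃ g : Eu n → ℂ, ContDiff ℝ (⊤ : ℕ∞) g ∧ energy p s (fun x => g x - f x) ≤ η := by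
  obtain ⟨δ, hδ, H⟩ := exists_translation hp hf hE hη
  let φ : ContDiffBump (0 : Eu n) := ⟨δ / 2, δ, half_pos hδ, half_lt_self hδ⟩
  set w : Eu n → ℝ := φ.normed volume with hw
  have hwc : Continuous w := φ.continuous_normed
  have hw0 : ∀ t, 0 ≤ w t := φ.nonneg_normed
  have hwi : Integrable w := φ.integrable_normed
  have hw1 : ∫ t, w t = 1 := φ.integral_normed
  let g : Eu n → ℂ := convolution w f (ContinuousLinearMap.lsmul ℝ ℝ) volume
  have hg : ContDiff ℝ (⊤ : ℕ∞) g :=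
    φ.hasCompactSupport_normed.contDiff_convolution_left _ φ.contDiff_normed hfl
  have hgi : ∀ x, Integrable (fun t => w t • f (x - t)) := fun x =>
    (φ.hasCompactSupport_normed.convolutionExists_left (ContinuousLinearMap.lsmul ℝ ℝ)
      φ.continuous_normed hfl x).integrable
  have hgx : ∀ x, g x - f x = ∫ t, w t • (f (x - t) - f x) := fun x => by
    simp_rw [smul_sub]
    rw [integral_sub (hgi x) (hwi.smul_const _), integral_smul_const, hw1, one_smul]
    rfl
  have hgi' : ∀ x, Integrable (fun t => w t • (f (x - t) - f x)) := fun x => by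
    simp_rw [smul_sub]
    exact (hgi x).sub (hwi.smul_const _)
  refine ⟨g, hg, ?_⟩
  let d : Eu n → Eu n → ℂ := fun t x => f (x - t) - f x
  have hdm : ∀ t, Measurable (d t) := fun t => by fun_prop
  have hgm : Measurable (fun x => g x - f x) := hg.continuous.measurable.sub hf
  have hpt : ∀ z : Eu n × Eu n, quot p s (fun x => g x - f x) z.1 z.2 ≤
      ∫⁻ t, ENNReal.ofReal (w t) * quot p s (d t) z.1 z.2 := by
    rintro ⟨x, y⟩
    have hm : Measurable fun t => ENNReal.ofReal (w t) * ‖d t x - d t y‖ₑ ^ p := by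
      fun_prop
    simp only [quot, ← mul_div_assoc]
    simp only [div_eq_mul_inv]
    rw [lintegral_mul_const _ hm]
    gcongr
    rw [hgx, hgx, ← integral_sub (hgi' x) (hgi' y)]
    simp_rw [← smul_sub]
    exact jensen_average hp hwc hw0 hwi hw1 (by fun_prop)
  have hm2 : Measurable (Function.uncurry fun (z : Eu n × Eu n) (t : Eu n) =>
      ENNReal.ofReal (w t) * quot p s (d t) z.1 z.2) := by
    simp only [quot, d, Function.uncurry_def]
    fun_prop
  calc energy p s (fun x => g x - f x)
      = ∫⁻ z : Eu n × Eu n, quot p s (fun x => g x - f x) z.1 z.2 := energy_eq_prod hgm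
    _ ≤ ∫⁻ z : Eu n × Eu n, ∫⁻ t, ENNReal.ofReal (w t) * quot p s (d t) z.1 z.2 :=
        lintegral_mono hpt
    _ = ∫⁻ t, ∫⁻ z : Eu n × Eu n, ENNReal.ofReal (w t) * quot p s (d t) z.1 z.2 :=
        lintegral_lintegral_swap hm2.aemeasurable
    _ = ∫⁻ t, ENNReal.ofReal (w t) * energy p s (d t) := by
        refine lintegral_congr fun t => ?_
        rw [lintegral_const_mul _ (measurable_quot (hdm t)), energy_eq_prod (hdm t)]
    _ ≤ ∫⁻ t, ENNReal.ofReal (w t) * η := by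
        refine lintegral_mono fun t => ?_
        by_cases ht : ‖t‖ < δ
        · gcongr
          exact H t ht
        · have : w t = 0 := by
            by_contra hne
            have : t ∈ Function.support w := hne
            rw [hw, φ.support_normed_eq] at this
            exact ht (by simpa using this)
          simp [this]
    _ = η := by
        rw [lintegral_mul_const _ (by fun_prop),
          ← ofReal_integral_eq_lintegral_ofReal hwi (.of_forall hw0), hw1, ENNReal.ofReal_one,
          one_mul]

/-! ### The energy of a cutoff function near a point -/

/-- The majorant of `|χ x - χ 0| ^ p / |x| ^ s` for an `L`-Lipschitz `χ` with values in `[0, 1]` is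
integrable: near `0` because `s < n + p`, at infinity because `n < s`. -/
lemma integrable_majorant {n : ℕ} (hn : 0 < n) {p s : ℝ} (L : ℝ) (hL : 0 ≤ L) (hp : 1 ≤ p)
    (hs0 : (n : ℝ) < s) (hs1 : s < n + p) :
    Integrable (fun x : Eu n => min (L * ‖x‖) 1 ^ p * ‖x‖ ^ (-s)) := by
  have hp0 : 0 < p := by linarith
  have : Nonempty (Fin n) := ⟨⟨0, hn⟩⟩
  have hn1 : ((n - 1 : ℕ) : ℝ) = n - 1 := by
    rw [Nat.cast_sub hn, Nat.cast_one]
  rw [integrable_fun_norm_addHaar (volume : Measure (Eu n))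
    (f := fun r => min (L * r) 1 ^ p * r ^ (-s)), finrank_euclideanSpace, Fintype.card_fin]
  have hm : Measurable (fun r : ℝ => r ^ (n - 1) • (min (L * r) 1 ^ p * r ^ (-s))) := by
    fun_prop
  rw [← Set.Ioc_union_Ioi_eq_Ioi (zero_le_one (α := ℝ)), integrableOn_union]
  constructor
  · have h1 : IntegrableOn (fun r : ℝ => L ^ p * r ^ ((n : ℝ) - 1 + p - s)) (Set.Ioc 0 1) := by
      have := intervalIntegral.intervalIntegrable_rpow' (a := 0) (b := 1)
        (r := (n : ℝ) - 1 + p - s) (by linarith)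
      rw [intervalIntegrable_iff_integrableOn_Ioc_of_le zero_le_one] at this
      exact this.const_mul _
    refine Integrable.mono' h1 hm.aestronglyMeasurable ?_
    filter_upwards [ae_restrict_mem measurableSet_Ioc] with r hr
    have hr0 : 0 < r := hr.1
    rw [Real.norm_of_nonneg (by positivity)]
    have e : L ^ p * r ^ ((n : ℝ) - 1 + p - s) = r ^ (n - 1) • ((L * r) ^ p * r ^ (-s)) := by
      rw [sub_eq_add_neg _ s, Real.rpow_add hr0, Real.rpow_add hr0, Real.mul_rpow hL hr0.le,
        ← hn1, Real.rpow_natCast, smul_eq_mul]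
      ring
    rw [e]
    simp only [smul_eq_mul]
    gcongr
    exact min_le_left _ _
  · have h1 : IntegrableOn (fun r : ℝ => r ^ ((n : ℝ) - 1 - s)) (Set.Ioi 1) :=
      integrableOn_Ioi_rpow_of_lt (by linarith) one_pos
    refine Integrable.mono' h1 hm.aestronglyMeasurable ?_
    filter_upwards [ae_restrict_mem measurableSet_Ioi] with r hr
    have hr0 : 0 < r := lt_trans one_pos hr
    rw [Real.norm_of_nonneg (by positivity)]
    have e : r ^ ((n : ℝ) - 1 - s) = r ^ (n - 1) • (1 ^ p * r ^ (-s)) := by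
      rw [sub_eq_add_neg _ s, Real.rpow_add hr0, ← hn1, Real.rpow_natCast, smul_eq_mul,
        Real.one_rpow, one_mul]
    rw [e]
    simp only [smul_eq_mul]
    gcongr
    exact min_le_right _ _

/-- The cutoff kernel estimate at scale one. For `‖y‖ ≤ 4` the integral is bounded by that of the
integrable majorant; for larger `y` the integrand lives on the ball of radius `2`, at distance
comparable to `1 + ‖y‖` from `y`. -/
lemma exists_kernel_bound_one {n : ℕ} (hn : 0 < n) {p s : ℝ} (hp : 1 ≤ p)
    (hs0 : (n : ℝ) < s) (hs1 : s < n + p) {χ : Eu n → ℝ} {L : NNReal} (hχL : LipschitzWith L χ)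
    (h0 : ∀ x, 0 ≤ χ x) (h1 : ∀ x, χ x ≤ 1) (h2 : ∀ x, 2 ≤ ‖x‖ → χ x = 0) :
    ∃ C : ℝ≥0∞, C ≠ ⊤ ∧ ∀ y, ∫⁻ x, ‖χ x - χ y‖ₑ ^ p / edist x y ^ s ≤
      C / ENNReal.ofReal (1 + ‖y‖) ^ s := by
  have hp0 : 0 < p := by linarith
  have hs : 0 < s := lt_of_le_of_lt (by positivity) hs0
  set m : Eu n → ℝ := fun x => min (L * ‖x‖) 1 ^ p * ‖x‖ ^ (-s) with hm
  set J : ℝ≥0∞ := ∫⁻ x, ENNReal.ofReal (m x) with hJ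
  have hJfin : J ≠ ⊤ := by
    have := (integrable_majorant hn L L.2 hp hs0 hs1).lintegral_lt_top
    exact this.ne
  set V : ℝ≥0∞ := volume (closedBall (0 : Eu n) 2) with hV
  have hVfin : V ≠ ⊤ := measure_closedBall_lt_top.ne
  have hbd : ∀ x y, |χ x - χ y| ≤ 1 := fun x y => by
    rw [abs_le]; constructor <;> linarith [h0 x, h0 y, h1 x, h1 y]
  have hpos : ∀ y : Eu n, ENNReal.ofReal (1 + ‖y‖) ^ s ≠ 0 := fun y => by
    have : (0 : ℝ) < 1 + ‖y‖ := by positivity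
    simp [ENNReal.rpow_eq_zero_iff, hs, hs.not_gt, this]
  have htop : ∀ y : Eu n, ENNReal.ofReal (1 + ‖y‖) ^ s ≠ ⊤ := fun y =>
    ENNReal.rpow_ne_top_of_nonneg hs.le ENNReal.ofReal_ne_top
  refine ⟨(J + V) * ENNReal.ofReal 5 ^ s, ENNReal.mul_ne_top (ENNReal.add_ne_top.2 ⟨hJfin, hVfin⟩)
    (ENNReal.rpow_ne_top_of_nonneg hs.le ENNReal.ofReal_ne_top), fun y => ?_⟩
  rw [ENNReal.le_div_iff_mul_le (.inl (hpos y)) (.inl (htop y))]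
  rcases le_total ‖y‖ 4 with hy | hy
  · have hW : ∫⁻ x, ‖χ x - χ y‖ₑ ^ p / edist x y ^ s ≤ J := by
      rw [hJ, ← lintegral_sub_right_eq_self (fun x => ENNReal.ofReal (m x)) y]
      refine lintegral_mono fun x => ?_
      by_cases hxy : x = y
      · simp [hxy, hp0]
      have hd : 0 < ‖x - y‖ := norm_pos_iff.2 (sub_ne_zero.2 hxy)
      rw [hm, edist_dist, dist_eq_norm, div_eq_mul_inv, ← ENNReal.rpow_neg,
        ENNReal.ofReal_rpow_of_pos hd, ENNReal.ofReal_mul (by positivity),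
        ← ofReal_norm, ENNReal.ofReal_rpow_of_nonneg (by positivity) hp0.le]
      gcongr
      refine le_min ?_ (hbd x y)
      have := hχL.dist_le_mul x y
      rwa [Real.dist_eq, dist_eq_norm] at this
    gcongr
    · exact hW.trans le_self_add
    · linarith
  · have hχy : χ y = 0 := h2 y (by linarith)
    have hW : ∫⁻ x, ‖χ x - χ y‖ₑ ^ p / edist x y ^ s ≤
        V * (ENNReal.ofReal ((1 + ‖y‖) / 5) ^ s)⁻¹ := by
      rw [hV, mul_comm, ← lintegral_indicator_const measurableSet_closedBall]
      refine lintegral_mono fun x => ?_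
      by_cases hx : x ∈ closedBall (0 : Eu n) 2
      · rw [Set.indicator_of_mem hx, ← one_div]
        have hx' : ‖x‖ ≤ 2 := by simpa using hx
        gcongr
        · refine ENNReal.rpow_le_one ?_ hp0.le
          rw [← ofReal_norm, ENNReal.ofReal_le_one]
          exact hbd x y
        · rw [edist_dist, dist_comm, dist_eq_norm]
          gcongr
          have := norm_sub_norm_le y x
          linarith
      · have hx' : 2 ≤ ‖x‖ := by
          have : 2 < ‖x‖ := by simpa using hx
          exact this.le
        simp [hχy, h2 x hx', hp0]
    calc _ ≤ V * (ENNReal.ofReal ((1 + ‖y‖) / 5) ^ s)⁻¹ * ENNReal.ofReal (1 + ‖y‖) ^ s := by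
          gcongr
      _ = V * ENNReal.ofReal 5 ^ s := by
          have h5 : ENNReal.ofReal (1 + ‖y‖) =
              ENNReal.ofReal ((1 + ‖y‖) / 5) * ENNReal.ofReal 5 := by
            rw [← ENNReal.ofReal_mul (by positivity)]
            congr 1
            ring
          rw [h5, ENNReal.mul_rpow_of_nonneg _ _ hs.le, mul_assoc, ← mul_assoc _⁻¹,
            ENNReal.inv_mul_cancel, one_mul]
          · have : (0 : ℝ) < (1 + ‖y‖) / 5 := by positivity
            simp only [ne_eq, ENNReal.rpow_eq_zero_iff, not_or, not_and_or]
            exact ⟨.inl (by simpa using this), .inr hs.not_gt⟩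
          · exact ENNReal.rpow_ne_top_of_nonneg hs.le ENNReal.ofReal_ne_top
      _ ≤ _ := by
          gcongr
          exact le_add_self

lemma lintegral_eq_smul {n : ℕ} {R : ℝ} (hR : 0 < R) {F : Eu n → ℝ≥0∞} (hF : Measurable F) :
    ∫⁻ x, F x = ENNReal.ofReal R ^ n * ∫⁻ x, F (R • x) := by
  have h := lintegral_map (μ := (volume : Measure (Eu n))) hF (measurable_const_smul R)
  rw [Measure.map_addHaar_smul _ hR.ne', lintegral_smul_measure, finrank_euclideanSpace,
    Fintype.card_fin, abs_of_pos (by positivity)] at h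
  rw [← h, smul_eq_mul, ← mul_assoc, ← ENNReal.ofReal_pow hR.le,
    ← ENNReal.ofReal_mul (by positivity), mul_inv_cancel₀ (by positivity), ENNReal.ofReal_one,
    one_mul]

/-- The cutoff kernel estimate at scale `R`, obtained from scale one by the substitution
`x ↦ R x`. -/
lemma kernel_bound {n : ℕ} {p s : ℝ} (hs : 0 < s) {χ : Eu n → ℝ} (hχ : Measurable χ)
    {C : ℝ≥0∞}
    (hC : ∀ y, ∫⁻ x, ‖χ x - χ y‖ₑ ^ p / edist x y ^ s ≤ C / ENNReal.ofReal (1 + ‖y‖) ^ s)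
    {R : ℝ} (hR : 0 < R) (y : Eu n) :
    ∫⁻ x, ‖χ (R⁻¹ • x) - χ (R⁻¹ • y)‖ₑ ^ p / edist x y ^ s ≤
      C * ENNReal.ofReal R ^ n / ENNReal.ofReal (R + ‖y‖) ^ s := by
  obtain ⟨v, rfl⟩ : ∃ v, y = R • v := ⟨R⁻¹ • y, by rw [smul_inv_smul₀ hR.ne']⟩
  have hρ0 : ENNReal.ofReal R ^ s ≠ 0 := by
    simp [ENNReal.rpow_eq_zero_iff, hs.not_gt, hR]
  have hρ1 : ENNReal.ofReal R ^ s ≠ ⊤ :=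
    ENNReal.rpow_ne_top_of_nonneg hs.le ENNReal.ofReal_ne_top
  have e1 : ∀ u : Eu n, edist (R • u) (R • v) = ENNReal.ofReal R * edist u v := fun u => by
    rw [edist_dist, edist_dist, dist_smul₀, Real.norm_of_nonneg hR.le,
      ENNReal.ofReal_mul hR.le]
  have e2 : ENNReal.ofReal (R + ‖R • v‖) = ENNReal.ofReal R * ENNReal.ofReal (1 + ‖v‖) := by
    rw [norm_smul, Real.norm_of_nonneg hR.le, ← ENNReal.ofReal_mul hR.le]
    congr 1
    ring
  rw [lintegral_eq_smul hR (by fun_prop), e2]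
  simp only [e1, inv_smul_smul₀ hR.ne', ENNReal.mul_rpow_of_nonneg _ _ hs.le, div_eq_mul_inv,
    ENNReal.mul_inv (.inl hρ0) (.inl hρ1)]
  have e3 : ∀ u : Eu n, ‖χ u - χ v‖ₑ ^ p * ((ENNReal.ofReal R ^ s)⁻¹ * (edist u v ^ s)⁻¹) =
      (ENNReal.ofReal R ^ s)⁻¹ * (‖χ u - χ v‖ₑ ^ p / edist u v ^ s) := fun u => by
    rw [div_eq_mul_inv]; ring
  simp only [e3]
  rw [lintegral_const_mul _ (by fun_prop)]
  calc _ ≤ ENNReal.ofReal R ^ n * ((ENNReal.ofReal R ^ s)⁻¹ *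
        (C / ENNReal.ofReal (1 + ‖v‖) ^ s)) := by gcongr; exact hC v
    _ = _ := by rw [div_eq_mul_inv]; ring

/-! ### Truncation -/

/-- The part of the energy of `u` carried by the points outside the ball of radius `R`. -/
def tail {n : ℕ} (p s : ℝ) (u : Eu n → ℂ) (R : ℝ) : ℝ≥0∞ :=
  ∫⁻ z in {z : Eu n | R ≤ ‖z‖}, ∫⁻ y, quot p s u z y

lemma exists_tail_le {n : ℕ} {p s : ℝ} {u : Eu n → ℂ} (hu : Measurable u)
    (hE : energy p s u < ⊤) {η : ℝ≥0∞} (hη : 0 < η) : ∃ R > 0, tail p s u R ≤ η := by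
  have hF : Measurable (fun z => ∫⁻ y, quot p s u z y) :=
    (measurable_quot hu).lintegral_prod_right'
  have hms : ∀ k : ℕ, MeasurableSet {z : Eu n | (k : ℝ) ≤ ‖z‖} := fun k =>
    measurableSet_le measurable_const measurable_norm
  set ν : Measure (Eu n) := volume.withDensity (fun z => ∫⁻ y, quot p s u z y) with hν
  have hfin : ν Set.univ ≠ ⊤ := by
    rw [hν, withDensity_apply _ MeasurableSet.univ, Measure.restrict_univ]
    exact hE.ne
  have hlim := tendsto_measure_iInter_atTop (μ := ν)
    (s := fun k : ℕ => {z : Eu n | (k : ℝ) ≤ ‖z‖}) (fun k => (hms k).nullMeasurableSet)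
    (fun i j hij z (hz : (j : ℝ) ≤ ‖z‖) => le_trans (by exact_mod_cast hij) hz)
    ⟨0, ne_top_of_le_ne_top hfin (measure_mono (Set.subset_univ _))⟩
  have hempty : ⋂ k : ℕ, {z : Eu n | (k : ℝ) ≤ ‖z‖} = ∅ := by
    ext z
    simp only [Set.mem_iInter, Set.mem_ofPred_eq, Set.mem_empty_iff_false, iff_false, not_forall,
      not_le]
    exact exists_nat_gt ‖z‖
  rw [hempty, measure_empty] at hlim
  obtain ⟨k, hk, hk1⟩ := ((hlim.eventually (gt_mem_nhds hη)).and
    (Filter.eventually_gt_atTop 0)).exists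
  refine ⟨k, by exact_mod_cast hk1, ?_⟩
  rw [tail, ← withDensity_apply _ (hms k)]
  exact hk.le

/-- A ball of radius `R` inside the annulus `R ≤ ‖z‖ ≤ 3 R` contains a point `z` at which the
density `∫ quot p s u z y dy` of the energy is at most its mean over that ball. -/
lemma exists_good_point {n : ℕ} (hn : 0 < n) {p s : ℝ} {u : Eu n → ℂ} (hu : Measurable u)
    {R : ℝ} (hR : 0 < R) :
    ∃ z : Eu n, ‖z‖ ≤ 3 * R ∧ ENNReal.ofReal R ^ n * ∫⁻ y, quot p s u z y ≤
      (volume (ball (0 : Eu n) 1))⁻¹ * tail p s u R := by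
  have : Nonempty (Fin n) := ⟨⟨0, hn⟩⟩
  have hF : Measurable (fun z => ∫⁻ y, quot p s u z y) :=
    (measurable_quot hu).lintegral_prod_right'
  obtain ⟨v, hv⟩ := exists_norm_eq (Eu n) (c := 2 * R) (by positivity)
  have hb0 : volume (ball v R) ≠ 0 := (measure_ball_pos _ _ hR).ne'
  have hb1 : volume (ball v R) ≠ ⊤ := measure_ball_lt_top.ne
  obtain ⟨z, hz, hle⟩ := exists_le_setLAverage hb0 hb1 hF.aemeasurable
  have hvz : ∀ w ∈ ball v R, R ≤ ‖w‖ ∧ ‖w‖ ≤ 3 * R := fun w hw => by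
    rw [mem_ball, dist_eq_norm] at hw
    have h1 := norm_sub_norm_le v w
    have h2 := norm_sub_norm_le w v
    rw [norm_sub_rev] at h1
    constructor <;> linarith
  refine ⟨z, (hvz z hz).2, ?_⟩
  have hρ0 : ENNReal.ofReal R ^ n ≠ 0 := by simp [hR]
  have hρ1 : ENNReal.ofReal R ^ n ≠ ⊤ := by simp
  rw [setLAverage_eq, Measure.addHaar_ball _ _ hR.le, finrank_euclideanSpace, Fintype.card_fin,
    ENNReal.ofReal_pow hR.le, div_eq_mul_inv, ENNReal.mul_inv (.inl hρ0) (.inl hρ1)] at hle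
  calc _ ≤ ENNReal.ofReal R ^ n * ((∫⁻ w in ball v R, ∫⁻ y, quot p s u w y) *
        ((ENNReal.ofReal R ^ n)⁻¹ * (volume (ball (0 : Eu n) 1))⁻¹)) := by gcongr
    _ = (ENNReal.ofReal R ^ n * (ENNReal.ofReal R ^ n)⁻¹) * ((volume (ball (0 : Eu n) 1))⁻¹ *
        ∫⁻ w in ball v R, ∫⁻ y, quot p s u w y) := by ring
    _ = (volume (ball (0 : Eu n) 1))⁻¹ * ∫⁻ w in ball v R, ∫⁻ y, quot p s u w y := by
        rw [ENNReal.mul_inv_cancel hρ0 hρ1, one_mul]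
    _ ≤ _ := by
        rw [tail]
        gcongr
        exact fun w hw => (hvz w hw).1

/-- The error of truncating `u - u z` at scale `R` is controlled by the tail of the energy. -/
lemma exists_truncation {n : ℕ} (hn : 0 < n) {p s : ℝ} (hp : 1 ≤ p) (hs : 0 < s)
    {χ : Eu n → ℝ} (hχ : Measurable χ)
    (h0 : ∀ x, 0 ≤ χ x) (h1 : ∀ x, χ x ≤ 1) (h2 : ∀ x, ‖x‖ ≤ 1 → χ x = 1)
    {C : ℝ≥0∞} (hCfin : C ≠ ⊤)
    (hC : ∀ y, ∫⁻ x, ‖χ x - χ y‖ₑ ^ p / edist x y ^ s ≤ C / ENNReal.ofReal (1 + ‖y‖) ^ s) :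
    ∃ D : ℝ≥0∞, D ≠ ⊤ ∧ ∀ (u : Eu n → ℂ), Measurable u → ∀ R > 0, ∃ c : ℂ,
      energy p s (fun x => u x - χ (R⁻¹ • x) • (u x - c)) ≤ D * tail p s u R := by
  have hp0 : 0 < p := by linarith
  set V : ℝ≥0∞ := volume (ball (0 : Eu n) 1) with hV
  have hV0 : V ≠ 0 := (measure_ball_pos _ _ one_pos).ne'
  refine ⟨2 ^ (p - 1) * (1 + C * ENNReal.ofReal 3 ^ s * V⁻¹), ?_, fun u hu R hR => ?_⟩
  · refine ENNReal.mul_ne_top (ENNReal.rpow_ne_top_of_nonneg (by linarith) (by simp))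
      (ENNReal.add_ne_top.2 ⟨by simp, ENNReal.mul_ne_top (ENNReal.mul_ne_top hCfin
        (ENNReal.rpow_ne_top_of_nonneg hs.le ENNReal.ofReal_ne_top)) (ENNReal.inv_ne_top.2 hV0)⟩)
  obtain ⟨z, hz, hzle⟩ := exists_good_point (p := p) (s := s) hn hu hR
  refine ⟨u z, ?_⟩
  set ψ : Eu n → ℝ := fun x => χ (R⁻¹ • x) with hψ
  have hψm : Measurable ψ := by fun_prop
  set A : Eu n → Eu n → ℝ≥0∞ := fun x y => ‖(1 - ψ x) • (u x - u y)‖ₑ ^ p / edist x y ^ s with hA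
  set B : Eu n → Eu n → ℝ≥0∞ := fun x y => ‖u y - u z‖ₑ ^ p *
    (‖ψ x - ψ y‖ₑ ^ p / edist x y ^ s) with hB
  have hAm : Measurable fun q : Eu n × Eu n => A q.1 q.2 := by simp only [hA]; fun_prop
  have hBm : Measurable fun q : Eu n × Eu n => B q.1 q.2 := by simp only [hB]; fun_prop
  have hpt : ∀ x y, quot p s (fun x => u x - ψ x • (u x - u z)) x y ≤
      2 ^ (p - 1) * (A x y + B x y) := fun x y => by
    simp only [quot, hA, hB]
    rw [← mul_div_assoc, ← ENNReal.add_div, ← mul_div_assoc]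
    gcongr
    have e : u x - ψ x • (u x - u z) - (u y - ψ y • (u y - u z)) =
        (1 - ψ x) • (u x - u y) + -((ψ x - ψ y) • (u y - u z)) := by
      simp only [Complex.real_smul]
      push_cast
      ring
    rw [e]
    refine (enorm_add_rpow_le hp _ _).trans (le_of_eq ?_)
    rw [enorm_neg, enorm_smul (ψ x - ψ y), ENNReal.mul_rpow_of_nonneg _ _ hp0.le,
      mul_comm (‖ψ x - ψ y‖ₑ ^ p)]
  have hIA : ∫⁻ x, ∫⁻ y, A x y ≤ tail p s u R := by
    have hms : MeasurableSet {x : Eu n | R ≤ ‖x‖} :=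
      measurableSet_le measurable_const measurable_norm
    rw [tail, ← lintegral_indicator hms]
    refine lintegral_mono fun x => ?_
    by_cases hx : R ≤ ‖x‖
    · rw [Set.indicator_of_mem (by exact hx)]
      refine lintegral_mono fun y => ?_
      simp only [hA, quot]
      gcongr
      rw [enorm_smul]
      refine mul_le_of_le_one_left (zero_le) ?_
      rw [← ofReal_norm, ENNReal.ofReal_le_one, Real.norm_eq_abs, abs_le]
      have := h0 (R⁻¹ • x)
      have := h1 (R⁻¹ • x)
      constructor <;> simp only [hψ] <;> linarith
    · have : ψ x = 1 := by
        refine h2 _ ?_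
        rw [norm_smul, Real.norm_of_nonneg (by positivity), inv_mul_le_iff₀ hR, mul_one]
        exact (not_le.1 hx).le
      simp [hA, this, hp0]
  have hIB : ∫⁻ x, ∫⁻ y, B x y ≤ C * ENNReal.ofReal 3 ^ s * V⁻¹ * tail p s u R := by
    rw [lintegral_lintegral_swap hBm.aemeasurable]
    have hin : ∀ y, ∫⁻ x, B x y ≤
        C * ENNReal.ofReal 3 ^ s * ENNReal.ofReal R ^ n * quot p s u z y := fun y => by
      simp only [hB]
      rw [lintegral_const_mul _ (by fun_prop)]
      have hpos : ENNReal.ofReal (R + ‖y‖) ^ s ≠ 0 := by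
        have : 0 < R + ‖y‖ := by positivity
        simp [ENNReal.rpow_eq_zero_iff, hs.not_gt, this]
      have htop : ENNReal.ofReal (R + ‖y‖) ^ s ≠ ⊤ :=
        ENNReal.rpow_ne_top_of_nonneg hs.le ENNReal.ofReal_ne_top
      have hd : edist y z ^ s ≤ ENNReal.ofReal 3 ^ s * ENNReal.ofReal (R + ‖y‖) ^ s := by
        rw [← ENNReal.mul_rpow_of_nonneg _ _ hs.le, ← ENNReal.ofReal_mul (by norm_num), edist_dist,
          dist_eq_norm]
        gcongr
        have := norm_sub_le y z
        have := norm_nonneg y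
        linarith
      have hinv : (ENNReal.ofReal (R + ‖y‖) ^ s)⁻¹ ≤ ENNReal.ofReal 3 ^ s * (edist y z ^ s)⁻¹ := by
        have h3 : ENNReal.ofReal 3 ^ s ≠ ⊤ :=
          ENNReal.rpow_ne_top_of_nonneg hs.le ENNReal.ofReal_ne_top
        have h30 : ENNReal.ofReal 3 ^ s ≠ 0 := by
          simp [ENNReal.rpow_eq_zero_iff, hs.not_gt]
        calc (ENNReal.ofReal (R + ‖y‖) ^ s)⁻¹
            = ENNReal.ofReal 3 ^ s * (ENNReal.ofReal 3 ^ s * ENNReal.ofReal (R + ‖y‖) ^ s)⁻¹ := by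
              rw [ENNReal.mul_inv (.inl h30) (.inl h3), ← mul_assoc,
                ENNReal.mul_inv_cancel h30 h3, one_mul]
          _ ≤ _ := by gcongr
      calc _ ≤ ‖u y - u z‖ₑ ^ p * (C * ENNReal.ofReal R ^ n / ENNReal.ofReal (R + ‖y‖) ^ s) := by
            gcongr
            exact kernel_bound hs hχ hC hR y
        _ ≤ ‖u y - u z‖ₑ ^ p *
            (C * ENNReal.ofReal R ^ n * (ENNReal.ofReal 3 ^ s * (edist y z ^ s)⁻¹)) := by
            rw [div_eq_mul_inv]
            gcongr
        _ = _ := by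
            rw [quot_symm, quot, div_eq_mul_inv]
            ring
    calc _ ≤ ∫⁻ y, C * ENNReal.ofReal 3 ^ s * ENNReal.ofReal R ^ n * quot p s u z y :=
          lintegral_mono hin
      _ = C * ENNReal.ofReal 3 ^ s * (ENNReal.ofReal R ^ n * ∫⁻ y, quot p s u z y) := by
          rw [lintegral_const_mul _ (by unfold quot; fun_prop), mul_assoc _ (_ ^ n)]
      _ ≤ C * ENNReal.ofReal 3 ^ s * (V⁻¹ * tail p s u R) := by gcongr
      _ = _ := by ring
  calc energy p s (fun x => u x - ψ x • (u x - u z))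
      ≤ ∫⁻ x, ∫⁻ y, 2 ^ (p - 1) * (A x y + B x y) :=
        lintegral_mono fun x => lintegral_mono fun y => hpt x y
    _ = 2 ^ (p - 1) * (∫⁻ x, ∫⁻ y, A x y) + 2 ^ (p - 1) * ∫⁻ x, ∫⁻ y, B x y := by
        rw [lintegral_lintegral (by fun_prop), lintegral_lintegral hAm.aemeasurable,
          lintegral_lintegral hBm.aemeasurable, lintegral_const_mul _ (by fun_prop),
          lintegral_add_left hAm, mul_add]
    _ ≤ 2 ^ (p - 1) * tail p s u R +
        2 ^ (p - 1) * (C * ENNReal.ofReal 3 ^ s * V⁻¹ * tail p s u R) := by gcongr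
    _ = _ := by ring

/-! ### Density -/

/-- Density for measurable `f`, in positive dimension: mollify first, then truncate the smooth
approximant. -/
lemma exists_approx {n : ℕ} (hn : 0 < n) {p s : ℝ} (hp : 1 ≤ p) (hs0 : (n : ℝ) < s)
    (hs1 : s < n + p) {f : Eu n → ℂ} (hf : Measurable f) (hfl : LocallyIntegrable f volume)
    (hE : energy p s f < ⊤) {η : ℝ≥0∞} (hη : 0 < η) :
    ∃ g : Eu n → ℂ, ContDiff ℝ (⊤ : ℕ∞) g ∧ HasCompactSupport g ∧
      energy p s (fun x => f x - g x) ≤ η := by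
  have hp0 : 0 < p := by linarith
  have hs : 0 < s := lt_of_le_of_lt (by positivity) hs0
  let χ : ContDiffBump (0 : Eu n) := ⟨1, 2, one_pos, one_lt_two⟩
  obtain ⟨L, hL⟩ := ContDiff.lipschitzWith_of_hasCompactSupport χ.hasCompactSupport
    (χ.contDiff (n := 1)) (by simp)
  have h2 : ∀ x : Eu n, 2 ≤ ‖x‖ → χ x = 0 := fun x hx =>
    χ.zero_of_le_dist (by simpa using hx)
  have h1 : ∀ x : Eu n, ‖x‖ ≤ 1 → χ x = 1 := fun x hx =>
    χ.one_of_mem_closedBall (by simpa using hx)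
  obtain ⟨C, hCfin, hC⟩ := exists_kernel_bound_one hn hp hs0 hs1 hL (fun x => χ.nonneg)
    (fun x => χ.le_one) h2
  obtain ⟨D, hDfin, hD⟩ := exists_truncation hn hp hs χ.continuous.measurable (fun x => χ.nonneg)
    (fun x => χ.le_one) h1 hCfin hC
  have hK0 : (2 : ℝ≥0∞) ^ (p - 1) ≠ 0 := by simp [ENNReal.rpow_eq_zero_iff]
  have hK : (2 : ℝ≥0∞) ^ (p - 1) ≠ ⊤ :=
    ENNReal.rpow_ne_top_of_nonneg (by linarith) (by simp)
  -- Both errors are made at most `η' / 2`, where `2 ^ (p - 1) * η' ≤ η` and `η'` is finite.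
  obtain ⟨η', hη', hη'top, hη'le⟩ : ∃ η' : ℝ≥0∞, 0 < η' ∧ η' ≠ ⊤ ∧ 2 ^ (p - 1) * η' ≤ η := by
    refine ⟨min η 1 / 2 ^ (p - 1), ENNReal.div_pos (by simp [hη.ne']) hK,
      ENNReal.div_ne_top (by simp) hK0, ?_⟩
    rw [ENNReal.mul_div_cancel hK0 hK]
    exact min_le_left _ _
  obtain ⟨g, hg, hgE⟩ := exists_mollification hp hf hfl hE (ENNReal.half_pos hη'.ne')
  have hgm : Measurable g := hg.continuous.measurable
  have hgfin : energy p s g < ⊤ := by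
    have := energy_add_le (s := s) hp hf (v := fun x => g x - f x) (by fun_prop)
    simp only [add_sub_cancel] at this
    refine this.trans_lt (ENNReal.mul_lt_top hK.lt_top (ENNReal.add_lt_top.2 ⟨hE, ?_⟩))
    exact hgE.trans_lt (ENNReal.div_lt_top hη'top (by simp))
  obtain ⟨R, hR, hT⟩ := exists_tail_le hgm hgfin
    (η := η' / 2 / D) (ENNReal.div_pos (ENNReal.half_pos hη'.ne').ne' hDfin)
  obtain ⟨c, hc⟩ := hD g hgm R hR
  refine ⟨fun x => χ (R⁻¹ • x) • (g x - c), ?_, ?_, ?_⟩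
  · exact (χ.contDiff.comp (contDiff_const_smul _)).smul (hg.sub contDiff_const)
  · exact (χ.hasCompactSupport.comp_smul (inv_ne_zero hR.ne')).smul_right
  · have hm1 : Measurable (fun x => g x - χ (R⁻¹ • x) • (g x - c)) := by
      have : Measurable (χ : Eu n → ℝ) := χ.continuous.measurable
      fun_prop
    have h := energy_add_le (s := s) hp (u := fun x => f x - g x) (by fun_prop) hm1
    simp only [sub_add_sub_cancel] at h
    refine h.trans (le_trans ?_ hη'le)
    gcongr
    have e1 : energy p s (fun x => f x - g x) ≤ η' / 2 := by
      refine le_trans (le_of_eq ?_) hgE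
      simp only [energy, quot]
      refine lintegral_congr fun x => lintegral_congr fun y => ?_
      rw [← enorm_neg, show -(f x - g x - (f y - g y)) = g x - f x - (g y - f y) by ring]
    have e2 : D * tail p s g R ≤ η' / 2 :=
      (mul_le_mul_right hT D).trans ENNReal.mul_div_le
    calc _ ≤ η' / 2 + η' / 2 := add_le_add e1 (hc.trans e2)
      _ = η' := ENNReal.add_halves _

/-- smooth compactly supported functions are dense in the homogeneous
Besov space `Ḃ^{p,p}_θ(ℝ^n)` for `1 ≤ p < ∞`, `0 < θ < 1`. -/
theorem besov_smooth_dense (n : ℕ) (p θ : ℝ) (hp : 1 ≤ p) (hθ0 : 0 < θ) (hθ1 : θ < 1)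
    (f : EuclideanSpace ℝ (Fin n) → ℂ) (hf : LocallyIntegrable f volume)
    (hfB : besovNorm n p θ f < ⊤) :
    ∀ ε : ℝ, 0 < ε →
      ∃ g : EuclideanSpace ℝ (Fin n) → ℂ, ContDiff ℝ (⊤ : ℕ∞) g ∧ HasCompactSupport g ∧
        besovNorm n p θ (fun x => f x - g x) < ENNReal.ofReal ε := by
  intro ε hε
  have hp0 : 0 < p := by linarith
  rcases Nat.eq_zero_or_pos n with rfl | hn
  · -- On a one-point space every function has seminorm zero.
    refine ⟨fun _ => 0, contDiff_const, HasCompactSupport.zero, ?_⟩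
    have h : ∀ x y : Eu 0, quot p ((0 : ℕ) + p * θ) (fun x => f x - 0) x y = 0 := fun x y => by
      rw [Subsingleton.elim x y, quot_self hp]
    rw [besovNorm_eq_s5, energy]
    simp only [h, lintegral_zero, ENNReal.zero_rpow_of_pos (inv_pos.2 hp0)]
    exact ENNReal.ofReal_pos.2 hε
  have hE : energy p (n + p * θ) f < ⊤ := by
    rw [besovNorm_eq_s5] at hfB
    exact (ENNReal.rpow_lt_top_iff_of_pos (by positivity)).1 hfB
  -- Measurability of the inner integrals needs a genuinely measurable representative of `f`.
  obtain ⟨f', hf'm, hff'⟩ := hf.aestronglyMeasurable.aemeasurable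
  have hf' : LocallyIntegrable f' volume := hf.congr hff'
  obtain ⟨g, hg, hgc, hgE⟩ := exists_approx hn hp (s := n + p * θ)
    (by linarith [mul_pos hp0 hθ0]) (by nlinarith) hf'm hf' (by rwa [← energy_congr_ae hff'])
    (η := ENNReal.ofReal (ε / 2) ^ p) (ENNReal.rpow_pos (by simpa using hε) (by simp))
  refine ⟨g, hg, hgc, ?_⟩
  have hcongr : energy p (n + p * θ) (fun x => f x - g x) =
      energy p (n + p * θ) (fun x => f' x - g x) :=
    energy_congr_ae (hff'.mono fun x hx => by simp only [hx])
  rw [besovNorm_eq_s5, hcongr]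
  calc _ ≤ (ENNReal.ofReal (ε / 2) ^ p) ^ p⁻¹ := ENNReal.rpow_le_rpow hgE (by positivity)
    _ = ENNReal.ofReal (ε / 2) := by
        rw [← ENNReal.rpow_mul, mul_inv_cancel₀ hp0.ne', ENNReal.rpow_one]
    _ < ENNReal.ofReal ε := (ENNReal.ofReal_lt_ofReal_iff hε).2 (half_lt_self hε)

end
end
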